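/- arXiv:math/0502579 — 2 statements merged into one kernel-verified Lean document; each statement's English description precedes it below -/
import Mathlib

section
/- For all integers k ≥ 2, l ≥ 0 and all p ∈ (0,1], the following exact identity holds: A₁·A₂·A₃ = C(k,l)·p^{k+l-1}·(1-p)^{C(k,2)-(k+l-1)}, where A₁ = (1-(1-p)^k)^{k-1}, A₂ = Pr[TREE], and A₃ = Pr[BIN[M*,p] = l] is the probability that a binomial random variable with a random number M* of trials and success probability p equals l (i.e. A₃ = E[Pr[Bin(M,p)=l] | TREE]). -/
open Filter Topology Real Finset

-- Indicator of a proposition, as a real number.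
open Classical in
noncomputable def ind (P : Prop) : ℝ := if P then 1 else 0

/-- `connGraphCount k l` is the number of connected labeled graphs on `k` vertices
with `k - 1 + l` edges (i.e. complexity `l`). -/
noncomputable def connGraphCount (k l : ℕ) : ℕ :=
  Set.ncard {G : SimpleGraph (Fin k) | G.Connected ∧ G.edgeSet.ncard = k - 1 + l}

/-- Weight of a placement `T` of the `k-1` balls into the `k` bins under the tilted
(truncated geometric) distribution: ball `j` goes into bin `(T j).val + 1` with
probability `p (1-p)^{(T j).val} / (1-(1-p)^k)`. -/
noncomputable def wt (k : ℕ) (p : ℝ) (T : Fin (k - 1) → Fin k) : ℝ :=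
  ∏ j, p * (1 - p) ^ ((T j : ℕ)) / (1 - (1 - p) ^ k)

/-- The event TREE: for all `1 ≤ t ≤ k-1`, `Z_1 + ⋯ + Z_t ≥ t`, i.e. at least `t`
balls land in the first `t` bins (equivalently `Y_t > 0`). -/
def TREEevt (k : ℕ) (T : Fin (k - 1) → Fin k) : Prop :=
  ∀ t, 1 ≤ t → t ≤ k - 1 →
    t ≤ (Finset.univ.filter (fun j => ((T j : ℕ) < t))).card

/-- `M = C(k,2) - ∑_j T_j` where ball `j` sits in bin `(T j).val + 1`. -/
def Mval (k : ℕ) (T : Fin (k - 1) → Fin k) : ℤ :=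
  (Nat.choose k 2 : ℤ) - ∑ j, ((T j : ℕ) + 1 : ℤ)

/-- `A₂ = Pr[TREE]` under the tilted balls-into-bins distribution. -/
noncomputable def treeProb (k : ℕ) (p : ℝ) : ℝ :=
  ∑ T : Fin (k - 1) → Fin k, wt k p T * ind (TREEevt k T)

/-- Probability that a binomial with `m` trials and success probability `p` equals `l`. -/
noncomputable def binP (p : ℝ) (m : ℤ) (l : ℕ) : ℝ :=
  (m.toNat.choose l : ℝ) * p ^ l * (1 - p) ^ (m.toNat - l)

/-- `A₃ = Pr[BIN[M*, p] = l] = E[Pr[Bin(M,p) = l] | TREE]`. -/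
noncomputable def A3 (k l : ℕ) (p : ℝ) : ℝ :=
  (∑ T : Fin (k - 1) → Fin k, wt k p T * ind (TREEevt k T) * binP p (Mval k T) l) /
    treeProb k p

/-!
Run breadth-first search from a root of a connected graph on `k` vertices, keeping the queue in
order of discovery with ties broken by label, and let `τ v` be the step at which `v` is discovered.
The vector `τ` alone determines the queue, hence the search tree. The graphs with discovery times
`τ` are exactly those between this tree, which has `k - 1` edges, and the graph of all edges that
would not have led to an earlier discovery, which has `C(k,2) - ∑ τ` more. Therefore `C(k,l)` is
the sum over `τ` of the number of ways to choose `l` of these `C(k,2) - ∑ τ` free edges.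

Placing the ball of each vertex other than the root in bin `τ v`, the vectors `τ` become the
placements in TREE, and the number of free edges becomes `M`. The tilted weight of a placement is
proportional to `p ^ (k - 1) * (1 - p) ^ ∑ (T_j - 1)`, and `∑ (T_j - 1) + (M - l)` does not depend
on the placement: every free edge set of size `l` gets the same total weight.

That each connected graph has exactly one vector `τ` is a contraction argument: recomputing the
discovery times from a guess that is right for all times below `t` gives a guess that is right for
all times below `t + 1`.
-/

variable {V : Type*}

section QueuePosition

variable [Fintype V] [LinearOrder V] {β : Type*} [LinearOrder β]

/-- The position of `v`, counted from `0`, in the queue that lists all points by increasing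
time `τ`, ties being broken by the order of `V`. -/
def queuePos (τ : V → β) (v : V) : ℕ :=
  #{u | toLex (τ u, u) < toLex (τ v, v)}

theorem queuePos_lt_queuePos_iff {τ : V → β} {u v : V} :
    queuePos τ u < queuePos τ v ↔ toLex (τ u, u) < toLex (τ v, v) := by
  refine ⟨fun h => ?_, fun h => ?_⟩
  · contrapose! h
    exact card_le_card (monotone_filter_right _ fun w _ hw => hw.trans_le h)
  · refine card_lt_card ((ssubset_iff_of_subset ?_).2 ⟨u, by simpa using h, by simp⟩)
    exact monotone_filter_right _ fun w _ hw => hw.trans h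

theorem queuePos_injective (τ : V → β) : Function.Injective (queuePos τ) := by
  intro u v h
  have hlex : toLex (τ u, u) = toLex (τ v, v) :=
    le_antisymm (not_lt.1 fun hlt => (queuePos_lt_queuePos_iff.2 hlt).ne' h)
      (not_lt.1 fun hlt => (queuePos_lt_queuePos_iff.2 hlt).ne h)
  exact (Prod.ext_iff.1 (toLex.injective hlex)).2

theorem queuePos_lt_card (τ : V → β) (v : V) : queuePos τ v < Fintype.card V :=
  card_lt_univ_of_notMem (x := v) (by simp)

theorem image_queuePos (τ : V → β) : univ.image (queuePos τ) = range (Fintype.card V) := by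
  refine eq_of_subset_of_card_le (fun t ht => ?_) ?_
  · obtain ⟨v, -, rfl⟩ := mem_image.1 ht
    exact mem_range.2 (queuePos_lt_card τ v)
  · rw [card_image_of_injective _ (queuePos_injective τ), card_range, card_univ]

theorem exists_queuePos_eq (τ : V → β) {t : ℕ} (ht : t < Fintype.card V) :
    ∃ v, queuePos τ v = t := by
  simpa [← image_queuePos τ] using mem_range.2 ht

theorem card_filter_queuePos_mem (τ : V → β) {s : Finset ℕ} (hs : s ⊆ range (Fintype.card V)) :
    #{v | queuePos τ v ∈ s} = #s := by
  have himage : image (queuePos τ) {v | queuePos τ v ∈ s} = s := by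
    rw [← filter_image (p := (· ∈ s)), image_queuePos, filter_mem_eq_inter, inter_eq_right.2 hs]
  rw [← card_image_of_injective _ (queuePos_injective τ), himage]

theorem sum_queuePos (τ : V → β) : ∑ v, queuePos τ v = (Fintype.card V).choose 2 := by
  rw [← sum_image (f := fun t => t) (queuePos_injective τ).injOn, image_queuePos, sum_range_id,
    Nat.choose_two_right]

theorem card_filter_le_le_queuePos {τ : V → β} {t : β} {v : V} (h : t < τ v) :
    #{u | τ u ≤ t} ≤ queuePos τ v :=
  card_le_card (monotone_filter_right _ fun u _ (hu : τ u ≤ t) =>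
    Prod.Lex.toLex_lt_toLex.2 (.inl (hu.trans_lt h)))

theorem queuePos_lt_card_filter_le {τ : V → β} {t : β} {v : V} (h : τ v ≤ t) :
    queuePos τ v < #{u | τ u ≤ t} := by
  refine card_lt_card ((ssubset_iff_of_subset ?_).2 ⟨v, by simpa using h, by simp⟩)
  refine monotone_filter_right _ fun u _ hu => ?_
  rcases Prod.Lex.toLex_lt_toLex.1 hu with hlt | ⟨heq, -⟩
  · exact hlt.le.trans h
  · exact heq.trans_le h

end QueuePosition

section Contraction

/-- `f` and `g` take the same values as long as these are less than `t`. -/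
def AgreeBelow (t : ℕ) (f g : V → ℕ) : Prop :=
  ∀ v, min (f v) t = min (g v) t

/-- `Φ` gains one level of agreement: it is a contraction for the ultrametric in which two
functions are `2⁻ᵗ`-close if they satisfy `AgreeBelow t`. -/
def IsContracting (Φ : (V → ℕ) → V → ℕ) : Prop :=
  ∀ t f g, AgreeBelow t f g → AgreeBelow (t + 1) (Φ f) (Φ g)

variable {Φ : (V → ℕ) → V → ℕ}

theorem IsContracting.eq_of_isFixedPt (hΦ : IsContracting Φ) {f g : V → ℕ}
    (hf : Function.IsFixedPt Φ f) (hg : Function.IsFixedPt Φ g) : f = g := by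
  have agree : ∀ t, AgreeBelow t f g := by
    intro t
    induction t with
    | zero => simp [AgreeBelow]
    | succ t ih => simpa only [hf.eq, hg.eq] using hΦ t f g ih
  funext v
  have := agree (f v + g v) v
  omega

theorem IsContracting.exists_isFixedPt (hΦ : IsContracting Φ) {n : ℕ} (hn : ∀ f v, Φ f v ≤ n) :
    ∃ f, Function.IsFixedPt Φ f := by
  have agree : ∀ t, AgreeBelow t (Φ^[t] 0) (Φ^[t + 1] 0) := by
    intro t
    induction t with
    | zero => simp [AgreeBelow]
    | succ t ih =>
      simpa only [Function.iterate_succ_apply' Φ] using hΦ t _ _ ih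
  refine ⟨Φ^[n + 1] 0, funext fun v => ?_⟩
  have hstable := agree (n + 1) v
  rw [Function.iterate_succ_apply' Φ (n + 1)] at hstable
  have hbound := hn (Φ^[n + 1] 0) v
  have hbound' := hn (Φ^[n] 0) v
  rw [← Function.iterate_succ_apply' Φ n] at hbound'
  omega

theorem AgreeBelow.queuePos_eq [Fintype V] [LinearOrder V] {t : ℕ} {f g : V → ℕ}
    (h : AgreeBelow t f g) {v : V} (hv : f v < t) : queuePos f v = queuePos g v := by
  unfold queuePos
  congr 1
  ext u
  have hu := h u
  have hv' := h v
  simp only [mem_filter_univ, Prod.Lex.toLex_lt_toLex]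
  have hlt : f u < f v ↔ g u < g v := by omega
  have heq : f u = f v ↔ g u = g v := by omega
  rw [hlt, heq]

end Contraction

section GraphCounting

theorem ncard_edgeSet_eq_sum [Fintype V] {α : Type*} [LinearOrder α] {f : V → α}
    (hf : Function.Injective f) (G : SimpleGraph V) [DecidableRel G.Adj] :
    G.edgeSet.ncard = ∑ v, #{u | f u < f v ∧ G.Adj u v} := by
  classical
  rw [← card_sigma, ← Set.ncard_coe_finset]
  symm
  refine Set.ncard_congr (fun x _ => s(x.2, x.1)) ?_ ?_ ?_
  · rintro ⟨v, u⟩ h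
    exact (mem_filter.1 (mem_sigma.1 h).2).2.2
  · rintro ⟨v, u⟩ ⟨v', u'⟩ h h' heq
    simp only [coe_sigma, Set.mem_sigma_iff, mem_coe, mem_filter_univ] at h h'
    rcases Sym2.eq_iff.1 heq with ⟨rfl, rfl⟩ | ⟨rfl, rfl⟩
    · rfl
    · exact absurd h.2.1 h'.2.1.not_gt
  · intro e
    induction e with
    | _ u v =>
      intro (huv : G.Adj u v)
      rcases (hf.ne huv.ne).lt_or_gt with hlt | hlt
      · exact ⟨⟨v, u⟩, by simp [hlt, huv], rfl⟩
      · exact ⟨⟨u, v⟩, by simp [hlt, huv.symm], Sym2.eq_swap⟩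

theorem edgeSet_fromEdgeSet_of_subset {G : SimpleGraph V} {s : Set (Sym2 V)}
    (hs : s ⊆ G.edgeSet) : (SimpleGraph.fromEdgeSet s).edgeSet = s := by
  rw [SimpleGraph.edgeSet_fromEdgeSet, sdiff_eq_left]
  exact Set.disjoint_left.2 fun e he => G.not_isDiag_of_mem_edgeSet (hs he)

theorem ncard_Icc_edgeSet_ncard_eq [Finite V] {A B : SimpleGraph V} (hAB : A ≤ B) (l : ℕ) :
    {G | G ∈ Set.Icc A B ∧ G.edgeSet.ncard = A.edgeSet.ncard + l}.ncard =
      (B.edgeSet.ncard - A.edgeSet.ncard).choose l := by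
  classical
  have := Fintype.ofFinite V
  have mono {G H : SimpleGraph V} (h : G ≤ H) : G.edgeFinset ⊆ H.edgeFinset :=
    SimpleGraph.edgeFinset_mono h
  have ncard_eq (G : SimpleGraph V) : G.edgeSet.ncard = #G.edgeFinset := by
    rw [← SimpleGraph.coe_edgeFinset, Set.ncard_coe_finset]
  simp only [ncard_eq]
  rw [← card_sdiff_of_subset (mono hAB), ← card_powersetCard,
    ← Set.ncard_coe_finset (powersetCard _ _)]
  refine Set.ncard_congr (fun (G : SimpleGraph V) _ => G.edgeFinset \ A.edgeFinset) ?_ ?_ ?_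
  · rintro G ⟨⟨hA, hB⟩, hcard⟩
    rw [mem_coe, mem_powersetCard, card_sdiff_of_subset (mono hA), hcard]
    exact ⟨sdiff_subset_sdiff (mono hB) le_rfl, Nat.add_sub_cancel_left ..⟩
  · rintro G G' ⟨⟨hA, -⟩, -⟩ ⟨⟨hA', -⟩, -⟩ heq
    rw [← SimpleGraph.edgeFinset_inj, ← sdiff_union_of_subset (mono hA), heq,
      sdiff_union_of_subset (mono hA')]
  · intro S hS
    rw [mem_coe, mem_powersetCard, subset_sdiff] at hS
    obtain ⟨⟨hSB, hSA⟩, hl⟩ := hS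
    have hsub : A.edgeFinset ∪ S ⊆ B.edgeFinset := union_subset (mono hAB) hSB
    obtain ⟨G, hG⟩ : ∃ G : SimpleGraph V, G.edgeFinset = A.edgeFinset ∪ S :=
      ⟨.fromEdgeSet ↑(A.edgeFinset ∪ S), coe_injective <| by
        rw [SimpleGraph.coe_edgeFinset]
        exact edgeSet_fromEdgeSet_of_subset (by simpa using coe_subset.2 hsub)⟩
    refine ⟨G, ⟨⟨?_, ?_⟩, ?_⟩, ?_⟩
    · exact SimpleGraph.edgeFinset_subset_edgeFinset.1 (hG ▸ subset_union_left)
    · exact SimpleGraph.edgeFinset_subset_edgeFinset.1 (hG ▸ hsub)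
    · rw [hG, card_union_of_disjoint hSA.symm, hl]
    · rw [hG, union_sdiff_cancel_left hSA.symm]

end GraphCounting

section Exploration

variable [Fintype V] [LinearOrder V]

/-- `τ` can be the discovery time of a breadth-first search that visits all of `V` from `r`: step
`t + 1` explores the point at position `t` of the queue, so for the search not to stop early more
than `t` points must have been discovered by time `t`. This is the event TREE. -/
structure IsExploration (r : V) (τ : V → ℕ) : Prop where
  eq_zero_iff : ∀ v, τ v = 0 ↔ v = r
  lt_card_le : ∀ t < Fintype.card V, t < #{v | τ v ≤ t}

/-- The breadth-first search tree with discovery times `τ`: a point discovered at time `t + 1` is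
a child of the point at position `t` of the queue. -/
def treeGraph (τ : V → ℕ) : SimpleGraph V :=
  SimpleGraph.fromRel fun u v => queuePos τ u + 1 = τ v

/-- The largest graph whose breadth-first search has discovery times `τ`: no point is adjacent to
one explored before its discovery. -/
def hullGraph (τ : V → ℕ) : SimpleGraph V where
  Adj u v := u ≠ v ∧ τ v ≤ queuePos τ u + 1 ∧ τ u ≤ queuePos τ v + 1
  symm := ⟨fun _ _ h => ⟨h.1.symm, h.2.2, h.2.1⟩⟩
  loopless := ⟨fun _ h => h.1 rfl⟩

variable {r : V} {τ : V → ℕ} {G : SimpleGraph V}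

namespace IsExploration

theorem le_queuePos (hτ : IsExploration r τ) (v : V) : τ v ≤ queuePos τ v := by
  by_contra! hlt
  exact (hτ.lt_card_le _ (queuePos_lt_card τ v)).not_ge (card_filter_le_le_queuePos hlt)

theorem lt_card (hτ : IsExploration r τ) (v : V) : τ v < Fintype.card V :=
  (hτ.le_queuePos v).trans_lt (queuePos_lt_card τ v)

theorem exists_queuePos_add_one_eq (hτ : IsExploration r τ) {v : V} (hv : v ≠ r) :
    ∃ u, queuePos τ u + 1 = τ v := by
  have hpos := mt (hτ.eq_zero_iff v).1 hv
  have hlt := hτ.lt_card v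
  obtain ⟨u, hu⟩ := exists_queuePos_eq τ (t := τ v - 1) (by omega)
  exact ⟨u, by omega⟩

theorem treeGraph_adj (hτ : IsExploration r τ) {u v : V} (h : queuePos τ u + 1 = τ v) :
    (treeGraph τ).Adj u v := by
  have hv := hτ.le_queuePos v
  exact ⟨by rintro rfl; omega, .inl h⟩

theorem treeGraph_adj_iff (hτ : IsExploration r τ) {u v : V} (h : queuePos τ u < queuePos τ v) :
    (treeGraph τ).Adj u v ↔ queuePos τ u + 1 = τ v := by
  refine ⟨fun hadj => ?_, hτ.treeGraph_adj⟩
  have hu := hτ.le_queuePos u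
  rcases hadj.2 with huv | hvu <;> omega

theorem hullGraph_adj_iff (hτ : IsExploration r τ) {u v : V} (h : queuePos τ u < queuePos τ v) :
    (hullGraph τ).Adj u v ↔ τ v ≤ queuePos τ u + 1 := by
  have hu := hτ.le_queuePos u
  exact ⟨fun hadj => hadj.2.1, fun hv => ⟨by rintro rfl; omega, hv, by omega⟩⟩

theorem treeGraph_le_hullGraph (hτ : IsExploration r τ) : treeGraph τ ≤ hullGraph τ := by
  intro u v hadj
  have hu := hτ.le_queuePos u
  have hv := hτ.le_queuePos v
  exact ⟨hadj.1, by rcases hadj.2 with h | h <;> omega, by rcases hadj.2 with h | h <;> omega⟩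

theorem connected_treeGraph (hτ : IsExploration r τ) : (treeGraph τ).Connected := by
  refine (SimpleGraph.connected_iff_exists_forall_reachable _).2 ⟨r, fun v => ?_⟩
  induction hn : queuePos τ v using Nat.strong_induction_on generalizing v with
  | _ n ih =>
    obtain rfl | hv := eq_or_ne v r
    · rfl
    · obtain ⟨u, hu⟩ := hτ.exists_queuePos_add_one_eq hv
      have hle := hτ.le_queuePos v
      exact (ih _ (by omega) u rfl).trans (hτ.treeGraph_adj hu).reachable

theorem card_treeGraph_earlier_neighbors (hτ : IsExploration r τ) (v : V)
    [DecidableRel (treeGraph τ).Adj] :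
    #{u | queuePos τ u < queuePos τ v ∧ (treeGraph τ).Adj u v} = if v = r then 0 else 1 := by
  have hle := hτ.le_queuePos v
  have hiff (u : V) : queuePos τ u < queuePos τ v ∧ (treeGraph τ).Adj u v ↔
      queuePos τ u + 1 = τ v :=
    ⟨fun h => (hτ.treeGraph_adj_iff h.1).1 h.2, fun h => ⟨by omega, hτ.treeGraph_adj h⟩⟩
  simp only [hiff]
  split_ifs with hv
  · simp [(hτ.eq_zero_iff v).2 hv]
  · obtain ⟨u, hu⟩ := hτ.exists_queuePos_add_one_eq hv
    refine card_eq_one.2 ⟨u, ext fun w => ?_⟩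
    rw [mem_filter_univ, mem_singleton, ← (queuePos_injective τ).eq_iff, ← hu,
      Nat.add_right_cancel_iff]

theorem card_hullGraph_earlier_neighbors (hτ : IsExploration r τ) (v : V)
    [DecidableRel (hullGraph τ).Adj] :
    #{u | queuePos τ u < queuePos τ v ∧ (hullGraph τ).Adj u v} = queuePos τ v - (τ v - 1) := by
  have hiff (u : V) : queuePos τ u < queuePos τ v ∧ (hullGraph τ).Adj u v ↔
      queuePos τ u ∈ Ico (τ v - 1) (queuePos τ v) := by
    rw [mem_Ico, and_comm, tsub_le_iff_right]
    exact and_congr_left fun h => hτ.hullGraph_adj_iff h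
  simp only [hiff]
  rw [card_filter_queuePos_mem, Nat.card_Ico]
  exact fun t ht => mem_range.2 ((mem_Ico.1 ht).2.trans (queuePos_lt_card τ v))

theorem ncard_edgeSet_treeGraph (hτ : IsExploration r τ) :
    (treeGraph τ).edgeSet.ncard = Fintype.card V - 1 := by
  classical
  rw [ncard_edgeSet_eq_sum (queuePos_injective τ)]
  simp only [hτ.card_treeGraph_earlier_neighbors]
  rw [sum_ite, sum_const_zero, zero_add, ← card_eq_sum_ones, filter_ne',
    card_erase_of_mem (mem_univ r), card_univ]

theorem ncard_edgeSet_hullGraph (hτ : IsExploration r τ) :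
    (hullGraph τ).edgeSet.ncard + ∑ v, τ v =
      (Fintype.card V).choose 2 + (treeGraph τ).edgeSet.ncard := by
  classical
  rw [ncard_edgeSet_eq_sum (queuePos_injective τ), ncard_edgeSet_eq_sum (queuePos_injective τ),
    ← sum_queuePos τ, ← sum_add_distrib, ← sum_add_distrib]
  refine sum_congr rfl fun v _ => ?_
  rw [hτ.card_treeGraph_earlier_neighbors, hτ.card_hullGraph_earlier_neighbors]
  have hle := hτ.le_queuePos v
  split_ifs with hv
  · have hzero := (hτ.eq_zero_iff v).2 hv
    omega
  · have hpos := mt (hτ.eq_zero_iff v).1 hv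
    omega

theorem sum_le_choose_two (hτ : IsExploration r τ) : ∑ v, τ v ≤ (Fintype.card V).choose 2 := by
  rw [← sum_queuePos τ]
  exact sum_le_sum fun v _ => hτ.le_queuePos v

theorem ncard_Icc_treeGraph_hullGraph (hτ : IsExploration r τ) (l : ℕ) :
    {G | G ∈ Set.Icc (treeGraph τ) (hullGraph τ) ∧
      G.edgeSet.ncard = Fintype.card V - 1 + l}.ncard =
      ((Fintype.card V).choose 2 - ∑ v, τ v).choose l := by
  rw [← hτ.ncard_edgeSet_treeGraph, ncard_Icc_edgeSet_ncard_eq hτ.treeGraph_le_hullGraph]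
  have := hτ.ncard_edgeSet_hullGraph
  congr 1
  omega

end IsExploration

end Exploration

section BreadthFirstSearch

variable [Fintype V] [LinearOrder V]

/-- One round of recomputing discovery times: `v ≠ r` is discovered at the first time `s` before
which some neighbour of `v` has been both discovered and explored according to `τ`. Asking for
`τ u < s` as well as `queuePos τ u < s` makes `searchStep G r` contracting, and capping the value
at `Fintype.card V` makes it bounded; neither affects its fixed points for connected `G`. -/
noncomputable def searchStep (G : SimpleGraph V) (r : V) (τ : V → ℕ) (v : V) : ℕ :=
  if v = r then 0
  else sInf {s | Fintype.card V ≤ s ∨ ∃ u, G.Adj u v ∧ queuePos τ u < s ∧ τ u < s}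

variable {G : SimpleGraph V} {r : V} {τ : V → ℕ}

theorem searchStep_le_iff {v : V} {s : ℕ} : searchStep G r τ v ≤ s ↔
    v = r ∨ Fintype.card V ≤ s ∨ ∃ u, G.Adj u v ∧ queuePos τ u < s ∧ τ u < s := by
  unfold searchStep
  split_ifs with hv
  · simp [hv]
  rw [or_iff_right hv]
  refine ⟨fun hs => ?_, fun hs => Nat.sInf_le hs⟩
  rcases Nat.sInf_mem (s := {s | Fintype.card V ≤ s ∨ ∃ u, G.Adj u v ∧ queuePos τ u < s ∧ τ u < s})
    ⟨_, .inl le_rfl⟩ with hcard | ⟨u, huv, hpos, hτ⟩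
  · exact .inl (hcard.trans hs)
  · exact .inr ⟨u, huv, hpos.trans_le hs, hτ.trans_le hs⟩

theorem isContracting_searchStep (G : SimpleGraph V) (r : V) : IsContracting (searchStep G r) := by
  have step {t s : ℕ} {f g : V → ℕ} (h : AgreeBelow t f g) (hs : s ≤ t) {v : V}
      (hf : searchStep G r f v ≤ s) : searchStep G r g v ≤ s := by
    refine searchStep_le_iff.2 ((searchStep_le_iff.1 hf).imp_right (Or.imp_right ?_))
    rintro ⟨u, huv, hpos, hu⟩
    have := h u
    exact ⟨u, huv, by rwa [← h.queuePos_eq (hu.trans_le hs)], by omega⟩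
  intro t f g h v
  have hfg : ∀ s ≤ t, searchStep G r f v ≤ s ↔ searchStep G r g v ≤ s := fun s hs =>
    ⟨step h hs, step (fun u => (h u).symm) hs⟩
  refine eq_of_forall_ge_iff fun s => ?_
  rw [min_le_iff, min_le_iff]
  exact or_congr_left' fun hs => hfg s (by omega)

theorem exists_isFixedPt_searchStep (G : SimpleGraph V) (r : V) :
    ∃ τ, Function.IsFixedPt (searchStep G r) τ :=
  (isContracting_searchStep G r).exists_isFixedPt fun _ _ =>
    searchStep_le_iff.2 (.inr (.inl le_rfl))

theorem IsExploration.isFixedPt_searchStep (hτ : IsExploration r τ)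
    (hG : G ∈ Set.Icc (treeGraph τ) (hullGraph τ)) : Function.IsFixedPt (searchStep G r) τ := by
  refine funext fun v => eq_of_forall_ge_iff fun s => searchStep_le_iff.trans ?_
  constructor
  · rintro (hv | hs | ⟨u, huv, hpos, -⟩)
    · exact ((hτ.eq_zero_iff v).2 hv).trans_le s.zero_le
    · exact (hτ.lt_card v).le.trans hs
    · exact (hG.2 huv).2.1.trans hpos
  · intro hs
    refine or_iff_not_imp_left.2 fun hv => .inr ?_
    obtain ⟨u, hu⟩ := hτ.exists_queuePos_add_one_eq hv
    have hle := hτ.le_queuePos u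
    exact ⟨u, hG.1 (hτ.treeGraph_adj hu), by omega, by omega⟩

theorem le_iff_of_isFixedPt_searchStep (hτ : Function.IsFixedPt (searchStep G r) τ) {v : V}
    {s : ℕ} : τ v ≤ s ↔
      v = r ∨ Fintype.card V ≤ s ∨ ∃ u, G.Adj u v ∧ queuePos τ u < s ∧ τ u < s := by
  rw [← searchStep_le_iff, hτ.eq]

theorem isExploration_of_isFixedPt_searchStep (hG : G.Connected)
    (hτ : Function.IsFixedPt (searchStep G r) τ) : IsExploration r τ where
  eq_zero_iff v := by
    have hcard : Fintype.card V ≠ 0 := (Fintype.card_pos_iff.2 ⟨r⟩).ne'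
    simpa [hcard] using le_iff_of_isFixedPt_searchStep hτ (v := v) (s := 0)
  lt_card_le t := by
    induction t with
    | zero =>
      have hroot : τ r ≤ 0 := (le_iff_of_isFixedPt_searchStep hτ).2 (.inl rfl)
      exact fun _ => card_pos.2 ⟨r, by simpa using hroot⟩
    | succ t ih =>
      intro ht
      by_contra! hcard
      obtain ⟨w, hw⟩ : ∃ w, ¬ τ w ≤ t + 1 := by
        by_contra! hall
        rw [filter_true_of_mem fun v _ => hall v, card_univ] at hcard
        omega
      -- The queue has run empty at time `t + 1`, so an edge leaving the discovered set starts at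
      -- an explored point and should have been followed.
      obtain ⟨p⟩ := hG.preconnected r w
      obtain ⟨d, -, hx, hy⟩ := p.exists_boundary_dart {v | τ v ≤ t + 1}
        ((le_iff_of_isFixedPt_searchStep hτ).2 (.inl rfl)) hw
      have hpos := (queuePos_lt_card_filter_le hx).trans_le hcard
      have hx_le : τ d.fst ≤ t := by
        by_contra! hlt
        have := (ih (by omega)).trans_le (card_filter_le_le_queuePos hlt)
        omega
      exact hy ((le_iff_of_isFixedPt_searchStep hτ).2
        (.inr (.inr ⟨d.fst, d.adj, hpos, Nat.lt_succ_of_le hx_le⟩)))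

theorem mem_Icc_of_isFixedPt_searchStep (hG : G.Connected)
    (hτ : Function.IsFixedPt (searchStep G r) τ) :
    G ∈ Set.Icc (treeGraph τ) (hullGraph τ) := by
  have hexp := isExploration_of_isFixedPt_searchStep hG hτ
  have hle {u v : V} (huv : G.Adj u v) : τ v ≤ queuePos τ u + 1 :=
    (le_iff_of_isFixedPt_searchStep hτ).2
      (.inr (.inr ⟨u, huv, Nat.lt_succ_self _, Nat.lt_succ_of_le (hexp.le_queuePos u)⟩))
  have hadj {u v : V} (huv : queuePos τ u + 1 = τ v) : G.Adj u v := by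
    have hv : v ≠ r := fun hv => by
      have := (hexp.eq_zero_iff v).2 hv
      omega
    obtain hr | hcard | ⟨w, hwv, hpos, -⟩ := (le_iff_of_isFixedPt_searchStep hτ).1 (le_refl (τ v))
    · exact absurd hr hv
    · exact absurd hcard (hexp.lt_card v).not_ge
    · have := hle hwv
      rwa [queuePos_injective τ (show queuePos τ u = queuePos τ w by omega)]
  exact ⟨fun u v h => h.2.elim hadj fun hvu => (hadj hvu).symm,
    fun u v h => ⟨h.ne, hle h, hle h.symm⟩⟩

/-- The finite set of all explorations of `V` from `r`. -/
noncomputable def explorations (r : V) : Finset (V → ℕ) := by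
  classical
  exact {τ ∈ Fintype.piFinset fun _ => range (Fintype.card V) | IsExploration r τ}

theorem mem_explorations : τ ∈ explorations r ↔ IsExploration r τ := by
  simp only [explorations, mem_filter, Fintype.mem_piFinset, mem_range, and_iff_right_iff_imp]
  exact fun hτ => hτ.lt_card

theorem connected_iff_exists_exploration (r : V) : G.Connected ↔
    ∃ τ, IsExploration r τ ∧ G ∈ Set.Icc (treeGraph τ) (hullGraph τ) := by
  constructor
  · intro hG
    obtain ⟨τ, hτ⟩ := exists_isFixedPt_searchStep G r
    exact ⟨τ, isExploration_of_isFixedPt_searchStep hG hτ, mem_Icc_of_isFixedPt_searchStep hG hτ⟩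
  · rintro ⟨τ, hτ, hG⟩
    exact hτ.connected_treeGraph.mono hG.1

theorem IsExploration.eq_of_mem_Icc {τ' : V → ℕ} (hτ : IsExploration r τ)
    (hτ' : IsExploration r τ') (hG : G ∈ Set.Icc (treeGraph τ) (hullGraph τ))
    (hG' : G ∈ Set.Icc (treeGraph τ') (hullGraph τ')) : τ = τ' :=
  (isContracting_searchStep G r).eq_of_isFixedPt (hτ.isFixedPt_searchStep hG)
    (hτ'.isFixedPt_searchStep hG')

theorem ncard_connected_eq_sum_explorations (r : V) (l : ℕ) :
    {G : SimpleGraph V | G.Connected ∧ G.edgeSet.ncard = Fintype.card V - 1 + l}.ncard =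
      ∑ τ ∈ explorations r, ((Fintype.card V).choose 2 - ∑ v, τ v).choose l := by
  classical
  let explored (τ : V → ℕ) : Finset (SimpleGraph V) :=
    {G | G ∈ Set.Icc (treeGraph τ) (hullGraph τ) ∧ G.edgeSet.ncard = Fintype.card V - 1 + l}
  have hunion : {G : SimpleGraph V | G.Connected ∧ G.edgeSet.ncard = Fintype.card V - 1 + l} =
      (explorations r).biUnion explored := by
    ext G
    simp only [explored, connected_iff_exists_exploration r, coe_biUnion, mem_coe,
      mem_explorations, coe_filter_univ, Set.mem_iUnion, Set.mem_ofPred_eq, exists_prop, and_assoc,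
      ← exists_and_right]
  rw [hunion, Set.ncard_coe_finset, card_biUnion]
  · refine sum_congr rfl fun τ hτ => ?_
    rw [← (mem_explorations.1 hτ).ncard_Icc_treeGraph_hullGraph l, ← Set.ncard_coe_finset,
      coe_filter_univ]
  · intro τ hτ τ' hτ' hne
    refine disjoint_left.2 fun G hG hG' => hne ?_
    exact (mem_explorations.1 hτ).eq_of_mem_Icc (mem_explorations.1 hτ')
      (mem_filter.1 hG).2.1 (mem_filter.1 hG').2.1

end BreadthFirstSearch

section Placement

variable {m : ℕ}

/-- The discovery times coded by a placement of `m` balls: ball `j` stands for the vertex `j + 1`,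
and its bin, counted from `1` although `T` counts from `0`, is the discovery time. -/
def discoveryTime (T : Fin m → Fin (m + 1)) : Fin (m + 1) → ℕ :=
  Fin.cons 0 fun j => T j + 1

theorem discoveryTime_injective :
    Function.Injective (discoveryTime : (Fin m → Fin (m + 1)) → Fin (m + 1) → ℕ) := by
  intro T T' h
  funext j
  exact Fin.ext (Nat.succ.inj (congrFun h j.succ))

theorem sum_discoveryTime (T : Fin m → Fin (m + 1)) :
    ∑ v, discoveryTime T v = ∑ j, ((T j : ℕ) + 1) := by
  simp [discoveryTime, Fin.sum_univ_succ]

theorem card_discoveryTime_le (T : Fin m → Fin (m + 1)) (t : ℕ) :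
    #{v | discoveryTime T v ≤ t} = #{j | (T j : ℕ) < t} + 1 := by
  rw [card_filter, Fin.sum_univ_succ, card_filter, add_comm]
  simp [discoveryTime]

theorem isExploration_discoveryTime_iff (T : Fin m → Fin (m + 1)) :
    IsExploration 0 (discoveryTime T) ↔ TREEevt (m + 1) T := by
  constructor
  · intro h t _ ht
    have := h.lt_card_le t (by simpa using Nat.lt_succ_of_le ht)
    rw [card_discoveryTime_le] at this
    exact Nat.le_of_lt_succ this
  · refine fun h => ⟨fun v => ?_, fun t ht => ?_⟩
    · cases v using Fin.cases <;> simp [discoveryTime]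
    · rw [card_discoveryTime_le, Nat.lt_succ_iff]
      rcases t.eq_zero_or_pos with rfl | hpos
      · exact Nat.zero_le _
      · exact h t hpos (Nat.le_of_lt_succ (by simpa using ht))

theorem exists_discoveryTime_eq {τ : Fin (m + 1) → ℕ} (hτ : IsExploration 0 τ) :
    ∃ T : Fin m → Fin (m + 1), discoveryTime T = τ := by
  refine ⟨fun j => ⟨τ j.succ - 1, by simpa using Nat.sub_lt_of_lt (hτ.lt_card j.succ)⟩, ?_⟩
  funext v
  cases v using Fin.cases with
  | zero => exact ((hτ.eq_zero_iff 0).2 rfl).symm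
  | succ j => exact Nat.sub_one_add_one (mt (hτ.eq_zero_iff _).1 j.succ_ne_zero)

open Classical in
theorem explorations_eq_image :
    explorations (0 : Fin (m + 1)) =
      ({T | TREEevt (m + 1) T} : Finset (Fin m → Fin (m + 1))).image discoveryTime := by
  ext τ
  simp only [mem_explorations, mem_image, mem_filter_univ, ← isExploration_discoveryTime_iff]
  constructor
  · intro hτ
    obtain ⟨T, rfl⟩ := exists_discoveryTime_eq hτ
    exact ⟨T, hτ, rfl⟩
  · rintro ⟨T, hT, rfl⟩
    exact hT

theorem Mval_eq_sub_sum_discoveryTime (T : Fin m → Fin (m + 1)) :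
    Mval (m + 1) T = ((m + 1).choose 2 : ℤ) - (∑ v, discoveryTime T v : ℕ) := by
  rw [sum_discoveryTime]
  push_cast
  rfl

theorem Mval_nonneg {T : Fin m → Fin (m + 1)} (hT : TREEevt (m + 1) T) : 0 ≤ Mval (m + 1) T := by
  have := ((isExploration_discoveryTime_iff T).2 hT).sum_le_choose_two
  rw [Fintype.card_fin] at this
  rw [Mval_eq_sub_sum_discoveryTime]
  omega

open Classical in
theorem connGraphCount_eq_sum (m l : ℕ) :
    connGraphCount (m + 1) l =
      ∑ T : Fin m → Fin (m + 1) with TREEevt (m + 1) T, (Mval (m + 1) T).toNat.choose l := by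
  have hcount := ncard_connected_eq_sum_explorations (0 : Fin (m + 1)) l
  rw [Fintype.card_fin, explorations_eq_image, sum_image discoveryTime_injective.injOn] at hcount
  refine hcount.trans (sum_congr rfl fun T _ => ?_)
  rw [Mval_eq_sub_sum_discoveryTime, Int.toNat_sub]

end Placement

section Probability

variable {k m : ℕ} {p : ℝ}

theorem one_sub_one_sub_pow_pos (hp : p ∈ Set.Ioc (0 : ℝ) 1) (hk : k ≠ 0) :
    0 < 1 - (1 - p) ^ k :=
  sub_pos.2 (pow_lt_one₀ (sub_nonneg.2 hp.2) (sub_lt_self 1 hp.1) hk)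

theorem wt_eq (p : ℝ) (T : Fin m → Fin (m + 1)) :
    wt (m + 1) p T = p ^ m * (1 - p) ^ (∑ j, (T j : ℕ)) / (1 - (1 - p) ^ (m + 1)) ^ m := by
  simp [wt, prod_div_distrib, prod_mul_distrib, prod_pow_eq_pow_sum]

theorem wt_nonneg (hp : p ∈ Set.Ioc (0 : ℝ) 1) (T : Fin m → Fin (m + 1)) :
    0 ≤ wt (m + 1) p T := by
  have hp0 : 0 < p := hp.1
  have hq : 0 ≤ 1 - p := sub_nonneg.2 hp.2
  have hD : 0 < 1 - (1 - p) ^ (m + 1) := one_sub_one_sub_pow_pos hp m.succ_ne_zero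
  rw [wt_eq]
  positivity

theorem TREEevt_zero (m : ℕ) : TREEevt (m + 1) (0 : Fin m → Fin (m + 1)) := by
  intro t ht htm
  calc
    t ≤ m := htm
    _ = #(univ : Finset (Fin m)) := (card_fin m).symm
    _ = #{j : Fin m | (((0 : Fin m → Fin (m + 1)) j : Fin (m + 1)) : ℕ) < t} := by
      rw [filter_true_of_mem fun _ _ => by exact ht]

theorem treeProb_pos (hp : p ∈ Set.Ioc (0 : ℝ) 1) (m : ℕ) : 0 < treeProb (m + 1) p := by
  have hp0 : 0 < p := hp.1
  have hD : 0 < 1 - (1 - p) ^ (m + 1) := one_sub_one_sub_pow_pos hp m.succ_ne_zero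
  have hwt : 0 < wt (m + 1) p (0 : Fin m → Fin (m + 1)) := by
    rw [wt_eq]
    simp only [Pi.zero_apply, Fin.val_zero, sum_const_zero, pow_zero, mul_one]
    positivity
  refine sum_pos' (fun T _ => mul_nonneg (wt_nonneg hp T) ?_) ⟨0, mem_univ _, ?_⟩
  · unfold ind
    positivity
  · rwa [ind, if_pos (TREEevt_zero m), mul_one]

theorem pow_mul_wt_mul_binP (hp : p ∈ Set.Ioc (0 : ℝ) 1) {T : Fin m → Fin (m + 1)}
    (hM : 0 ≤ Mval (m + 1) T) (l : ℕ) :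
    (1 - (1 - p) ^ (m + 1)) ^ m * (wt (m + 1) p T * binP p (Mval (m + 1) T) l) =
      (Mval (m + 1) T).toNat.choose l *
        (p ^ (m + l) * (1 - p) ^ (((m + 1).choose 2 : ℤ) - (m + l))) := by
  obtain ⟨F, hF⟩ := Int.eq_ofNat_of_zero_le hM
  rw [binP, hF, Int.toNat_natCast]
  rcases lt_or_ge F l with hFl | hlF
  · simp [Nat.choose_eq_zero_of_lt hFl]
  have hexp : ((m + 1).choose 2 : ℤ) - (m + l) = ((∑ j, (T j : ℕ)) + (F - l) : ℕ) := by
    rw [Mval_eq_sub_sum_discoveryTime, sum_discoveryTime, sum_add_distrib, sum_const, card_univ,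
      Fintype.card_fin, smul_eq_mul, mul_one] at hF
    omega
  have hD : 1 - (1 - p) ^ (m + 1) ≠ 0 := (one_sub_one_sub_pow_pos hp m.succ_ne_zero).ne'
  rw [hexp, zpow_natCast, wt_eq, pow_add p, pow_add (1 - p) (∑ j, (T j : ℕ))]
  field_simp

theorem treeProb_mul_A3 (hp : p ∈ Set.Ioc (0 : ℝ) 1) (m l : ℕ) :
    treeProb (m + 1) p * A3 (m + 1) l p =
      ∑ T, wt (m + 1) p T * ind (TREEevt (m + 1) T) * binP p (Mval (m + 1) T) l :=
  mul_div_cancel₀ _ (treeProb_pos hp m).ne'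

end Probability

/-- the critical identity, Theorem `exactthm`:
for all `k ≥ 2`, `l ≥ 0` and `p ∈ (0,1]`,
`A₁ A₂ A₃ = C(k,l) p^{k+l-1} (1-p)^{C(k,2)-(k+l-1)}`. -/
theorem exact_identity (k l : ℕ) (hk : 2 ≤ k) (p : ℝ) (hp : p ∈ Set.Ioc (0 : ℝ) 1) :
    (1 - (1 - p) ^ k) ^ (k - 1) * treeProb k p * A3 k l p =
      (connGraphCount k l : ℝ) * p ^ (k + l - 1) *
        (1 - p) ^ ((Nat.choose k 2 : ℤ) - ((k : ℤ) + l - 1)) := by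
  classical
  obtain ⟨m, rfl⟩ : ∃ m, k = m + 1 := ⟨k - 1, by omega⟩
  have hnat : m + 1 + l - 1 = m + l := by omega
  have hint : ((m + 1 : ℕ) : ℤ) + l - 1 = m + l := by omega
  rw [hnat, hint, mul_assoc, treeProb_mul_A3 hp, connGraphCount_eq_sum, mul_assoc, mul_sum,
    Nat.cast_sum, sum_mul, sum_filter]
  refine sum_congr rfl fun T _ => ?_
  by_cases hT : TREEevt (m + 1) T
  · rw [if_pos hT, ind, if_pos hT, mul_one]
    exact pow_mul_wt_mul_binP hp (Mval_nonneg hT) l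
  · rw [if_neg hT, ind, if_neg hT, mul_zero, zero_mul, mul_zero]
end

section
/- Let p = p(k) satisfy k^{-3/2} ≪ p(k) (i.e. p(k)·k^{3/2} → ∞) and p(k) ≤ 10·(ln k)/k. Let λ = (k-1)p/(1-(1-p)^k) and λ^R = (k-1)p(1-p)^{k-1}/(1-(1-p)^k). Let ESC be the escape event for the leftwalk with i.i.d. steps Z_i ~ Po(λ), and ESC^R the escape event for the rightwalk with i.i.d. steps Z_i^R ~ Po(λ^R). Then, as k → ∞, Pr[TREE] ~ Pr[ESC]·Pr[ESC^R]. -/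
open Filter Topology Real Finset

/-- Poisson point mass: `Pr[Po(r) = n]`. -/
noncomputable def poissonP (r : ℝ) (n : ℕ) : ℝ := Real.exp (-r) * r ^ n / n.factorial

/-- The escape condition for the leftwalk `Y_0 = 1`, `Y_i = Y_{i-1} + Z_i - 1` up to
time `L`: `Y_t > 0` for `1 ≤ t ≤ L`, i.e. `Z_1 + ⋯ + Z_t ≥ t`.  Here bin `i+1`
contains `z i` balls (0-based indexing). -/
def leftOK (L : ℕ) (z : Fin L → ℕ) : Prop :=
  ∀ t, 1 ≤ t → t ≤ L → t ≤ ∑ i ∈ Finset.univ.filter (fun i : Fin L => (i : ℕ) < t), z i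

/-- The escape condition for the rightwalk `Y_0^R = 0`, `Y_i^R = Y_{i-1}^R + 1 - Z_i^R`
up to time `L`: `Y_t^R > 0` for `1 ≤ t ≤ L`, i.e. `Z_1^R + ⋯ + Z_t^R ≤ t - 1`. -/
def rightOK (L : ℕ) (z : Fin L → ℕ) : Prop :=
  ∀ t, 1 ≤ t → t ≤ L → (∑ i ∈ Finset.univ.filter (fun i : Fin L => (i : ℕ) < t), z i) < t

/-- `Pr[ESC_L]` for the leftwalk with independent steps `Z_i ∼ Po(lam i)`. -/
noncomputable def escLProbV (lam : ℕ → ℝ) (L : ℕ) : ℝ :=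
  ∑' z : Fin L → ℕ, (∏ i : Fin L, poissonP (lam (i : ℕ)) (z i)) * ind (leftOK L z)

/-- `Pr[ESC_L]` for the leftwalk with i.i.d. steps `Z_i ∼ Po(r)`. -/
noncomputable def escLProb (r : ℝ) (L : ℕ) : ℝ := escLProbV (fun _ => r) L

/-- `Pr[ESC]` for the leftwalk with i.i.d. steps `Z_i ∼ Po(r)`: since
`ESC = ⋂_L ESC_L` is a decreasing intersection, `Pr[ESC] = inf_L Pr[ESC_L]`. -/
noncomputable def escProb (r : ℝ) : ℝ := ⨅ L : ℕ, escLProb r L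

/-- `Pr[ESC_L^R]` for the rightwalk with independent steps `Z_i^R ∼ Po(lam i)`. -/
noncomputable def escRLProbV (lam : ℕ → ℝ) (L : ℕ) : ℝ :=
  ∑' z : Fin L → ℕ, (∏ i : Fin L, poissonP (lam (i : ℕ)) (z i)) * ind (rightOK L z)

/-- `Pr[ESC_L^R]` for the rightwalk with i.i.d. steps `Z_i^R ∼ Po(r)`. -/
noncomputable def escRLProb (r : ℝ) (L : ℕ) : ℝ := escRLProbV (fun _ => r) L

/-- `Pr[ESC^R]` for the rightwalk with i.i.d. steps `Z_i^R ∼ Po(r)`. -/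
noncomputable def escRProb (r : ℝ) : ℝ := ⨅ L : ℕ, escRLProb r L

/-!
TREE is decided near the two ends. Read from the left, the bins drive a leftwalk, and read from the
right a rightwalk, and after Poissonization both are random walks with independent steps whose
rates vary slowly. With `s = min (k p) 1`, each walk drifts away from the origin at an average speed
of at least `s / 40`, so that a walk surviving many more than `s⁻²` steps is unlikely to be killed
later. The hypothesis `p² k³ → ∞` makes `k s²` and `s³ / p` large, so there is a time `L` with
`L s²` large and yet `L p` small compared with `s`. Up to time `L` the rates are essentially those
at the end of the line, and the `2 L` end bins carry a negligible share of the mass.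

For the upper bound, condition independent Poisson bins on their total: given the end bins, this
only constrains the merged middle bin, whose largest point mass is close to that of the total. For
the lower bound, split TREE into a left and a right event, both decreasing in the placement of the
balls, hence positively correlated by the FKG inequality. Each of them is monotone in the number of
balls, so Chernoff's bound compares it with its Poissonized version at a slightly unfavourable rate.
-/

open scoped ENNReal

lemma tsum_tsum_mul_mul_add (f g h : ℕ → ℝ≥0∞) :
    ∑' i, ∑' j, f i * g j * h (i + j) =
      ∑' n, (∑ ij ∈ antidiagonal n, f ij.1 * g ij.2) * h n := by
  have hterm (n : ℕ) : (∑ ij ∈ antidiagonal n, f ij.1 * g ij.2) * h n =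
      ∑' x : antidiagonal n, f x.1.1 * g x.1.2 * h (x.1.1 + x.1.2) := by
    rw [tsum_fintype, Finset.sum_coe_sort (antidiagonal n)
      (fun x => f x.1 * g x.2 * h (x.1 + x.2)), Finset.sum_mul]
    exact Finset.sum_congr rfl fun ij hij => by rw [mem_antidiagonal.1 hij]
  simp_rw [hterm]
  rw [← ENNReal.tsum_prod (f := fun i j => f i * g j * h (i + j)),
    ← Finset.HasAntidiagonal.sigmaAntidiagonalEquivProd.tsum_eq, ENNReal.tsum_sigma']
  rfl

section PoissonWeights

variable {r s : ℝ}

lemma poissonP_nonneg (hr : 0 ≤ r) (n : ℕ) : 0 ≤ poissonP r n := by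
  unfold poissonP; positivity

lemma poissonP_pos (hr : 0 < r) (n : ℕ) : 0 < poissonP r n := by
  unfold poissonP; positivity

lemma hasSum_poissonP (r : ℝ) : HasSum (poissonP r) 1 := by
  have h := (NormedSpace.expSeries_div_hasSum_exp (𝔸 := ℝ) r).mul_left (Real.exp (-r))
  rw [← Real.exp_eq_exp_ℝ, ← Real.exp_add, neg_add_cancel, Real.exp_zero] at h
  simpa only [← mul_div_assoc, ← poissonP.eq_1] using h

lemma poissonP_add (r s : ℝ) (n : ℕ) :
    poissonP (r + s) n = ∑ ij ∈ antidiagonal n, poissonP r ij.1 * poissonP s ij.2 := by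
  unfold poissonP
  rw [(Commute.all r s).add_pow', mul_div_assoc, Finset.sum_div, Finset.mul_sum]
  refine Finset.sum_congr rfl fun ij hij => ?_
  have hn : ij.1 + ij.2 = n := mem_antidiagonal.1 hij
  have hc : (n.choose ij.1 : ℝ) = n.factorial / (ij.1.factorial * ij.2.factorial) := by
    rw [← hn, Nat.cast_add_choose]
  have hf : (n.factorial : ℝ) ≠ 0 := by positivity
  rw [nsmul_eq_mul, hc, neg_add, Real.exp_add]
  field_simp

lemma succ_mul_poissonP_succ (r : ℝ) (n : ℕ) :
    ((n : ℝ) + 1) * poissonP r (n + 1) = r * poissonP r n := by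
  unfold poissonP
  rw [Nat.factorial_succ, pow_succ]
  push_cast
  field_simp

lemma hasSum_mul_poissonP (r : ℝ) : HasSum (fun n : ℕ => (n : ℝ) * poissonP r n) r := by
  rw [← hasSum_nat_add_iff' 1]
  simpa only [range_one, sum_singleton, Nat.cast_zero, zero_mul, sub_zero, mul_one, Nat.cast_add,
    Nat.cast_one, succ_mul_poissonP_succ] using (hasSum_poissonP r).mul_left r

lemma hasSum_sq_mul_poissonP (r : ℝ) :
    HasSum (fun n : ℕ => (n : ℝ) ^ 2 * poissonP r n) (r * (r + 1)) := by
  rw [← hasSum_nat_add_iff' 1]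
  have h := ((hasSum_mul_poissonP r).add (hasSum_poissonP r)).mul_left r
  simp only [range_one, sum_singleton, Nat.cast_zero, zero_pow two_ne_zero, zero_mul, sub_zero]
  refine h.congr_fun fun n => ?_
  push_cast
  linear_combination ((n : ℝ) + 1) * succ_mul_poissonP_succ r n

/-- The Poisson point mass as an extended nonnegative real, so that sums over configurations
need no summability side conditions. -/
noncomputable def poissonWeight (r : ℝ) (n : ℕ) : ℝ≥0∞ := ENNReal.ofReal (poissonP r n)

lemma tsum_poissonWeight (hr : 0 ≤ r) : ∑' n, poissonWeight r n = 1 := by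
  unfold poissonWeight
  rw [← ENNReal.ofReal_tsum_of_nonneg (poissonP_nonneg hr) (hasSum_poissonP r).summable,
    (hasSum_poissonP r).tsum_eq, ENNReal.ofReal_one]

lemma poissonWeight_mul_exp (hr : 0 ≤ r) (v : ℝ) (n : ℕ) :
    poissonWeight r n * ENNReal.ofReal (Real.exp (v * n)) =
      ENNReal.ofReal (Real.exp (r * (Real.exp v - 1))) * poissonWeight (r * Real.exp v) n := by
  unfold poissonWeight
  rw [← ENNReal.ofReal_mul (poissonP_nonneg hr n), ← ENNReal.ofReal_mul (Real.exp_pos _).le]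
  have hexp : Real.exp (-r) = Real.exp (r * (Real.exp v - 1)) * Real.exp (-(r * Real.exp v)) := by
    rw [← Real.exp_add]; congr 1; ring
  congr 1
  unfold poissonP
  rw [hexp, mul_pow, ← Real.exp_nat_mul, mul_comm v]
  ring

lemma poissonWeight_add (hr : 0 ≤ r) (hs : 0 ≤ s) (n : ℕ) :
    poissonWeight (r + s) n =
      ∑ ij ∈ antidiagonal n, poissonWeight r ij.1 * poissonWeight s ij.2 := by
  unfold poissonWeight
  rw [poissonP_add, ENNReal.ofReal_sum_of_nonneg fun _ _ =>
    mul_nonneg (poissonP_nonneg hr _) (poissonP_nonneg hs _)]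
  exact Finset.sum_congr rfl fun _ _ => ENNReal.ofReal_mul (poissonP_nonneg hr _)

lemma tsum_poissonWeight_mul_const (hs : 0 ≤ s) (a b : ℝ≥0∞) :
    ∑' j, a * poissonWeight s j * b = a * b := by
  rw [ENNReal.tsum_mul_right, ENNReal.tsum_mul_left, tsum_poissonWeight hs, mul_one]

lemma tsum_poissonWeight_mul_of_le (hr : 0 ≤ r) (hrs : r ≤ s) (f : ℕ → ℝ≥0∞) :
    ∑' n, poissonWeight s n * f n =
      ∑' i, ∑' j, poissonWeight r i * poissonWeight (s - r) j * f (i + j) := by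
  simp only [tsum_tsum_mul_mul_add, ← poissonWeight_add hr (sub_nonneg.2 hrs), add_sub_cancel]

lemma tsum_poissonWeight_mul_mono (hr : 0 ≤ r) (hrs : r ≤ s) {f : ℕ → ℝ≥0∞} (hf : Monotone f) :
    ∑' n, poissonWeight r n * f n ≤ ∑' n, poissonWeight s n * f n := by
  rw [tsum_poissonWeight_mul_of_le hr hrs]
  refine ENNReal.tsum_le_tsum fun i => ?_
  rw [← tsum_poissonWeight_mul_const (sub_nonneg.2 hrs)]
  exact ENNReal.tsum_le_tsum fun j => by gcongr; exact hf (Nat.le_add_right i j)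

lemma tsum_poissonWeight_mul_anti (hr : 0 ≤ r) (hrs : r ≤ s) {f : ℕ → ℝ≥0∞} (hf : Antitone f) :
    ∑' n, poissonWeight s n * f n ≤ ∑' n, poissonWeight r n * f n := by
  rw [tsum_poissonWeight_mul_of_le hr hrs]
  refine ENNReal.tsum_le_tsum fun i => ?_
  rw [← tsum_poissonWeight_mul_const (sub_nonneg.2 hrs)]
  exact ENNReal.tsum_le_tsum fun j => by gcongr; exact hf (Nat.le_add_right i j)

end PoissonWeights

section KilledWalk

/-- One step of the walk on `ℤ` that moves from `y` to `y + σ (Z - 1)` with `Z ∼ Po(r)` and is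
killed when it leaves the positive integers, acting on functions of the state. The leftwalk is
the case `σ = 1`, the rightwalk the case `σ = -1`. -/
noncomputable def killedStep (σ : ℤ) (r : ℝ) (ψ : ℤ → ℝ≥0∞) (y : ℤ) : ℝ≥0∞ :=
  ∑' n : ℕ, poissonWeight r n * (Set.Ioi 0).indicator ψ (y + σ * (n - 1))

/-- `L` steps of the killed walk, the `i`-th one with a `Po(r i)` increment. -/
noncomputable def killedWalk (σ : ℤ) : (ℕ → ℝ) → ℕ → (ℤ → ℝ≥0∞) → ℤ → ℝ≥0∞
  | _, 0, φ => φ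
  | r, L + 1, φ => killedStep σ (r 0) (killedWalk σ (fun i => r (i + 1)) L φ)

/-- The Cramér exponent of a step `σ (Z - 1)`, `Z ∼ Po(r)`: minus the logarithm of
`E[exp (-u σ (Z - 1))]`. -/
noncomputable def stepExponent (σ : ℤ) (u r : ℝ) : ℝ := r * (1 - Real.exp (-(u * σ))) - u * σ

variable {σ : ℤ}

lemma killedStep_mono (r : ℝ) {ψ ψ' : ℤ → ℝ≥0∞} (h : ψ ≤ ψ') :
    killedStep σ r ψ ≤ killedStep σ r ψ' := fun _ =>
  ENNReal.tsum_le_tsum fun _ => by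
    gcongr
    exact h _

lemma killedStep_add (r : ℝ) (ψ ψ' : ℤ → ℝ≥0∞) :
    killedStep σ r (ψ + ψ') = killedStep σ r ψ + killedStep σ r ψ' := by
  funext y
  simp only [killedStep, Set.indicator_add', Pi.add_apply, mul_add, ENNReal.tsum_add]

lemma killedStep_smul (r : ℝ) (c : ℝ≥0∞) (ψ : ℤ → ℝ≥0∞) :
    killedStep σ r (c • ψ) = c • killedStep σ r ψ := by
  funext y
  have hind : (Set.Ioi 0).indicator (c • ψ) = c • (Set.Ioi 0).indicator ψ :=
    Set.indicator_const_smul _ c ψ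
  simp only [killedStep, hind, Pi.smul_apply, smul_eq_mul, ← ENNReal.tsum_mul_left,
    mul_left_comm c]

lemma monotone_indicator_Ioi {ψ : ℤ → ℝ≥0∞} (h : Monotone ψ) :
    Monotone ((Set.Ioi 0).indicator ψ) := by
  intro a b hab
  by_cases ha : 0 < a
  · rw [Set.indicator_of_mem (Set.mem_Ioi.2 ha),
      Set.indicator_of_mem (Set.mem_Ioi.2 (ha.trans_le hab))]
    exact h hab
  · rw [Set.indicator_of_notMem (by simpa using ha)]
    exact zero_le

lemma monotone_killedStep (r : ℝ) {ψ : ℤ → ℝ≥0∞} (h : Monotone ψ) :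
    Monotone (killedStep σ r ψ) := fun _ _ hab =>
  ENNReal.tsum_le_tsum fun _ => by
    gcongr
    exact monotone_indicator_Ioi h (by gcongr)

lemma killedStep_mono_rate {r s : ℝ} (hr : 0 ≤ r) (hs : 0 ≤ s) (h : σ * r ≤ σ * s)
    {ψ : ℤ → ℝ≥0∞} (hψ : Monotone ψ) : killedStep σ r ψ ≤ killedStep σ s ψ := by
  intro y
  have hmono := monotone_indicator_Ioi hψ
  rcases lt_trichotomy σ 0 with hσ | rfl | hσ
  · refine tsum_poissonWeight_mul_anti hs
      ((mul_le_mul_left_of_neg (by exact_mod_cast hσ)).1 h) fun a b hab => hmono ?_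
    nlinarith [(Nat.cast_le (α := ℤ)).2 hab]
  · simp only [killedStep, zero_mul, add_zero, ENNReal.tsum_mul_right, tsum_poissonWeight hr,
      tsum_poissonWeight hs, le_refl]
  · refine tsum_poissonWeight_mul_mono hr
      (le_of_mul_le_mul_left h (by exact_mod_cast hσ)) fun a b hab => hmono ?_
    nlinarith [(Nat.cast_le (α := ℤ)).2 hab]

lemma killedStep_one_le {r : ℝ} (hr : 0 ≤ r) {ψ : ℤ → ℝ≥0∞} (h : ψ ≤ 1) :
    killedStep σ r ψ ≤ 1 := fun y =>
  calc killedStep σ r ψ y ≤ ∑' n, poissonWeight r n :=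
        ENNReal.tsum_le_tsum fun _ =>
          mul_le_of_le_one_right zero_le <|
            Set.indicator_apply_le' (fun _ => h _) fun _ => zero_le_one
    _ = 1 := tsum_poissonWeight hr

lemma poissonWeight_mul_exp_step {r : ℝ} (hr : 0 ≤ r) (u : ℝ) (y : ℤ) (n : ℕ) :
    poissonWeight r n * ENNReal.ofReal (Real.exp (-(u * (y + σ * (n - 1) : ℤ)))) =
      ENNReal.ofReal (Real.exp (-(u * y) - stepExponent σ u r)) *
        poissonWeight (r * Real.exp (-(u * σ))) n := by
  have hsplit : Real.exp (-(u * (y + σ * (n - 1) : ℤ))) =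
      Real.exp (-(u * y) + u * σ) * Real.exp (-(u * σ) * n) := by
    rw [← Real.exp_add]; push_cast; congr 1; ring
  rw [hsplit, ENNReal.ofReal_mul (Real.exp_pos _).le, mul_left_comm, poissonWeight_mul_exp hr,
    ← mul_assoc, ← ENNReal.ofReal_mul (Real.exp_pos _).le, ← Real.exp_add]
  congr 3
  unfold stepExponent
  ring

lemma tsum_poissonWeight_mul_exp_step {r : ℝ} (hr : 0 ≤ r) (u : ℝ) (y : ℤ) :
    ∑' n : ℕ, poissonWeight r n * ENNReal.ofReal (Real.exp (-(u * (y + σ * (n - 1) : ℤ)))) =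
      ENNReal.ofReal (Real.exp (-(u * y) - stepExponent σ u r)) := by
  simp_rw [poissonWeight_mul_exp_step hr]
  rw [ENNReal.tsum_mul_left, tsum_poissonWeight (by positivity), mul_one]

lemma killedStep_exp_mul {r : ℝ} (hr : 0 ≤ r) (u : ℝ) (ψ : ℤ → ℝ≥0∞) (y : ℤ) :
    killedStep σ r (fun z => ENNReal.ofReal (Real.exp (-(u * z))) * ψ z) y =
      ENNReal.ofReal (Real.exp (-(u * y) - stepExponent σ u r)) *
        killedStep σ (r * Real.exp (-(u * σ))) ψ y := by
  simp only [killedStep, Set.indicator_mul_right, ← ENNReal.tsum_mul_left, ← mul_assoc,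
    poissonWeight_mul_exp_step hr]

lemma killedWalk_succ (r : ℕ → ℝ) (L : ℕ) (φ : ℤ → ℝ≥0∞) :
    killedWalk σ r (L + 1) φ =
      killedStep σ (r 0) (killedWalk σ (fun i => r (i + 1)) L φ) := rfl

lemma killedWalk_mono (r : ℕ → ℝ) (L : ℕ) {φ φ' : ℤ → ℝ≥0∞} (h : φ ≤ φ') :
    killedWalk σ r L φ ≤ killedWalk σ r L φ' := by
  induction L generalizing r with
  | zero => exact h
  | succ L ih => exact killedStep_mono _ (ih _)

lemma killedWalk_add (r : ℕ → ℝ) (L : ℕ) (φ φ' : ℤ → ℝ≥0∞) :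
    killedWalk σ r L (φ + φ') = killedWalk σ r L φ + killedWalk σ r L φ' := by
  induction L generalizing r with
  | zero => rfl
  | succ L ih => rw [killedWalk_succ, ih, killedStep_add]; rfl

lemma killedWalk_smul (r : ℕ → ℝ) (L : ℕ) (c : ℝ≥0∞) (φ : ℤ → ℝ≥0∞) :
    killedWalk σ r L (c • φ) = c • killedWalk σ r L φ := by
  induction L generalizing r with
  | zero => rfl
  | succ L ih => rw [killedWalk_succ, ih, killedStep_smul]; rfl

lemma monotone_killedWalk (r : ℕ → ℝ) (L : ℕ) {φ : ℤ → ℝ≥0∞} (h : Monotone φ) :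
    Monotone (killedWalk σ r L φ) := by
  induction L generalizing r with
  | zero => exact h
  | succ L ih => exact monotone_killedStep _ (ih _)

lemma killedWalk_mono_rate {L : ℕ} {r s : ℕ → ℝ} (hr : ∀ i < L, 0 ≤ r i) (hs : ∀ i < L, 0 ≤ s i)
    (h : ∀ i < L, σ * r i ≤ σ * s i) {φ : ℤ → ℝ≥0∞} (hφ : Monotone φ) :
    killedWalk σ r L φ ≤ killedWalk σ s L φ := by
  induction L generalizing r s with
  | zero => exact le_rfl
  | succ L ih =>
    have hL := Nat.succ_pos L
    exact (killedStep_mono_rate (hr 0 hL) (hs 0 hL) (h 0 hL) (monotone_killedWalk _ L hφ)).trans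
      (killedStep_mono _ (ih (fun i hi => hr _ (Nat.succ_lt_succ hi))
        (fun i hi => hs _ (Nat.succ_lt_succ hi)) fun i hi => h _ (Nat.succ_lt_succ hi)))

lemma killedWalk_append (r : ℕ → ℝ) (L M : ℕ) (φ : ℤ → ℝ≥0∞) :
    killedWalk σ r (L + M) φ = killedWalk σ r L (killedWalk σ (fun i => r (i + L)) M φ) := by
  induction L generalizing r with
  | zero => simp only [zero_add, add_zero, killedWalk]
  | succ L ih =>
    rw [Nat.add_right_comm, killedWalk_succ, killedWalk_succ, ih]
    simp only [add_assoc]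

lemma killedWalk_one_le {L : ℕ} {r : ℕ → ℝ} (hr : ∀ i < L, 0 ≤ r i) : killedWalk σ r L 1 ≤ 1 := by
  induction L generalizing r with
  | zero => exact le_rfl
  | succ L ih =>
    exact killedStep_one_le (hr 0 L.succ_pos) (ih fun i hi => hr _ (Nat.succ_lt_succ hi))

/-- Girsanov's change of measure. -/
lemma killedWalk_exp_mul {L : ℕ} {r : ℕ → ℝ} (hr : ∀ i < L, 0 ≤ r i) (u : ℝ) (φ : ℤ → ℝ≥0∞)
    (y : ℤ) :
    killedWalk σ r L (fun z => ENNReal.ofReal (Real.exp (-(u * z))) * φ z) y =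
      ENNReal.ofReal (Real.exp (-(u * y) - ∑ i ∈ range L, stepExponent σ u (r i))) *
        killedWalk σ (fun i => r i * Real.exp (-(u * σ))) L φ y := by
  induction L generalizing r y with
  | zero => simp only [killedWalk, range_zero, sum_empty, sub_zero]
  | succ L ih =>
    set S := ∑ i ∈ range L, stepExponent σ u (r (i + 1))
    have htail : killedWalk σ (fun i => r (i + 1)) L
          (fun z => ENNReal.ofReal (Real.exp (-(u * z))) * φ z) =
        ENNReal.ofReal (Real.exp (-S)) • fun z : ℤ => ENNReal.ofReal (Real.exp (-(u * z))) *
          killedWalk σ (fun i => r (i + 1) * Real.exp (-(u * σ))) L φ z := by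
      funext z
      rw [ih (fun i hi => hr _ (Nat.succ_lt_succ hi)), sub_eq_neg_add, Real.exp_add,
        ENNReal.ofReal_mul (Real.exp_pos _).le, mul_assoc]
      rfl
    rw [killedWalk_succ, htail, killedStep_smul, Pi.smul_apply, smul_eq_mul,
      killedStep_exp_mul (hr 0 L.succ_pos), ← mul_assoc, ← ENNReal.ofReal_mul (Real.exp_pos _).le,
      ← Real.exp_add, Finset.sum_range_succ', killedWalk_succ]
    congr 3
    ring

/-- Doob's maximal inequality for the martingale obtained from `exp (-u * Y)` by compensating the
step exponents. -/
lemma one_le_killedWalk_add_exp {M : ℕ} {r : ℕ → ℝ} (hr : ∀ i < M, 0 ≤ r i) {u : ℝ} (hu : 0 ≤ u)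
    {c : ℝ} (hc : ∀ t ≤ M, -c ≤ ∑ i ∈ range t, stepExponent σ u (r i)) (y : ℤ) :
    1 ≤ killedWalk σ r M 1 y + ENNReal.ofReal (Real.exp (c - u * y)) := by
  induction M generalizing r c y with
  | zero => exact le_self_add
  | succ M ih =>
    set d := stepExponent σ u (r 0)
    have hcd : ∀ t ≤ M, -(c + d) ≤ ∑ i ∈ range t, stepExponent σ u (r (i + 1)) := fun t ht => by
      have := hc (t + 1) (Nat.succ_le_succ ht)
      rw [Finset.sum_range_succ'] at this
      linarith
    have hr0 := hr 0 M.succ_pos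
    have hterm (n : ℕ) : 1 ≤ (Set.Ioi 0).indicator (killedWalk σ (fun i => r (i + 1)) M 1)
          (y + σ * (n - 1)) +
        ENNReal.ofReal (Real.exp (c + d)) *
          ENNReal.ofReal (Real.exp (-(u * (y + σ * (n - 1) : ℤ)))) := by
      rw [← ENNReal.ofReal_mul (Real.exp_pos _).le, ← Real.exp_add, ← sub_eq_add_neg]
      by_cases hy : 0 < y + σ * (n - 1)
      · rw [Set.indicator_of_mem (Set.mem_Ioi.2 hy)]
        exact ih (fun i hi => hr _ (Nat.succ_lt_succ hi)) hcd _
      · rw [Set.indicator_of_notMem (mt Set.mem_Ioi.1 hy), zero_add, ENNReal.one_le_ofReal,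
          Real.one_le_exp_iff]
        have h0 := hcd 0 M.zero_le
        have hy' : ((y + σ * (n - 1) : ℤ) : ℝ) ≤ 0 := by exact_mod_cast not_lt.1 hy
        rw [range_zero, sum_empty] at h0
        nlinarith
    calc (1 : ℝ≥0∞) = ∑' n, poissonWeight (r 0) n * 1 := by
          rw [ENNReal.tsum_mul_right, tsum_poissonWeight hr0, mul_one]
      _ ≤ _ := ENNReal.tsum_le_tsum fun n => mul_le_mul_right (hterm n) _
      _ = _ := by
          simp only [mul_add, ENNReal.tsum_add, mul_left_comm _ (ENNReal.ofReal (Real.exp (c + d))),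
            ENNReal.tsum_mul_left, tsum_poissonWeight_mul_exp_step hr0]
          rw [← ENNReal.ofReal_mul (Real.exp_pos _).le, ← Real.exp_add]
          congr 3
          ring

end KilledWalk

section SurvivalProb

/-- The probability that the killed walk survives `L` steps. The starting point is `1` for the
leftwalk `σ = 1` and `0` for the rightwalk `σ = -1`. -/
noncomputable def survivalProb (σ : ℤ) (r : ℕ → ℝ) (L : ℕ) : ℝ :=
  (killedWalk σ r L 1 (max σ 0)).toReal

variable {σ : ℤ} {r s : ℕ → ℝ} {L M : ℕ}

lemma ofReal_survivalProb (hr : ∀ i < L, 0 ≤ r i) :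
    ENNReal.ofReal (survivalProb σ r L) = killedWalk σ r L 1 (max σ 0) :=
  ENNReal.ofReal_toReal (ne_top_of_le_ne_top ENNReal.one_ne_top (killedWalk_one_le hr _))

lemma survivalProb_nonneg : 0 ≤ survivalProb σ r L := ENNReal.toReal_nonneg

lemma survivalProb_mono_rate (hr : ∀ i < L, 0 ≤ r i) (hs : ∀ i < L, 0 ≤ s i)
    (h : ∀ i < L, σ * r i ≤ σ * s i) : survivalProb σ r L ≤ survivalProb σ s L := by
  rw [← ENNReal.ofReal_le_ofReal_iff survivalProb_nonneg, ofReal_survivalProb hr,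
    ofReal_survivalProb hs]
  exact killedWalk_mono_rate hr hs h monotone_const _

lemma survivalProb_anti (hr : ∀ i < M, 0 ≤ r i) (hLM : L ≤ M) :
    survivalProb σ r M ≤ survivalProb σ r L := by
  rw [← ENNReal.ofReal_le_ofReal_iff survivalProb_nonneg, ofReal_survivalProb hr,
    ofReal_survivalProb fun i hi => hr i (hi.trans_le hLM), ← Nat.add_sub_cancel' hLM,
    killedWalk_append]
  exact killedWalk_mono r L (killedWalk_one_le fun i hi => hr _ (Nat.add_lt_of_lt_sub hi)) _

lemma mul_exp_neg_mul_le {u : ℝ} (hu : 0 ≤ u) (x : ℝ) : x * Real.exp (-(u * x)) ≤ x := by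
  rcases le_total 0 x with hx | hx
  · exact mul_le_of_le_one_right hx (Real.exp_le_one_iff.2 (by nlinarith))
  · nlinarith [Real.one_le_exp (x := -(u * x)) (by nlinarith)]

lemma survivalProb_le_add_exp (hr : ∀ i < M, 0 ≤ r i) (hs : ∀ i < L, 0 ≤ s i) (hLM : L ≤ M)
    (h : ∀ i < L, σ * r i ≤ σ * s i) {u γ : ℝ} (hu : 0 ≤ u)
    (hγ : ∀ t, L ≤ t → t ≤ M → γ ≤ ∑ i ∈ range t, stepExponent σ u (r i)) :
    survivalProb σ r L ≤ survivalProb σ r M + Real.exp (-γ) * survivalProb σ s L := by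
  set S := ∑ i ∈ range L, stepExponent σ u (r i) with hS
  set y : ℤ := max σ 0
  have hrL : ∀ i < L, 0 ≤ r i := fun i hi => hr i (hi.trans_le hLM)
  have hdoob : (1 : ℤ → ℝ≥0∞) ≤ killedWalk σ (fun i => r (i + L)) (M - L) 1 +
      ENNReal.ofReal (Real.exp (S - γ)) • fun z : ℤ =>
        ENNReal.ofReal (Real.exp (-(u * z))) * (1 : ℤ → ℝ≥0∞) z := fun z => by
    have := one_le_killedWalk_add_exp (σ := σ) (r := fun i => r (i + L)) (c := S - γ)
      (fun i hi => hr _ (Nat.add_lt_of_lt_sub hi)) hu (fun t ht => by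
        have := hγ (L + t) (Nat.le_add_right L t) (by omega)
        rw [Finset.sum_range_add, ← hS] at this
        simp only [add_comm _ L]
        linarith) z
    simpa only [Pi.one_apply, Pi.add_apply, Pi.smul_apply, smul_eq_mul, mul_one, sub_eq_add_neg,
      Real.exp_add, ENNReal.ofReal_mul (mul_pos (Real.exp_pos _) (Real.exp_pos _)).le,
      ENNReal.ofReal_mul (Real.exp_pos _).le] using this
  have htilt : killedWalk σ (fun i => r i * Real.exp (-(u * σ))) L 1 y ≤ killedWalk σ s L 1 y := by
    refine killedWalk_mono_rate (fun i hi => mul_nonneg (hrL i hi) (Real.exp_pos _).le) hs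
      (fun i hi => le_trans ?_ (h i hi)) monotone_const y
    rw [← mul_left_comm, mul_comm (σ : ℝ) (r i)]
    exact mul_le_mul_of_nonneg_left (mul_exp_neg_mul_le hu σ) (hrL i hi)
  have hcost : ENNReal.ofReal (Real.exp (S - γ)) *
      ENNReal.ofReal (Real.exp (-(u * y) - S)) ≤ ENNReal.ofReal (Real.exp (-γ)) := by
    rw [← ENNReal.ofReal_mul (Real.exp_pos _).le, ← Real.exp_add]
    gcongr
    have : (0 : ℝ) ≤ y := by exact_mod_cast le_max_right σ 0
    nlinarith
  rw [← ENNReal.ofReal_le_ofReal_iff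
      (add_nonneg survivalProb_nonneg (mul_nonneg (Real.exp_pos _).le survivalProb_nonneg)),
    ENNReal.ofReal_add survivalProb_nonneg (mul_nonneg (Real.exp_pos _).le survivalProb_nonneg),
    ENNReal.ofReal_mul (Real.exp_pos _).le, ofReal_survivalProb hrL, ofReal_survivalProb hr,
    ofReal_survivalProb hs, ← Nat.add_sub_cancel' hLM, killedWalk_append]
  refine (killedWalk_mono r L hdoob y).trans ?_
  rw [killedWalk_add, killedWalk_smul, Pi.add_apply, Pi.smul_apply, smul_eq_mul,
    killedWalk_exp_mul hrL, ← mul_assoc]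
  gcongr

end SurvivalProb

section Ballot

variable {r : ℝ}

lemma sum_antidiagonal_mul_poissonP (r s : ℝ) (n : ℕ) :
    ∑ ij ∈ antidiagonal (n + 1), ij.1 * (poissonP r ij.1 * poissonP s ij.2) =
      r * poissonP (r + s) n := by
  rw [Finset.Nat.sum_antidiagonal_succ, poissonP_add, Finset.mul_sum, Nat.cast_zero, zero_mul,
    zero_add]
  refine Finset.sum_congr rfl fun ij _ => ?_
  push_cast
  linear_combination poissonP s ij.2 * succ_mul_poissonP_succ r ij.1

lemma sum_antidiagonal_ballot_poissonP (r : ℝ) {L : ℕ} (hL : L ≠ 0) (n : ℕ) :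
    ∑ ij ∈ antidiagonal n, (1 - (ij.1 : ℝ) / L) * (poissonP (r * L) ij.1 * poissonP r ij.2) =
      (1 - (n : ℝ) / (L + 1)) * poissonP (r * (L + 1)) n := by
  have hL' : (L : ℝ) ≠ 0 := Nat.cast_ne_zero.2 hL
  have hmean : ∑ ij ∈ antidiagonal n, ij.1 * (poissonP (r * L) ij.1 * poissonP r ij.2) =
      L * (n / (L + 1) * poissonP (r * (L + 1)) n) := by
    cases n with
    | zero => simp
    | succ n =>
      rw [sum_antidiagonal_mul_poissonP, show r * L + r = r * (L + 1) by ring]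
      push_cast
      field_simp
      linear_combination -succ_mul_poissonP_succ (r * (L + 1)) n
  have hmass := poissonP_add (r * L) r n
  rw [show r * L + r = r * (L + 1) by ring] at hmass
  simp only [sub_mul, one_mul, Finset.sum_sub_distrib, div_mul_eq_mul_div, ← Finset.sum_div]
  rw [← hmass, hmean]
  field_simp

lemma sum_antidiagonal_ballot (hr : 0 ≤ r) {L n : ℕ} (hL : L ≠ 0) (hn : n ≤ L) :
    ∑ ij ∈ antidiagonal n, ENNReal.ofReal (1 - (ij.1 : ℝ) / L) * poissonWeight (r * L) ij.1 *
        poissonWeight r ij.2 =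
      ENNReal.ofReal (1 - (n : ℝ) / (L + 1)) * poissonWeight (r * (L + 1)) n := by
  have hfac {m M : ℕ} (h : m ≤ M) : (0 : ℝ) ≤ 1 - m / M :=
    sub_nonneg.2 (div_le_one_of_le₀ (Nat.cast_le.2 h) M.cast_nonneg)
  have hi {ij : ℕ × ℕ} (h : ij ∈ antidiagonal n) : ij.1 ≤ L :=
    (Nat.le_of_add_right_le (mem_antidiagonal.1 h).le).trans hn
  have hrL : 0 ≤ r * L := by positivity
  have hfac' := hfac (hn.trans L.le_succ)
  rw [Nat.cast_succ] at hfac'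
  unfold poissonWeight
  rw [← ENNReal.ofReal_mul hfac', ← sum_antidiagonal_ballot_poissonP r hL,
    ENNReal.ofReal_sum_of_nonneg fun ij h => mul_nonneg (hfac (hi h))
      (mul_nonneg (poissonP_nonneg hrL _) (poissonP_nonneg hr _))]
  refine Finset.sum_congr rfl fun ij h => ?_
  rw [ENNReal.ofReal_mul (hfac (hi h)), ENNReal.ofReal_mul (poissonP_nonneg hrL _), mul_assoc]

/-- The ballot theorem: given that `n` balls fall into the first `L` bins, the rightwalk survives
with probability `1 - n / L`. The truncation of `ENNReal.ofReal` discards `n > L`. -/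
lemma killedWalk_neg_one_eq_tsum (hr : 0 ≤ r) (L : ℕ) (φ : ℤ → ℝ≥0∞) :
    killedWalk (-1) (fun _ => r) (L + 1) φ 0 =
      ∑' n : ℕ, ENNReal.ofReal (1 - (n : ℝ) / (L + 1 : ℕ)) * poissonWeight (r * (L + 1 : ℕ)) n *
        φ (L + 1 - n) := by
  induction L generalizing φ with
  | zero =>
    refine tsum_congr fun n => ?_
    cases n with
    | zero => simp [killedWalk]
    | succ n =>
      have h1 : ¬ (0 : ℤ) < 0 + -1 * ((n + 1 : ℕ) - 1) := by push_cast; omega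
      have h2 : (1 : ℝ) - (n + 1 : ℕ) / (0 + 1 : ℕ) ≤ 0 := by push_cast; simp
      rw [Set.indicator_of_notMem (mt Set.mem_Ioi.1 h1), ENNReal.ofReal_of_nonpos h2]
      simp only [mul_zero, zero_mul]
  | succ L ih =>
    rw [killedWalk_append (fun _ => r) (L + 1) 1, ih]
    set χ : ℕ → ℝ≥0∞ := fun n => (Set.Ioi 0).indicator φ (L + 2 - n) with hχ
    calc _ = ∑' i : ℕ, ∑' j : ℕ, ENNReal.ofReal (1 - (i : ℝ) / (L + 1 : ℕ)) *
            poissonWeight (r * (L + 1 : ℕ)) i * poissonWeight r j * χ (i + j) := by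
          refine tsum_congr fun i => ?_
          rw [← tsum_congr fun j => (mul_assoc _ _ _).symm, ENNReal.tsum_mul_left]
          congr 1
          refine tsum_congr fun j => ?_
          simp only [killedWalk, hχ]
          congr 2
          push_cast
          ring
      _ = _ := by
          rw [tsum_tsum_mul_mul_add]
          refine tsum_congr fun n => ?_
          rcases le_or_gt n (L + 1) with hn | hn
          · rw [sum_antidiagonal_ballot hr L.succ_ne_zero hn, hχ]
            have hpos : (0 : ℤ) < L + 2 - n := by omega
            simp only [Set.indicator_of_mem (Set.mem_Ioi.2 hpos)]
            push_cast
            congr 2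
          · have hpos : ¬ (0 : ℤ) < L + 2 - n := by omega
            have hfac : (1 : ℝ) - n / (L + 1 + 1 : ℕ) ≤ 0 :=
              sub_nonpos.2 ((one_le_div (by positivity)).2 (by exact_mod_cast hn))
            simp only [hχ, Set.indicator_of_notMem (mt Set.mem_Ioi.1 hpos),
              ENNReal.ofReal_of_nonpos hfac, mul_zero, zero_mul]

lemma ofReal_survivalProb_neg_one (hr : 0 ≤ r) {L : ℕ} (hL : L ≠ 0) :
    ENNReal.ofReal (survivalProb (-1) (fun _ => r) L) =
      ∑' n : ℕ, ENNReal.ofReal (1 - (n : ℝ) / L) * poissonWeight (r * L) n := by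
  obtain ⟨L, rfl⟩ := Nat.exists_eq_succ_of_ne_zero hL
  rw [ofReal_survivalProb fun _ _ => hr]
  refine (killedWalk_neg_one_eq_tsum hr L 1).trans ?_
  simp only [Pi.one_apply, mul_one]

lemma one_sub_le_survivalProb_neg_one (hr : 0 ≤ r) (L : ℕ) :
    1 - r ≤ survivalProb (-1) (fun _ => r) L := by
  rcases eq_or_ne L 0 with rfl | hL
  · simpa [survivalProb, killedWalk] using hr
  have hL' : (0 : ℝ) < L := Nat.cast_pos.2 (Nat.pos_of_ne_zero hL)
  have hrL : 0 ≤ r * L := by positivity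
  have hmean : ∑' n : ℕ, ENNReal.ofReal ((n : ℝ) / L) * poissonWeight (r * L) n =
      ENNReal.ofReal r := by
    have h := (hasSum_mul_poissonP (r * L)).div_const (L : ℝ)
    rw [mul_div_cancel_right₀ _ hL'.ne'] at h
    refine Eq.trans ?_ (congrArg ENNReal.ofReal h.tsum_eq)
    rw [ENNReal.ofReal_tsum_of_nonneg (fun n => div_nonneg
      (mul_nonneg n.cast_nonneg (poissonP_nonneg hrL n)) hL'.le) h.summable]
    refine tsum_congr fun n => ?_
    rw [poissonWeight, ← ENNReal.ofReal_mul (by positivity), div_mul_eq_mul_div]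
  rw [sub_le_iff_le_add, ← ENNReal.ofReal_le_ofReal_iff (add_nonneg survivalProb_nonneg hr),
    ENNReal.ofReal_add survivalProb_nonneg hr, ofReal_survivalProb_neg_one hr hL, ← hmean,
    ← ENNReal.tsum_add, ENNReal.ofReal_one, ← tsum_poissonWeight hrL]
  refine ENNReal.tsum_le_tsum fun n => ?_
  rw [← add_mul]
  refine le_mul_of_one_le_left zero_le ?_
  calc (1 : ℝ≥0∞) = ENNReal.ofReal (1 - n / L + n / L) := by rw [sub_add_cancel, ENNReal.ofReal_one]
    _ ≤ _ := ENNReal.ofReal_add_le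

lemma survivalProb_neg_one_le (hr : 0 ≤ r) (hr1 : r < 1) {L : ℕ} (hL : L ≠ 0) :
    survivalProb (-1) (fun _ => r) L ≤ (1 - r) + r / (4 * (1 - r) * L) := by
  have : (0 : ℝ) < L := Nat.cast_pos.2 (Nat.pos_of_ne_zero hL)
  have hrL : 0 ≤ r * L := by positivity
  have hd : 0 < 1 - r := sub_pos.2 hr1
  -- AM-GM: `1 - x ≤ (1 - x + (1 - r))² / (4 (1 - r))`; the right side has an explicit mean.
  have hquad := ((((hasSum_poissonP (r * L)).mul_left ((2 - r) ^ 2)).add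
    ((hasSum_mul_poissonP (r * L)).mul_left (-2 * (2 - r) / L))).add
    ((hasSum_sq_mul_poissonP (r * L)).mul_left (1 / (L : ℝ) ^ 2))).div_const (4 * (1 - r))
  have hterm (n : ℕ) : ((2 - r) ^ 2 * poissonP (r * L) n + -2 * (2 - r) / L *
      (n * poissonP (r * L) n) + 1 / (L : ℝ) ^ 2 * ((n : ℝ) ^ 2 * poissonP (r * L) n)) /
        (4 * (1 - r)) = (1 - n / L + (1 - r)) ^ 2 / (4 * (1 - r)) * poissonP (r * L) n := by
    field_simp
    ring
  have hvalue : ((2 - r) ^ 2 * 1 + -2 * (2 - r) / L * (r * L) +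
      1 / (L : ℝ) ^ 2 * (r * L * (r * L + 1))) / (4 * (1 - r)) =
        (1 - r) + r / (4 * (1 - r) * L) := by
    field_simp
    ring
  simp only [hterm, hvalue] at hquad
  have hq0 (n : ℕ) : 0 ≤ (1 - (n : ℝ) / L + (1 - r)) ^ 2 / (4 * (1 - r)) := by positivity
  rw [← ENNReal.ofReal_le_ofReal_iff (by positivity), ofReal_survivalProb_neg_one hr hL,
    ← hquad.tsum_eq, ENNReal.ofReal_tsum_of_nonneg
      (fun n => mul_nonneg (hq0 n) (poissonP_nonneg hrL n)) hquad.summable]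
  refine ENNReal.tsum_le_tsum fun n => ?_
  rw [ENNReal.ofReal_mul (hq0 n), poissonWeight]
  gcongr
  rw [le_div_iff₀ (by positivity)]
  nlinarith [sq_nonneg ((1 - (n : ℝ) / L) - (1 - r))]

end Ballot

section EscapeScale

lemma le_stepExponent {σ : ℤ} {u r : ℝ} (hr : 0 ≤ r) (h : |u * σ| ≤ 1) :
    r * (u * σ - (u * σ) ^ 2) - u * σ ≤ stepExponent σ u r := by
  have hexp := (abs_le.1 (Real.abs_exp_sub_one_sub_id_le (x := -(u * σ)) (by rwa [abs_neg]))).2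
  unfold stepExponent
  nlinarith

lemma exists_stepExponent_one_eq_zero {r : ℝ} (hr : 1 < r) :
    ∃ v, (r - 1) / (2 * r) ≤ v ∧ stepExponent 1 v r = 0 := by
  have hr0 : 0 < r := one_pos.trans hr
  set u := (r - 1) / (2 * r) with hu
  have hu0 : 0 ≤ u := div_nonneg (by linarith) (by linarith)
  have hu1 : u ≤ 1 := (div_le_one (by linarith)).2 (by linarith)
  have hlow : 0 ≤ stepExponent 1 u r := by
    have h := le_stepExponent (σ := 1) hr0.le (u := u) (by
      rw [Int.cast_one, mul_one, abs_of_nonneg hu0]; exact hu1)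
    have hval : r * (u - u ^ 2) - u = r * u ^ 2 := by rw [hu]; field_simp; ring
    rw [Int.cast_one, mul_one, hval] at h
    exact (by positivity : 0 ≤ r * u ^ 2).trans h
  have hhigh : stepExponent 1 r r ≤ 0 := by
    have := mul_pos hr0 (Real.exp_pos (-(r * 1)))
    simp only [stepExponent, Int.cast_one]
    linarith
  have hcont : ContinuousOn (fun v => stepExponent 1 v r) (Set.Icc u r) := by
    unfold stepExponent; fun_prop
  obtain ⟨v, hv, hv0⟩ := intermediate_value_Icc' (hu1.trans hr.le) hcont ⟨hhigh, hlow⟩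
  exact ⟨v, hv.1, hv0⟩

/-- At a zero of the exponent `exp (-u * y)` is harmonic, and the leftwalk can only be killed
at `0`, where it equals `1`. -/
lemma killedWalk_one_add_exp_le {u r : ℝ} (hr : 0 ≤ r) (h0 : stepExponent 1 u r = 0)
    {φ : ℤ → ℝ≥0∞} (hφ : ∀ z : ℤ, 0 < z → ENNReal.ofReal (Real.exp (-(u * z))) ≤ φ z) (L : ℕ)
    {y : ℤ} (hy : 0 < y) :
    killedWalk 1 (fun _ => r) L 1 y + ENNReal.ofReal (Real.exp (-(u * y))) ≤
      1 + killedWalk 1 (fun _ => r) L φ y := by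
  induction L generalizing y with
  | zero => exact add_le_add_right (hφ y hy) _
  | succ L ih =>
    have hharm := tsum_poissonWeight_mul_exp_step (σ := 1) hr u y
    rw [h0, sub_zero] at hharm
    rw [killedWalk_succ, killedWalk_succ, ← hharm, ← tsum_poissonWeight hr, killedStep, killedStep,
      ← ENNReal.tsum_add, ← ENNReal.tsum_add]
    refine ENNReal.tsum_le_tsum fun n => ?_
    rw [← mul_add, ← mul_one_add]
    refine mul_le_mul_right ?_ _
    by_cases hn : 0 < y + 1 * ((n : ℤ) - 1)
    · rw [Set.indicator_of_mem (Set.mem_Ioi.2 hn), Set.indicator_of_mem (Set.mem_Ioi.2 hn)]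
      exact ih hn
    · have hn0 : y + 1 * ((n : ℤ) - 1) = 0 := by omega
      rw [hn0]
      simp

lemma one_sub_exp_neg_le_survivalProb_one {u r : ℝ} (hr : 0 ≤ r) (hu : 0 ≤ u)
    (h : 0 ≤ stepExponent 1 u r) (L : ℕ) :
    1 - Real.exp (-u) ≤ survivalProb 1 (fun _ => r) L := by
  have hdoob := one_le_killedWalk_add_exp (σ := 1) (r := fun _ => r) (M := L) (c := 0)
    (fun _ _ => hr) hu (fun t _ => by
      rw [neg_zero]; exact Finset.sum_nonneg fun _ _ => h) 1
  rw [sub_le_iff_le_add, ← ENNReal.ofReal_le_ofReal_iff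
    (add_nonneg survivalProb_nonneg (Real.exp_pos _).le),
    ENNReal.ofReal_add survivalProb_nonneg (Real.exp_pos _).le,
    ofReal_survivalProb fun _ _ => hr, ENNReal.ofReal_one]
  simpa using hdoob

lemma neg_log_one_sub_mul_le {s y : ℝ} (hs : s ∈ Set.Icc (0 : ℝ) 1) (hy : y ∈ Set.Ico (0 : ℝ) 1) :
    -Real.log (1 - s * y) ≤ s * y + s ^ 2 * (-Real.log (1 - y) - y) := by
  have hsy : |s * y| < 1 := by
    rw [abs_of_nonneg (mul_nonneg hs.1 hy.1)]
    exact (mul_le_of_le_one_left hy.1 hs.2).trans_lt hy.2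
  have hA := (hasSum_nat_add_iff' 1).2 (Real.hasSum_pow_div_log_of_abs_lt_one hsy)
  have hB := ((hasSum_nat_add_iff' 1).2 (Real.hasSum_pow_div_log_of_abs_lt_one
    (abs_lt.2 ⟨by linarith [hy.1], hy.2⟩))).mul_left (s ^ 2)
  have := hasSum_le (fun n => ?_) hA hB
  · simpa [add_comm] using this
  · rw [mul_pow, mul_div_assoc]
    have hpow : s ^ (n + 1 + 1) ≤ s ^ 2 := pow_le_pow_of_le_one hs.1 hs.2 (by omega)
    have := hy.1
    gcongr

lemma survivalProb_one_mul_le {r u v : ℝ} (hr : 0 ≤ r) (hu : 0 ≤ u) (huv : u ≤ v)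
    (hv : stepExponent 1 v r = 0) (L : ℕ) :
    survivalProb 1 (fun _ => r) L * (1 - Real.exp (-(L * stepExponent 1 u r))) ≤
      1 - Real.exp (-v) := by
  have hrate : r * Real.exp (-(u * (1 : ℤ))) ≤ r :=
    mul_le_of_le_one_right hr (Real.exp_le_one_iff.2 (by simpa using hu))
  have htilt : killedWalk 1 (fun _ => r) L (fun z => ENNReal.ofReal (Real.exp (-(u * z)))) 1 ≤
      ENNReal.ofReal (Real.exp (-(L * stepExponent 1 u r))) *
        killedWalk 1 (fun _ => r) L 1 1 := by
    have h := killedWalk_exp_mul (σ := 1) (r := fun _ => r) (L := L) (fun _ _ => hr) u 1 1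
    simp only [Pi.one_apply, mul_one, sum_const, card_range, nsmul_eq_mul] at h
    rw [h]
    gcongr
    · simpa using hu
    · exact killedWalk_mono_rate (fun _ _ => by positivity) (fun _ _ => hr)
        (fun _ _ => by simpa using hrate) monotone_const 1
  have hexact := (killedWalk_one_add_exp_le hr hv (fun z hz => ENNReal.ofReal_le_ofReal
    (Real.exp_le_exp.2 (neg_le_neg (mul_le_mul_of_nonneg_right huv (by exact_mod_cast hz.le)))))
    L one_pos).trans (add_le_add_right htilt 1)
  have hU := ofReal_survivalProb (σ := 1) (r := fun _ => r) (L := L) fun _ _ => hr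
  rw [max_eq_left zero_le_one] at hU
  rw [← hU, ← ENNReal.ofReal_mul (Real.exp_pos _).le, ← ENNReal.ofReal_one,
    ← ENNReal.ofReal_add survivalProb_nonneg (Real.exp_pos _).le,
    ← ENNReal.ofReal_add zero_le_one (mul_nonneg (Real.exp_pos _).le survivalProb_nonneg),
    ENNReal.ofReal_le_ofReal_iff
      (add_nonneg zero_le_one (mul_nonneg (Real.exp_pos _).le survivalProb_nonneg)),
    Int.cast_one, mul_one] at hexact
  linarith

lemma exists_scale_left {r : ℝ} (hr : 1 < r) :
    ∃ η > 0, (∀ s ∈ Set.Icc (0 : ℝ) 1, ∀ L,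
        s * η ≤ survivalProb 1 (fun _ => 1 + s * (r - 1)) L) ∧
      ∀ L : ℕ, survivalProb 1 (fun _ => r) L *
        (1 - Real.exp (-(L * ((r - 1) ^ 2 / (4 * r))))) ≤ η := by
  have hr0 : 0 < r := one_pos.trans hr
  obtain ⟨v, hv, hv0⟩ := exists_stepExponent_one_eq_zero hr
  set u := (r - 1) / (2 * r) with hu
  have hu0 : 0 < u := div_pos (by linarith) (by linarith)
  have : 0 < v := hu0.trans_le hv
  set y := 1 - Real.exp (-v) with hy
  have hyI : y ∈ Set.Ioo (0 : ℝ) 1 := ⟨sub_pos.2 (Real.exp_lt_one_iff.2 (by linarith)), by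
    linarith [Real.exp_pos (-v)]⟩
  have hry : r * y = v := by
    simp only [stepExponent, Int.cast_one, mul_one, ← hy] at hv0
    linarith
  refine ⟨y, hyI.1, fun s hs L => ?_, fun L => ?_⟩
  · have hlog := neg_log_one_sub_mul_le hs (Set.Ioo_subset_Ico_self hyI)
    have hlogv : Real.log (1 - y) = -v := by rw [hy, sub_sub_cancel, Real.log_exp]
    have hsy : 0 < 1 - s * y := by nlinarith [hs.2, hyI.1, hyI.2]
    have hexp : Real.exp (Real.log (1 - s * y)) = 1 - s * y := Real.exp_log hsy
    have h := one_sub_exp_neg_le_survivalProb_one (u := -Real.log (1 - s * y))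
      (r := 1 + s * (r - 1)) (by nlinarith [hs.1])
      (neg_nonneg.2 (Real.log_nonpos hsy.le (by nlinarith [hs.1, hyI.1])))
      (by
        simp only [stepExponent, Int.cast_one, mul_one, neg_neg, hexp]
        rw [hlogv] at hlog
        nlinarith) L
    rwa [neg_neg, hexp, sub_sub_cancel] at h
  · refine le_trans ?_ (survivalProb_one_mul_le hr0.le hu0.le hv hv0 L)
    gcongr
    · exact survivalProb_nonneg
    · have h := le_stepExponent (σ := 1) hr0.le (u := u) (by
        rw [Int.cast_one, mul_one, abs_of_pos hu0, hu, div_le_one (by linarith)]; linarith)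
      rw [Int.cast_one, mul_one] at h
      refine le_trans (le_of_eq ?_) h
      rw [hu]; field_simp; ring

lemma exists_scale_right {r : ℝ} (hr : 0 ≤ r) (hr1 : r < 1) :
    ∃ η > 0, (∀ s ∈ Set.Icc (0 : ℝ) 1, ∀ L,
        s * η ≤ survivalProb (-1) (fun _ => 1 + s * (r - 1)) L) ∧
      ∀ L : ℕ, L ≠ 0 →
        survivalProb (-1) (fun _ => r) L * (1 - 1 / (4 * (L * (1 - r) ^ 2))) ≤ η := by
  have hd : 0 < 1 - r := sub_pos.2 hr1
  refine ⟨1 - r, hd, fun s hs L => ?_, fun L hL => ?_⟩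
  · have h := one_sub_le_survivalProb_neg_one (r := 1 + s * (r - 1)) (by nlinarith [hs.1, hs.2]) L
    linarith
  · have : (0 : ℝ) < L := Nat.cast_pos.2 (Nat.pos_of_ne_zero hL)
    set x := 1 / (4 * (L * (1 - r) ^ 2)) with hx
    have : 0 ≤ x := by positivity
    have hU : survivalProb (-1) (fun _ => r) L ≤ (1 - r) * (1 + x) := by
      refine (survivalProb_neg_one_le hr hr1 hL).trans ?_
      have : (1 - r) * (1 + x) = (1 - r) + 1 / (4 * (1 - r) * L) := by rw [hx]; field_simp
      rw [this]
      gcongr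
    rcases le_total x 1 with hx1 | hx1
    · nlinarith [sub_nonneg.2 hx1, sq_nonneg x]
    · nlinarith [survivalProb_nonneg (σ := -1) (r := fun _ => r) (L := L)]

/-- `η` stands in for the escape probability of the walk with rate `r`. -/
lemma exists_escape_scale {σ : ℤ} (hσ : σ = 1 ∨ σ = -1) {r δ : ℝ} (hr : 0 ≤ r)
    (hδ0 : 0 < δ) (hδ1 : δ ≤ 1) (hδ : δ ≤ σ * (r - 1)) :
    ∃ η > 0, (∀ s ∈ Set.Icc (0 : ℝ) 1, ∀ L,
        s * η ≤ survivalProb σ (fun _ => 1 + s * (r - 1)) L) ∧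
      ∀ L : ℕ, L ≠ 0 → survivalProb σ (fun _ => r) L * (1 - 8 / (L * δ ^ 2)) ≤ η := by
  rcases hσ with rfl | rfl
  · rw [Int.cast_one, one_mul] at hδ
    obtain ⟨η, hη, hlow, hup⟩ := exists_scale_left (r := r) (by linarith)
    refine ⟨η, hη, hlow, fun L hL => le_trans ?_ (hup L)⟩
    have : (0 : ℝ) < L := Nat.cast_pos.2 (Nat.pos_of_ne_zero hL)
    have hγ : δ ^ 2 / 8 ≤ (r - 1) ^ 2 / (4 * r) := by
      rw [div_le_div_iff₀ (by norm_num) (by linarith)]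
      nlinarith [mul_le_mul_of_nonneg_left hδ hδ0.le, mul_self_le_mul_self hδ0.le hδ]
    gcongr
    · exact survivalProb_nonneg
    · calc Real.exp (-(L * ((r - 1) ^ 2 / (4 * r)))) ≤ Real.exp (-(L * (δ ^ 2 / 8))) := by gcongr
        _ ≤ (L * (δ ^ 2 / 8))⁻¹ := by
          rw [Real.exp_neg]
          gcongr
          linarith [Real.add_one_le_exp (L * (δ ^ 2 / 8))]
        _ = 8 / (L * δ ^ 2) := by field_simp
  · rw [Int.cast_neg, Int.cast_one, neg_one_mul, neg_sub] at hδ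
    obtain ⟨η, hη, hlow, hup⟩ := exists_scale_right hr (by linarith)
    refine ⟨η, hη, hlow, fun L hL => le_trans ?_ (hup L hL)⟩
    have : (0 : ℝ) < L := Nat.cast_pos.2 (Nat.pos_of_ne_zero hL)
    have hsq : L * δ ^ 2 ≤ L * (1 - r) ^ 2 := by gcongr
    have hLδ : 0 < L * δ ^ 2 := by positivity
    refine mul_le_mul_of_nonneg_left (sub_le_sub_left ?_ 1) survivalProb_nonneg
    rw [div_le_div_iff₀ (by linarith) hLδ]
    linarith

end EscapeScale

section OutwardDrift

lemma mul_le_sum_range_of_antitone {d : ℕ → ℝ} (hd : Antitone d) {M : ℕ} {δ : ℝ}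
    (h : M * δ ≤ ∑ i ∈ range M, d i) {t : ℕ} (ht : t ≤ M) : t * δ ≤ ∑ i ∈ range t, d i := by
  rcases Nat.eq_zero_or_pos M with rfl | hM
  · simp [Nat.le_zero.1 ht]
  have hhead : t * d t ≤ ∑ i ∈ range t, d i := by
    simpa using card_nsmul_le_sum (range t) d (d t) fun i hi => hd (mem_range.1 hi).le
  have htail : ∑ i ∈ Ico t M, d i ≤ (M - t) * d t := by
    simpa [Nat.cast_sub ht] using
      sum_le_card_nsmul (Ico t M) d (d t) fun i hi => hd (mem_Ico.1 hi).1
  have htM : (t : ℝ) ≤ M := by exact_mod_cast ht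
  have havg : t * (∑ i ∈ range M, d i) ≤ M * ∑ i ∈ range t, d i := by
    rw [← sum_range_add_sum_Ico d ht]
    nlinarith [mul_le_mul_of_nonneg_left htail t.cast_nonneg,
      mul_le_mul_of_nonneg_left hhead (sub_nonneg.2 htM)]
  have hM' : (0 : ℝ) < M := by exact_mod_cast hM
  refine le_of_mul_le_mul_left ?_ hM'
  calc M * (t * δ) = t * (M * δ) := by ring
    _ ≤ t * ∑ i ∈ range M, d i := by gcongr
    _ ≤ _ := havg

/-- Rates for which the expected increments `σ (r i - 1)` decrease along the walk but still
average at least `δ > 0` over the first `M` steps. -/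
structure OutwardDrift (σ : ℤ) (r : ℕ → ℝ) (M : ℕ) (δ : ℝ) : Prop where
  sign : σ = 1 ∨ σ = -1
  nonneg : ∀ i, 0 ≤ r i
  antitone : Antitone fun i => σ * r i
  ne_zero : M ≠ 0
  pos : 0 < δ
  le_one : δ ≤ 1
  drift : M * δ ≤ ∑ i ∈ range M, σ * (r i - 1)

namespace OutwardDrift

variable {σ : ℤ} {r : ℕ → ℝ} {L M : ℕ} {δ e θ : ℝ}

lemma mul_le_sum (h : OutwardDrift σ r M δ) {t : ℕ} (ht : t ≤ M) :
    t * δ ≤ ∑ i ∈ range t, σ * (r i - 1) :=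
  mul_le_sum_range_of_antitone (fun i j hij => by
    simp only [mul_sub]; exact sub_le_sub_right (h.antitone hij) _) h.drift ht

lemma le_initial (h : OutwardDrift σ r M δ) : δ ≤ σ * (r 0 - 1) := by
  simpa using h.mul_le_sum (Nat.one_le_iff_ne_zero.2 h.ne_zero)

lemma sign_mul_self (h : OutwardDrift σ r M δ) : (σ : ℝ) * σ = 1 := by
  rcases h.sign with rfl | rfl <;> norm_num

lemma abs_sign (h : OutwardDrift σ r M δ) : |(σ : ℝ)| = 1 := by
  rcases h.sign with rfl | rfl <;> norm_num

lemma one_sub_pos (h : OutwardDrift σ r M δ) (hθ : θ ∈ Set.Icc 0 (1 / 4)) : 0 < 1 - 2 * σ * θ := by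
  rcases h.sign with rfl | rfl <;> norm_num <;> linarith [hθ.1, hθ.2]

lemma le_stepExponent_perturbed (h : OutwardDrift σ r M δ) (hθ : θ ∈ Set.Icc 0 (1 / 4)) {u : ℝ}
    (hu : u ∈ Set.Icc 0 1) (i : ℕ) :
    u * (σ * (r i - 1) - (2 * θ + 2 * u) * r i) ≤
      stepExponent σ u ((1 - 2 * σ * θ) * r i) := by
  have hle := le_stepExponent (σ := σ) (u := u) (r := (1 - 2 * σ * θ) * r i)
    (mul_nonneg (h.one_sub_pos hθ).le (h.nonneg i))
    (by rw [abs_mul, h.abs_sign, mul_one, abs_of_nonneg hu.1]; exact hu.2)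
  have hσθ : -1 ≤ 2 * σ * θ := by
    rcases h.sign with rfl | rfl <;> norm_num <;> linarith [hθ.1, hθ.2]
  have hdef : stepExponent σ u ((1 - 2 * σ * θ) * r i) -
      u * (σ * (r i - 1) - (2 * θ + 2 * u) * r i) ≥ u ^ 2 * r i * (1 + 2 * σ * θ) := by
    linear_combination hle + (u * r i * 2 * θ + u ^ 2 * (1 - 2 * σ * θ) * r i) * h.sign_mul_self
  have : 0 ≤ u ^ 2 * r i * (1 + 2 * σ * θ) :=
    mul_nonneg (mul_nonneg (sq_nonneg u) (h.nonneg i)) (by linarith)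
  linarith

lemma sq_le_sum_stepExponent (h : OutwardDrift σ r M δ) (hθ : θ ∈ Set.Icc 0 (δ / 16)) {t : ℕ}
    (ht : t ≤ M) :
    t * δ ^ 2 / 32 ≤ ∑ i ∈ range t, stepExponent σ (δ / 16) ((1 - 2 * σ * θ) * r i) := by
  set c := 2 * θ + 2 * (δ / 16) with hc
  have hδ1 := h.le_one
  have hδ0 := h.pos
  have hθ' : θ ∈ Set.Icc 0 (1 / 4) := ⟨hθ.1, by linarith [hθ.2]⟩
  have hc0 : 0 ≤ c := by have := hθ.1; positivity
  have hc1 : c ≤ δ / 4 := by linarith [hθ.2]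
  have hd := h.mul_le_sum ht
  have hsum : ∑ i ∈ range t, (σ * (r i - 1) - c * r i) =
      (1 - σ * c) * (∑ i ∈ range t, σ * (r i - 1)) - t * c := by
    have hconst : ∑ _i ∈ range t, c = t * c := by simp
    rw [mul_sum, ← hconst, ← sum_sub_distrib]
    exact sum_congr rfl fun i _ => by linear_combination c * (r i - 1) * h.sign_mul_self
  have hσc : 1 - δ / 4 ≤ 1 - σ * c := by
    rcases h.sign with rfl | rfl <;> norm_num <;> linarith
  calc t * δ ^ 2 / 32 = δ / 16 * (t * (δ / 2)) := by ring
    _ ≤ δ / 16 * ((1 - σ * c) * (∑ i ∈ range t, σ * (r i - 1)) - t * c) := by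
      gcongr
      have h1 : (1 - δ / 4) * (t * δ) ≤ (1 - σ * c) * ∑ i ∈ range t, σ * (r i - 1) :=
        mul_le_mul hσc hd (by positivity) (by linarith)
      nlinarith [mul_le_mul_of_nonneg_left hc1 t.cast_nonneg,
        mul_nonneg (t.cast_nonneg (α := ℝ)) (mul_nonneg hδ0.le (sub_nonneg.2 hδ1))]
    _ = ∑ i ∈ range t, δ / 16 * (σ * (r i - 1) - c * r i) := by rw [← hsum, mul_sum]
    _ ≤ _ := sum_le_sum fun i _ => h.le_stepExponent_perturbed hθ' ⟨by positivity, by linarith⟩ i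

lemma exp_neg_le {x : ℝ} (he : 0 < e) (hx : 1 ≤ e * x) : Real.exp (-x) ≤ e := by
  rw [Real.exp_neg, inv_le_comm₀ (Real.exp_pos x) he, inv_eq_one_div]
  exact ((div_le_iff₀' he).2 hx).trans (by linarith [Real.add_one_le_exp x])

lemma exists_scale (h : OutwardDrift σ r M δ) (he : e ∈ Set.Ioc 0 (1 / 100))
    (hL : 32 ≤ e * (L * δ ^ 2)) :
    ∃ η > 0, (∀ s ∈ Set.Icc (0 : ℝ) 1, ∀ n,
        s * η ≤ survivalProb σ (fun _ => 1 + s * (r 0 - 1)) n) ∧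
      survivalProb σ (fun _ => r 0) L ≤ (1 + e) * η := by
  obtain ⟨η, hη, hlow, hup⟩ := exists_escape_scale h.sign (h.nonneg 0) h.pos h.le_one h.le_initial
  have hLδ : 0 < L * δ ^ 2 := by
    by_contra! hneg
    nlinarith [he.1]
  have hL0 : L ≠ 0 := by rintro rfl; simp at hLδ
  refine ⟨η, hη, hlow, ?_⟩
  have hdiv : 8 / (L * δ ^ 2) ≤ e / 4 := by
    rw [div_le_div_iff₀ hLδ (by norm_num)]; linarith
  have hU := survivalProb_nonneg (σ := σ) (r := fun _ => r 0) (L := L)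
  have hUη : survivalProb σ (fun _ => r 0) L * (1 - e / 4) ≤ η :=
    le_trans (by gcongr) (hup L hL0)
  have hfac : 1 ≤ (1 + e) * (1 - e / 4) := by nlinarith [he.1, he.2]
  nlinarith [mul_le_mul_of_nonneg_left hUη (by linarith [he.1] : 0 ≤ 1 + e)]

lemma iInf_survivalProb_pos (h : OutwardDrift σ r M δ) :
    0 < ⨅ n, survivalProb σ (fun _ => r 0) n := by
  obtain ⟨η, hη, hlow, -⟩ := exists_escape_scale h.sign (h.nonneg 0) h.pos h.le_one h.le_initial
  exact hη.trans_le (le_ciInf fun n => by simpa using hlow 1 ⟨zero_le_one, le_rfl⟩ n)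

lemma survivalProb_le_iInf (h : OutwardDrift σ r M δ) (he : e ∈ Set.Ioc 0 (1 / 100))
    (hL : 32 ≤ e * (L * δ ^ 2)) :
    survivalProb σ (fun _ => r 0) L ≤ (1 + e) * ⨅ n, survivalProb σ (fun _ => r 0) n := by
  obtain ⟨η, -, hlow, hup⟩ := h.exists_scale he hL
  refine hup.trans (mul_le_mul_of_nonneg_left ?_ (by linarith [he.1]))
  exact le_ciInf fun n => by simpa using hlow 1 ⟨zero_le_one, le_rfl⟩ n

lemma perturbed_nonneg (h : OutwardDrift σ r M δ) (hθ : θ ∈ Set.Icc 0 (1 / 4)) (i : ℕ) :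
    0 ≤ (1 - 2 * σ * θ) * r i := mul_nonneg (h.one_sub_pos hθ).le (h.nonneg i)

lemma sign_mul_perturbed_le (h : OutwardDrift σ r M δ) (hθ : 0 ≤ θ) (i : ℕ) :
    σ * ((1 - 2 * σ * θ) * r i) ≤ σ * r 0 := by
  refine le_trans ?_ (h.antitone i.zero_le)
  have : σ * ((1 - 2 * σ * θ) * r i) = σ * r i - 2 * θ * r i := by
    linear_combination -2 * θ * r i * h.sign_mul_self
  have := mul_nonneg hθ (h.nonneg i)
  linarith

lemma sign_mul_shrunk_le (h : OutwardDrift σ r M δ) (he : e ∈ Set.Ioc 0 (1 / 100))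
    (hθ : θ ∈ Set.Icc 0 (e * δ)) {i : ℕ} (hi : σ * (r 0 - r i) ≤ e * δ * r 0) :
    σ * (1 + (1 - 8 * e) * (r 0 - 1)) ≤ σ * ((1 - 2 * σ * θ) * r i) := by
  have hanti := h.antitone i.zero_le
  have hd := h.le_initial
  have heδ : 0 < e * δ := mul_pos he.1 h.pos
  have hrearr : σ * ((1 - 2 * σ * θ) * r i) = σ * r i - 2 * θ * r i := by
    linear_combination -2 * θ * r i * h.sign_mul_self
  have hδ1 := h.le_one
  have heδ1 : e * δ ≤ 1 / 100 := by nlinarith [he.2, he.1, h.pos]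
  have hr0 : r 0 * (e * δ) ≤ 2 * (e * (σ * (r 0 - 1))) := by
    have : r 0 ≤ 1 + σ * (r 0 - 1) := by
      rcases h.sign with rfl | rfl <;> push_cast at hd ⊢ <;> linarith [h.pos]
    nlinarith [mul_le_mul_of_nonneg_left hd he.1.le,
      mul_nonneg (mul_nonneg he.1.le (h.pos.le.trans hd)) (sub_nonneg.2 hδ1)]
  have hri : r i ≤ 101 / 100 * r 0 := by
    have := h.nonneg 0
    rcases h.sign with rfl | rfl <;>
      simp only [Int.cast_one, Int.cast_neg, one_mul, neg_mul] at hanti hi <;> nlinarith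
  have : 2 * θ * r i ≤ 2 * (e * δ) * (101 / 100 * r 0) :=
    mul_le_mul (by linarith [hθ.2]) hri (h.nonneg i) (by positivity)
  rw [hrearr]
  nlinarith [mul_nonneg he.1.le (h.pos.le.trans hd)]

lemma depoissonization_exponent_le {x : ℝ} (hx : |x| ≤ 1 / 4) :
    (1 - 2 * x) * (Real.exp x - 1) - x ≤ -(x ^ 2 / 2) := by
  have hexp := (abs_le.1 (Real.abs_exp_sub_one_sub_id_le (x := x) (by linarith))).2
  have := abs_le.1 hx
  nlinarith [sq_nonneg x]

lemma sign_mul_tilt_le (hσ : σ = 1 ∨ σ = -1) (hθ : θ ∈ Set.Icc 0 (1 / 4)) :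
    σ * ((1 - 2 * σ * θ) * Real.exp (σ * θ)) ≤ σ := by
  have hlow := Real.add_one_le_exp (-θ)
  rcases hσ with rfl | rfl
  · have hinv : Real.exp (-θ) * Real.exp θ = 1 := by rw [← Real.exp_add]; simp
    simp only [Int.cast_one, one_mul, mul_one]
    rw [← hinv]
    gcongr
    linarith [hθ.1]
  · simp only [Int.cast_neg, Int.cast_one, neg_mul, one_mul, mul_neg, mul_one, sub_neg_eq_add]
    nlinarith [hθ.1, hθ.2]

lemma depoissonization_cost_le (h : OutwardDrift σ r M δ) (he : 0 < e)
    (hθ : θ ∈ Set.Icc 0 (1 / 4)) {N : ℝ} (hN : 2 ≤ e * (N * θ ^ 2)) :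
    Real.exp (N * ((1 - 2 * σ * θ) * (Real.exp (σ * θ) - 1) - σ * θ)) ≤ e := by
  have hexp := depoissonization_exponent_le (x := σ * θ) (by
    rw [abs_mul, h.abs_sign, one_mul, abs_of_nonneg hθ.1]; exact hθ.2)
  have hN0 : 0 ≤ N := by
    by_contra! hneg
    nlinarith [mul_nonneg he.le (sq_nonneg θ)]
  refine le_trans (Real.exp_le_exp.2 ?_) (exp_neg_le (x := N * θ ^ 2 / 2) he (by linarith))
  rw [mul_pow, pow_two (σ : ℝ), h.sign_mul_self, ← mul_assoc] at hexp
  nlinarith [mul_le_mul_of_nonneg_left hexp hN0]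

lemma survivalProb_tilted_le (h : OutwardDrift σ r M δ) (hLM : L ≤ M)
    (hθ : θ ∈ Set.Icc 0 (1 / 4)) :
    survivalProb σ (fun i => (1 - 2 * σ * θ) * Real.exp (σ * θ) * r i) M ≤
      survivalProb σ (fun _ => r 0) L := by
  have hpos : 0 ≤ (1 - 2 * σ * θ) * Real.exp (σ * θ) :=
    mul_nonneg (h.one_sub_pos hθ).le (Real.exp_pos _).le
  refine (survivalProb_anti (fun i _ => mul_nonneg hpos (h.nonneg i)) hLM).trans
    (survivalProb_mono_rate (fun i _ => mul_nonneg hpos (h.nonneg i)) (fun _ _ => h.nonneg 0)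
      fun i _ => ?_)
  rw [← mul_assoc]
  exact (mul_le_mul_of_nonneg_right (sign_mul_tilt_le h.sign hθ) (h.nonneg i)).trans
    (h.antitone i.zero_le)

/-- `hb` is what de-Poissonization at a slightly unfavourable rate yields when `b` is the survival
probability of the walk driven by balls. -/
lemma iInf_survivalProb_le (h : OutwardDrift σ r M δ) (he : e ∈ Set.Ioc 0 (1 / 100))
    (hL : 32 ≤ e * (L * δ ^ 2)) (hLM : L ≤ M) (hnear : ∀ i < L, σ * (r 0 - r i) ≤ e * δ * r 0)
    (hθ : θ ∈ Set.Icc 0 (e * δ)) {N : ℝ} (hN : 2 ≤ e * (N * θ ^ 2)) {b : ℝ}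
    (hb : survivalProb σ (fun i => (1 - 2 * σ * θ) * r i) M ≤
      b + Real.exp (N * ((1 - 2 * σ * θ) * (Real.exp (σ * θ) - 1) - σ * θ)) *
        survivalProb σ (fun i => (1 - 2 * σ * θ) * Real.exp (σ * θ) * r i) M) :
    (1 - 12 * e) * ⨅ n, survivalProb σ (fun _ => r 0) n ≤ b := by
  obtain ⟨η, hη, hlow, hup⟩ := h.exists_scale he hL
  have hδ := h.pos
  have heδ : e * δ ≤ δ / 16 := by nlinarith [he.2]
  have hθ16 : θ ∈ Set.Icc 0 (δ / 16) := ⟨hθ.1, hθ.2.trans heδ⟩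
  have hθ4 : θ ∈ Set.Icc 0 (1 / 4) := ⟨hθ.1, by linarith [hθ16.2, h.le_one]⟩
  have hnonneg := h.perturbed_nonneg hθ4
  set U := survivalProb σ (fun _ => r 0) L
  have htail : survivalProb σ (fun i => (1 - 2 * σ * θ) * r i) L ≤
      survivalProb σ (fun i => (1 - 2 * σ * θ) * r i) M + e * U := by
    refine (survivalProb_le_add_exp (fun i _ => hnonneg i) (fun _ _ => h.nonneg 0) hLM
      (fun i _ => h.sign_mul_perturbed_le hθ.1 i) (u := δ / 16) (γ := L * δ ^ 2 / 32)
      (by positivity) fun t hLt ht => le_trans ?_ (h.sq_le_sum_stepExponent hθ16 ht)).trans ?_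
    · gcongr
    · gcongr
      · exact survivalProb_nonneg
      · exact exp_neg_le he.1 (by linarith)
  have hscale : (1 - 8 * e) * η ≤ survivalProb σ (fun i => (1 - 2 * σ * θ) * r i) L :=
    (hlow (1 - 8 * e) ⟨by linarith [he.2], by linarith [he.1]⟩ L).trans <|
      survivalProb_mono_rate (fun _ _ => by nlinarith [h.nonneg 0, he.1, he.2])
        (fun i _ => hnonneg i) fun i hi => h.sign_mul_shrunk_le he hθ (hnear i hi)
  have hE : ⨅ n, survivalProb σ (fun _ => r 0) n ≤ U :=
    ciInf_le ⟨0, Set.forall_mem_range.2 fun _ => survivalProb_nonneg⟩ L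
  have hbig := mul_le_mul (h.depoissonization_cost_le he.1 hθ4 hN)
    (h.survivalProb_tilted_le hLM hθ4) survivalProb_nonneg he.1.le
  have h1 : (1 - 12 * e) * ⨅ n, survivalProb σ (fun _ => r 0) n ≤ (1 - 12 * e) * ((1 + e) * η) :=
    mul_le_mul_of_nonneg_left (hE.trans hup) (by linarith [he.2])
  have h2 : e * U ≤ e * ((1 + e) * η) := mul_le_mul_of_nonneg_left hup he.1.le
  nlinarith [mul_pos he.1 hη, mul_pos (mul_pos he.1 he.1) hη]

end OutwardDrift

end OutwardDrift

section Ind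

variable {P Q : Prop}

lemma ind_of_true (h : P) : ind P = 1 := if_pos h

lemma ind_of_false (h : ¬P) : ind P = 0 := if_neg h

lemma ind_nonneg : 0 ≤ ind P := by
  unfold ind; split_ifs <;> norm_num

lemma ind_mono (h : P → Q) : ind P ≤ ind Q := by
  by_cases hP : P
  · rw [ind_of_true hP, ind_of_true (h hP)]
  · rw [ind_of_false hP]; exact ind_nonneg

lemma ind_and : ind (P ∧ Q) = ind P * ind Q := by
  by_cases hP : P
  · simp only [hP, true_and, ind_of_true, one_mul]
  · rw [ind_of_false hP, ind_of_false fun h => hP h.1, zero_mul]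

lemma ofReal_ind_of_true (h : P) : ENNReal.ofReal (ind P) = 1 := by
  rw [ind_of_true h, ENNReal.ofReal_one]

lemma ofReal_ind_of_false (h : ¬P) : ENNReal.ofReal (ind P) = 0 := by
  rw [ind_of_false h, ENNReal.ofReal_zero]

end Ind

section PoissonExpect

variable {ι κ : Type*} [Fintype ι] [Fintype κ]

/-- The expectation of `F` under independent Poisson variables with means `r i`. -/
noncomputable def poissonExpect (r : ι → ℝ) (F : (ι → ℕ) → ℝ≥0∞) : ℝ≥0∞ :=
  ∑' z : ι → ℕ, (∏ i, poissonWeight (r i) (z i)) * F z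

lemma poissonExpect_const_mul (r : ι → ℝ) (c : ℝ≥0∞) (F : (ι → ℕ) → ℝ≥0∞) :
    poissonExpect r (fun z => c * F z) = c * poissonExpect r F := by
  simp only [poissonExpect, ← ENNReal.tsum_mul_left, mul_left_comm c]

lemma poissonExpect_sum (r : ι → ℝ) (F : κ → (ι → ℕ) → ℝ≥0∞) :
    poissonExpect r (fun z => ∑ c, F c z) = ∑ c, poissonExpect r (F c) := by
  simp only [poissonExpect, Finset.mul_sum]
  exact Summable.tsum_finsetSum fun _ _ => ENNReal.summable

lemma poissonExpect_cons {L : ℕ} (r : Fin (L + 1) → ℝ) (F : (Fin (L + 1) → ℕ) → ℝ≥0∞) :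
    poissonExpect r F = ∑' n, poissonWeight (r 0) n *
      poissonExpect (fun i => r i.succ) fun z => F (Fin.cons n z) := by
  unfold poissonExpect
  rw [← (Fin.consEquiv fun _ : Fin (L + 1) => ℕ).tsum_eq, ENNReal.tsum_prod']
  refine tsum_congr fun n => ?_
  rw [← ENNReal.tsum_mul_left]
  refine tsum_congr fun z => ?_
  simp only [Fin.consEquiv, Equiv.coe_fn_mk, Fin.prod_univ_succ, Fin.cons_zero, Fin.cons_succ,
    mul_assoc]

lemma poissonExpect_sumType_mul (r : ι ⊕ κ → ℝ) (F : (ι → ℕ) → ℝ≥0∞) (G : (κ → ℕ) → ℝ≥0∞) :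
    poissonExpect r (fun z => F (z ∘ Sum.inl) * G (z ∘ Sum.inr)) =
      poissonExpect (r ∘ Sum.inl) F * poissonExpect (r ∘ Sum.inr) G := by
  unfold poissonExpect
  rw [← (Equiv.sumArrowEquivProdArrow ι κ ℕ).symm.tsum_eq, ENNReal.tsum_prod',
    ← ENNReal.tsum_mul_right]
  simp only [← ENNReal.tsum_mul_left]
  refine tsum_congr fun x => tsum_congr fun y => ?_
  simp only [Fintype.prod_sum_type, Equiv.sumArrowEquivProdArrow, Equiv.coe_fn_symm_mk,
    Sum.elim_inl, Sum.elim_inr, Sum.elim_comp_inl, Sum.elim_comp_inr, Function.comp_apply]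
  ring

lemma poissonExpect_option (r : Option ι → ℝ) (F : ℕ → (ι → ℕ) → ℝ≥0∞) :
    poissonExpect r (fun z => F (z none) (z ∘ some)) =
      poissonExpect (r ∘ some) fun z => ∑' n, poissonWeight (r none) n * F n z := by
  unfold poissonExpect
  rw [← (Equiv.piOptionEquivProd (β := fun _ : Option ι => ℕ)).symm.tsum_eq, ENNReal.tsum_prod',
    ENNReal.tsum_comm]
  simp only [← ENNReal.tsum_mul_left]
  refine tsum_congr fun z => tsum_congr fun n => ?_
  rw [Fintype.prod_option, mul_comm (poissonWeight _ _), mul_assoc]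
  rfl

lemma succ_mul_poissonWeight_succ {r : ℝ} (hr : 0 ≤ r) (n : ℕ) :
    ((n + 1 : ℕ) : ℝ≥0∞) * poissonWeight r (n + 1) = ENNReal.ofReal r * poissonWeight r n := by
  unfold poissonWeight
  rw [← ENNReal.ofReal_natCast, ← ENNReal.ofReal_mul (Nat.cast_nonneg _), ← ENNReal.ofReal_mul hr,
    ← succ_mul_poissonP_succ, Nat.cast_succ]

/-- The Mecke formula. -/
lemma poissonExpect_apply_mul [DecidableEq ι] {r : ι → ℝ} (i : ι) (hr : 0 ≤ r i)
    (F : (ι → ℕ) → ℝ≥0∞) :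
    poissonExpect r (fun z => z i * F z) =
      ENNReal.ofReal (r i) * poissonExpect r fun z => F (z + Pi.single i 1) := by
  unfold poissonExpect
  rw [← ENNReal.tsum_mul_left,
    ← (add_left_injective (Pi.single i 1 : ι → ℕ)).tsum_eq fun z hz => ?_]
  · refine tsum_congr fun z => ?_
    have hoff : ∏ j ∈ {i}ᶜ, poissonWeight (r j) ((z + Pi.single i 1 : ι → ℕ) j) =
        ∏ j ∈ {i}ᶜ, poissonWeight (r j) (z j) :=
      Finset.prod_congr rfl fun j hj => by
        rw [Pi.add_apply, Pi.single_eq_of_ne (by simpa using hj), add_zero]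
    have hi : (z + Pi.single i 1 : ι → ℕ) i = z i + 1 := by rw [Pi.add_apply, Pi.single_eq_same]
    rw [Fintype.prod_eq_mul_prod_compl i, Fintype.prod_eq_mul_prod_compl i, hoff]
    simp only [hi, ← mul_assoc, ← succ_mul_poissonWeight_succ hr (z i)]
    ring
  · have hzi : z i ≠ 0 := fun h0 => hz (by simp only [h0, Nat.cast_zero, zero_mul, mul_zero])
    refine ⟨z - Pi.single i 1, tsub_add_cancel_of_le fun j => ?_⟩
    obtain rfl | hj := eq_or_ne j i
    · rw [Pi.single_eq_same]
      exact Nat.one_le_iff_ne_zero.2 hzi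
    · rw [Pi.single_eq_of_ne hj]
      exact Nat.zero_le _

end PoissonExpect

section Survives

variable {σ y : ℤ} {L : ℕ}

/-- The walk started at `y` with steps `σ (z i - 1)` stays positive up to time `L`. -/
def Survives (σ y : ℤ) {L : ℕ} (z : Fin L → ℕ) : Prop :=
  ∀ t, 1 ≤ t → t ≤ L → 0 < y + σ * ((∑ i ∈ univ.filter fun i : Fin L => (i : ℕ) < t, z i : ℕ) - t)

lemma leftOK_iff_survives (z : Fin L → ℕ) : leftOK L z ↔ Survives 1 1 z :=
  forall₃_congr fun t _ _ => by omega

lemma rightOK_iff_survives (z : Fin L → ℕ) : rightOK L z ↔ Survives (-1) 0 z :=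
  forall₃_congr fun t _ _ => by omega

lemma survives_mono (hσ : 0 ≤ σ) {z z' : Fin L → ℕ} (h : z ≤ z') (hz : Survives σ y z) :
    Survives σ y z' := fun t h1 h2 =>
  (hz t h1 h2).trans_le (by gcongr with i; exact h i)

lemma survives_anti (hσ : σ ≤ 0) {z z' : Fin L → ℕ} (h : z ≤ z') (hz : Survives σ y z') :
    Survives σ y z := fun t h1 h2 =>
  (hz t h1 h2).trans_le <|
    add_le_add_right (mul_le_mul_of_nonpos_left (by gcongr with i; exact h i) hσ) y

lemma sum_filter_lt_succ_cons (n : ℕ) (z : Fin L → ℕ) (t : ℕ) :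
    ∑ i ∈ univ.filter fun i : Fin (L + 1) => (i : ℕ) < t + 1, (Fin.cons n z : Fin (L + 1) → ℕ) i =
      n + ∑ i ∈ univ.filter fun i : Fin L => (i : ℕ) < t, z i := by
  simp only [Finset.sum_filter, Fin.sum_univ_succ, Fin.val_zero, Nat.zero_lt_succ, if_true,
    Fin.cons_zero, Fin.val_succ, add_lt_add_iff_right, Fin.cons_succ]

lemma survives_cons (n : ℕ) (z : Fin L → ℕ) :
    Survives σ y (Fin.cons n z : Fin (L + 1) → ℕ) ↔
      0 < y + σ * (n - 1) ∧ Survives σ (y + σ * (n - 1)) z := by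
  have hstep (t : ℕ) : y + σ * ((∑ i ∈ univ.filter fun i : Fin (L + 1) => (i : ℕ) < t + 1,
      (Fin.cons n z : Fin (L + 1) → ℕ) i : ℕ) - (t + 1 : ℕ)) =
      y + σ * (n - 1) + σ * ((∑ i ∈ univ.filter fun i : Fin L => (i : ℕ) < t, z i : ℕ) - t) := by
    rw [sum_filter_lt_succ_cons]
    push_cast
    ring
  have hzero : ((∑ i ∈ univ.filter fun i : Fin L => (i : ℕ) < 0, z i : ℕ) : ℤ) - (0 : ℕ) = 0 := by
    simp only [not_lt_zero, filter_false, sum_empty, sub_self]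
  constructor
  · intro h
    refine ⟨?_, fun t _ h2 => hstep t ▸ h (t + 1) (by omega) (by omega)⟩
    have := hstep 0 ▸ h 1 le_rfl (by omega)
    rwa [hzero, mul_zero, add_zero] at this
  · rintro ⟨hpos, h⟩ (_ | t) h1 h2
    · omega
    rw [hstep]
    rcases Nat.eq_zero_or_pos t with rfl | ht
    · rwa [hzero, mul_zero, add_zero]
    · exact h t ht (by omega)

lemma poissonExpect_survives (σ : ℤ) (r : ℕ → ℝ) (L : ℕ) (y : ℤ) :
    poissonExpect (fun i : Fin L => r i) (fun z => ENNReal.ofReal (ind (Survives σ y z))) =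
      killedWalk σ r L 1 y := by
  induction L generalizing r y with
  | zero =>
    have htriv (z : Fin 0 → ℕ) : Survives σ y z := fun t h1 h2 => by omega
    simp only [poissonExpect, univ_eq_empty, prod_empty, ofReal_ind_of_true (htriv _), mul_one,
      killedWalk, Pi.one_apply]
    rw [tsum_fintype, Fintype.sum_unique]
  | succ L ih =>
    rw [poissonExpect_cons, killedWalk_succ, killedStep]
    refine tsum_congr fun n => ?_
    congr 1
    simp only [survives_cons, ind_and, ENNReal.ofReal_mul ind_nonneg, poissonExpect_const_mul,
      Fin.val_succ]
    rw [ih fun i => r (i + 1)]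
    by_cases hn : 0 < y + σ * (n - 1)
    · rw [ofReal_ind_of_true hn, one_mul, Set.indicator_of_mem (Set.mem_Ioi.2 hn)]
    · rw [ofReal_ind_of_false hn, zero_mul, Set.indicator_of_notMem (by simpa using hn)]

lemma tsum_prod_poissonP_mul_ind_survives {r : ℕ → ℝ} (hr : ∀ i < L, 0 ≤ r i) :
    ∑' z : Fin L → ℕ, (∏ i : Fin L, poissonP (r i) (z i)) * ind (Survives σ (max σ 0) z) =
      survivalProb σ r L := by
  have hfin (z : Fin L → ℕ) : (∏ i : Fin L, poissonWeight (r i) (z i)) *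
      ENNReal.ofReal (ind (Survives σ (max σ 0) z)) ≠ ⊤ :=
    ENNReal.mul_ne_top (ENNReal.prod_ne_top fun i _ => ENNReal.ofReal_ne_top) ENNReal.ofReal_ne_top
  rw [survivalProb, ← poissonExpect_survives, poissonExpect, ENNReal.tsum_toReal_eq hfin]
  refine tsum_congr fun z => ?_
  rw [ENNReal.toReal_mul, ENNReal.toReal_prod, ENNReal.toReal_ofReal ind_nonneg]
  congr 1
  exact Finset.prod_congr rfl fun i _ =>
    (ENNReal.toReal_ofReal (poissonP_nonneg (hr i i.2) _)).symm

lemma escProb_eq_iInf {r : ℝ} (hr : 0 ≤ r) :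
    escProb r = ⨅ n, survivalProb 1 (fun _ => r) n :=
  iInf_congr fun n => by
    simp only [escLProb, escLProbV, leftOK_iff_survives]
    exact tsum_prod_poissonP_mul_ind_survives fun _ _ => hr

lemma escRProb_eq_iInf {r : ℝ} (hr : 0 ≤ r) :
    escRProb r = ⨅ n, survivalProb (-1) (fun _ => r) n :=
  iInf_congr fun n => by
    simp only [escRLProb, escRLProbV, rightOK_iff_survives]
    exact tsum_prod_poissonP_mul_ind_survives fun _ _ => hr

end Survives

section BallsInBins

variable {ι κ α : Type*} {n : ℕ}

/-- The number of balls in bin `i` when ball `j` is placed in bin `T j`. -/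
def occupancy [DecidableEq ι] (T : Fin n → ι) (i : ι) : ℕ := #{j | T j = i}

lemma occupancy_cons [DecidableEq ι] (i : ι) (T : Fin n → ι) :
    occupancy (Fin.cons i T : Fin (n + 1) → ι) = occupancy T + Pi.single i 1 := by
  funext j
  simp only [occupancy, Finset.card_filter, Fin.sum_univ_succ, Fin.cons_zero, Fin.cons_succ,
    Pi.add_apply, Pi.single_apply, eq_comm (a := i), add_comm]

/-- The bin probabilities when all the bins outside the range of `f` are merged into the single
bin `none`. -/
def mergedWeight [Fintype α] (w : ι → ℝ) (f : α → ι) : Option α → ℝ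
  | some a => w (f a)
  | none => 1 - ∑ a, w (f a)

variable [Fintype ι] [Fintype κ]

lemma sum_ofReal_of_mem_stdSimplex {w : ι → ℝ} (hw : w ∈ stdSimplex ℝ ι) :
    ∑ i, ENNReal.ofReal (w i) = 1 := by
  rw [← ENNReal.ofReal_sum_of_nonneg fun i _ => hw.1 i, hw.2, ENNReal.ofReal_one]

lemma prod_poissonWeight_zero {w : ι → ℝ} (hw : w ∈ stdSimplex ℝ ι) {ν : ℝ} (hν : 0 ≤ ν) :
    ∏ i, poissonWeight (ν * w i) 0 = poissonWeight ν 0 := by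
  unfold poissonWeight
  rw [← ENNReal.ofReal_prod_of_nonneg fun i _ => poissonP_nonneg (mul_nonneg hν (hw.1 i)) 0]
  simp only [poissonP, pow_zero, mul_one, Nat.factorial_zero, Nat.cast_one, div_one,
    ← Real.exp_sum, Finset.sum_neg_distrib, ← Finset.mul_sum, hw.2]

lemma sum_partialInv_eq_some {f : α → ι} (hf : f.Injective) {M : Type*} [AddCommMonoid M]
    [DecidableEq α] (z : ι → M) (a : α) :
    ∑ i with Function.partialInv f i = some a, z i = z (f a) := by
  classical
  simp only [hf.isPartialInv _ _, Finset.sum_filter, Finset.sum_ite_eq, mem_univ, if_true]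

variable [Fintype α]

lemma mergedWeight_eq_sum [DecidableEq α] {w : ι → ℝ} (hw : w ∈ stdSimplex ℝ ι) {f : α → ι}
    (hf : f.Injective) (c : Option α) :
    mergedWeight w f c = ∑ i with Function.partialInv f i = c, w i := by
  cases c with
  | some a => exact (sum_partialInv_eq_some hf w a).symm
  | none =>
    have htot := Finset.sum_fiberwise univ (Function.partialInv f) w
    rw [Fintype.sum_option, hw.2] at htot
    simp only [sum_partialInv_eq_some hf] at htot
    exact (eq_sub_of_add_eq htot).symm

lemma mergedWeight_mem_stdSimplex {w : ι → ℝ} (hw : w ∈ stdSimplex ℝ ι) {f : α → ι}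
    (hf : f.Injective) : mergedWeight w f ∈ stdSimplex ℝ (Option α) := by
  classical
  refine ⟨fun c => ?_, ?_⟩
  · rw [mergedWeight_eq_sum hw hf]
    exact Finset.sum_nonneg fun i _ => hw.1 i
  · rw [Fintype.sum_option]
    exact sub_add_cancel _ _

variable [DecidableEq ι] [DecidableEq κ]

/-- The expectation of a function `F` of the occupancies of `n` independent balls, each placed
in bin `i` with probability `w i`. -/
noncomputable def ballsExpect (w : ι → ℝ) (n : ℕ) (F : (ι → ℕ) → ℝ≥0∞) : ℝ≥0∞ :=
  ∑ T : Fin n → ι, (∏ j, ENNReal.ofReal (w (T j))) * F (occupancy T)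

lemma ballsExpect_zero (w : ι → ℝ) (F : (ι → ℕ) → ℝ≥0∞) : ballsExpect w 0 F = F 0 := by
  rw [ballsExpect, Fintype.sum_unique, univ_eq_empty, prod_empty, one_mul]
  rfl

lemma ballsExpect_succ (w : ι → ℝ) (n : ℕ) (F : (ι → ℕ) → ℝ≥0∞) :
    ballsExpect w (n + 1) F =
      ∑ i, ENNReal.ofReal (w i) * ballsExpect w n fun z => F (z + Pi.single i 1) := by
  unfold ballsExpect
  rw [← (Fin.consEquiv fun _ : Fin (n + 1) => ι).sum_comp, Fintype.sum_prod_type]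
  simp only [Fin.consEquiv, Equiv.coe_fn_mk, occupancy_cons, Fin.prod_univ_succ, Fin.cons_zero,
    Fin.cons_succ, Finset.mul_sum, mul_assoc]

lemma ballsExpect_mono (w : ι → ℝ) (n : ℕ) {F G : (ι → ℕ) → ℝ≥0∞} (h : F ≤ G) :
    ballsExpect w n F ≤ ballsExpect w n G :=
  Finset.sum_le_sum fun T _ => by gcongr; exact h _

lemma ballsExpect_monotone {w : ι → ℝ} (hw : w ∈ stdSimplex ℝ ι) {F : (ι → ℕ) → ℝ≥0∞}
    (hF : Monotone F) : Monotone fun n => ballsExpect w n F :=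
  monotone_nat_of_le_succ fun n => by
    rw [ballsExpect_succ, ← one_mul (ballsExpect w n F), ← sum_ofReal_of_mem_stdSimplex hw,
      Finset.sum_mul]
    gcongr with i
    exact ballsExpect_mono w n fun z => hF le_self_add

lemma ballsExpect_antitone {w : ι → ℝ} (hw : w ∈ stdSimplex ℝ ι) {F : (ι → ℕ) → ℝ≥0∞}
    (hF : Antitone F) : Antitone fun n => ballsExpect w n F :=
  antitone_nat_of_succ_le fun n => by
    rw [ballsExpect_succ, ← one_mul (ballsExpect w n F), ← sum_ofReal_of_mem_stdSimplex hw,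
      Finset.sum_mul]
    gcongr with i
    exact ballsExpect_mono w n fun z => hF le_self_add

lemma ballsExpect_map {w : ι → ℝ} (hw : ∀ i, 0 ≤ w i) (g : ι → κ) (n : ℕ)
    (F : (κ → ℕ) → ℝ≥0∞) :
    ballsExpect w n (fun z => F fun c => ∑ i with g i = c, z i) =
      ballsExpect (fun c => ∑ i with g i = c, w i) n F := by
  induction n generalizing F with
  | zero =>
    simp only [ballsExpect_zero, Pi.zero_apply, sum_const_zero]
    rfl
  | succ n ih =>
    have hpush (z : ι → ℕ) (i : ι) : (fun c => ∑ i' with g i' = c, (z + Pi.single i 1 : ι → ℕ) i') =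
        (fun c => ∑ i' with g i' = c, z i') + Pi.single (g i) 1 := by
      funext c
      simp only [Pi.add_apply, Finset.sum_add_distrib, Finset.sum_pi_single', mem_filter, mem_univ,
        true_and]
      rw [Pi.single_apply]
      exact congrArg _ (if_congr eq_comm rfl rfl)
    rw [ballsExpect_succ, ballsExpect_succ, ← Finset.sum_fiberwise _ g]
    refine Finset.sum_congr rfl fun c _ => ?_
    rw [ENNReal.ofReal_sum_of_nonneg fun i _ => hw i, Finset.sum_mul]
    refine Finset.sum_congr rfl fun i hi => ?_
    simp only [hpush, (mem_filter.1 hi).2]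
    exact congrArg _ (ih fun z => F (z + Pi.single c 1))

/-- Independent `Po(ν w i)` variables conditioned to have sum `n` are the occupancies of `n`
balls. -/
lemma poissonExpect_ind_sum_eq {w : ι → ℝ} (hw : w ∈ stdSimplex ℝ ι) {ν : ℝ} (hν : 0 ≤ ν)
    (n : ℕ) (F : (ι → ℕ) → ℝ≥0∞) :
    poissonExpect (fun i => ν * w i) (fun z => ENNReal.ofReal (ind (∑ i, z i = n)) * F z) =
      poissonWeight ν n * ballsExpect w n F := by
  induction n generalizing F with
  | zero =>
    have hne (z : ι → ℕ) (hz : z ≠ 0) : ¬∑ i, z i = 0 := fun h =>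
      hz (funext fun i => Finset.sum_eq_zero_iff.1 h i (mem_univ i))
    rw [ballsExpect_zero, poissonExpect, tsum_eq_single 0 fun z hz => by
      rw [ofReal_ind_of_false (hne z hz), zero_mul, mul_zero],
      ofReal_ind_of_true (by simp only [Pi.zero_apply, sum_const_zero]), one_mul]
    exact congrArg (· * F 0) (prod_poissonWeight_zero hw hν)
  | succ n ih =>
    have hcount (z : ι → ℕ) : ((n + 1 : ℕ) : ℝ≥0∞) *
        (ENNReal.ofReal (ind (∑ i, z i = n + 1)) * F z) =
        ∑ i, z i * (ENNReal.ofReal (ind (∑ i, z i = n + 1)) * F z) := by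
      rw [← Finset.sum_mul, ← Nat.cast_sum]
      by_cases h : ∑ i, z i = n + 1
      · rw [h]
      · rw [ofReal_ind_of_false h, zero_mul, mul_zero, mul_zero]
    have hsum (z : ι → ℕ) (i : ι) :
        (∑ j, (z + Pi.single i 1 : ι → ℕ) j = n + 1) ↔ ∑ j, z j = n := by
      simp only [Pi.add_apply, Finset.sum_add_distrib, Finset.sum_pi_single', mem_univ, if_true,
        add_left_inj]
    refine (ENNReal.mul_right_inj (a := (n + 1 : ℕ)) (by simp) (ENNReal.natCast_ne_top _)).1 ?_
    rw [← poissonExpect_const_mul, ← mul_assoc, succ_mul_poissonWeight_succ hν, ballsExpect_succ,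
      Finset.mul_sum]
    simp only [hcount, poissonExpect_sum]
    refine Finset.sum_congr rfl fun i _ => ?_
    rw [poissonExpect_apply_mul i (mul_nonneg hν (hw.1 i))]
    simp only [hsum, ih fun z => F (z + Pi.single i 1), ENNReal.ofReal_mul hν]
    ring

lemma poissonExpect_eq_tsum_ballsExpect {w : ι → ℝ} (hw : w ∈ stdSimplex ℝ ι) {ν : ℝ}
    (hν : 0 ≤ ν) (F : (ι → ℕ) → ℝ≥0∞) :
    poissonExpect (fun i => ν * w i) F = ∑' n, poissonWeight ν n * ballsExpect w n F := by
  have hsum (z : ι → ℕ) : ∑' n, ENNReal.ofReal (ind (∑ i, z i = n)) * F z = F z := by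
    rw [tsum_eq_single (∑ i, z i) fun n hn => by rw [ofReal_ind_of_false hn.symm, zero_mul],
      ofReal_ind_of_true rfl, one_mul]
  simp only [← poissonExpect_ind_sum_eq hw hν, poissonExpect]
  rw [ENNReal.tsum_comm]
  simp only [ENNReal.tsum_mul_left, hsum]

lemma ballsExpect_comp [DecidableEq α] {w : ι → ℝ} (hw : w ∈ stdSimplex ℝ ι) {f : α → ι}
    (hf : f.Injective) (n : ℕ) (F : (α → ℕ) → ℝ≥0∞) :
    ballsExpect w n (fun z => F (z ∘ f)) =
      ballsExpect (mergedWeight w f) n fun z => F (z ∘ some) := by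
  have hw' : mergedWeight w f = fun c => ∑ i with Function.partialInv f i = c, w i :=
    funext (mergedWeight_eq_sum hw hf)
  rw [hw', ← ballsExpect_map hw.1]
  simp only [Function.comp_def, sum_partialInv_eq_some hf]

lemma tsum_poissonWeight_mul_ballsExpect_comp {w : ι → ℝ} (hw : w ∈ stdSimplex ℝ ι) {f : α → ι}
    (hf : f.Injective) {ν : ℝ} (hν : 0 ≤ ν) (F : (α → ℕ) → ℝ≥0∞) :
    ∑' n, poissonWeight ν n * ballsExpect w n (fun z => F (z ∘ f)) =
      poissonExpect (fun a => ν * w (f a)) F := by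
  classical
  have hw' := mergedWeight_mem_stdSimplex hw hf
  simp only [ballsExpect_comp hw hf]
  rw [← poissonExpect_eq_tsum_ballsExpect hw' hν, poissonExpect_option _ fun _ z => F z]
  simp only [ENNReal.tsum_mul_right, tsum_poissonWeight (mul_nonneg hν (hw'.1 none)), one_mul]
  rfl

/-- Fixing the total number of balls only constrains the merged bin once the others are known,
which costs at most the largest Poisson weight of the merged bin. -/
lemma poissonWeight_mul_ballsExpect_comp_le {w : ι → ℝ} (hw : w ∈ stdSimplex ℝ ι) {f : α → ι}
    (hf : f.Injective) {ν : ℝ} (hν : 0 ≤ ν) {C : ℝ≥0∞}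
    (hC : ∀ c, poissonWeight (ν * (1 - ∑ a, w (f a))) c ≤ C) (n : ℕ) (F : (α → ℕ) → ℝ≥0∞) :
    poissonWeight ν n * ballsExpect w n (fun z => F (z ∘ f)) ≤
      C * poissonExpect (fun a => ν * w (f a)) F := by
  classical
  have hcount (z : α → ℕ) : ∑' c, poissonWeight (ν * mergedWeight w f none) c *
      (ENNReal.ofReal (ind (c + ∑ a, z a = n)) * F z) ≤ C * F z := by
    rw [tsum_eq_single (n - ∑ a, z a) fun c hc => by
      rw [ofReal_ind_of_false (by omega), zero_mul, mul_zero]]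
    gcongr
    · exact hC _
    · by_cases h : n - ∑ a, z a + ∑ a, z a = n
      · rw [ofReal_ind_of_true h, one_mul]
      · rw [ofReal_ind_of_false h, zero_mul]
        exact zero_le
  rw [ballsExpect_comp hw hf, ← poissonExpect_ind_sum_eq (mergedWeight_mem_stdSimplex hw hf) hν,
    ← poissonExpect_const_mul]
  simp only [Fintype.sum_option]
  refine (poissonExpect_option _ fun c z =>
    ENNReal.ofReal (ind (c + ∑ a, z a = n)) * F z).trans_le ?_
  exact ENNReal.tsum_le_tsum fun z => mul_le_mul_right (hcount z) _

/-- Chernoff's inequality, for a one-sided sequence in place of a tail event. -/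
lemma tsum_poissonWeight_mul_le {ν : ℝ} (hν : 0 ≤ ν) (τ : ℝ) (n : ℕ) (b : ℕ → ℝ≥0∞)
    (hb : ∀ j : ℕ, b j ≤ b n ∨ 0 ≤ τ * ((j : ℝ) - n)) :
    ∑' j, poissonWeight ν j * b j ≤ b n +
      ENNReal.ofReal (rexp (ν * (rexp τ - 1) - τ * n)) *
        ∑' j, poissonWeight (ν * rexp τ) j * b j := by
  have htilt (j : ℕ) : ENNReal.ofReal (rexp (ν * (rexp τ - 1) - τ * n)) *
      poissonWeight (ν * rexp τ) j =
      poissonWeight ν j * ENNReal.ofReal (rexp (τ * ((j : ℝ) - n))) := by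
    rw [sub_eq_add_neg, Real.exp_add, ENNReal.ofReal_mul (Real.exp_nonneg _), mul_right_comm,
      ← poissonWeight_mul_exp hν, mul_assoc, ← ENNReal.ofReal_mul (Real.exp_nonneg _),
      ← Real.exp_add]
    ring_nf
  calc ∑' j, poissonWeight ν j * b j
      ≤ ∑' j, (poissonWeight ν j * b n + ENNReal.ofReal (rexp (ν * (rexp τ - 1) - τ * n)) *
          (poissonWeight (ν * rexp τ) j * b j)) := ENNReal.tsum_le_tsum fun j => by
        rcases hb j with h | h
        · exact le_add_right (mul_le_mul_right h _)
        · refine le_add_left ?_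
          rw [← mul_assoc, htilt]
          gcongr
          refine le_mul_of_one_le_right (zero_le) ?_
          exact ENNReal.one_le_ofReal.2 (Real.one_le_exp h)
    _ = _ := by
        rw [ENNReal.tsum_add, ENNReal.tsum_mul_right, ENNReal.tsum_mul_left, tsum_poissonWeight hν,
          one_mul]

end BallsInBins

section BallsProb

variable {ι : Type*} [Fintype ι] {w : ι → ℝ} {n : ℕ}

lemma sum_prod_of_mem_stdSimplex (hw : w ∈ stdSimplex ℝ ι) (n : ℕ) :
    ∑ T : Fin n → ι, ∏ j, w (T j) = 1 := by
  rw [← Fintype.piFinset_univ, ← Finset.prod_univ_sum, hw.2, prod_const_one]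

variable [DecidableEq ι]

/-- The probability that the occupancies of `n` independent balls, each placed in bin `i` with
probability `w i`, satisfy `P`. -/
noncomputable def ballsProb (w : ι → ℝ) (n : ℕ) (P : (ι → ℕ) → Prop) : ℝ :=
  ∑ T : Fin n → ι, (∏ j, w (T j)) * ind (P (occupancy T))

lemma ballsProb_nonneg (hw : ∀ i, 0 ≤ w i) (P : (ι → ℕ) → Prop) : 0 ≤ ballsProb w n P :=
  Finset.sum_nonneg fun _ _ => mul_nonneg (Finset.prod_nonneg fun _ _ => hw _) ind_nonneg

lemma ballsProb_mono (hw : ∀ i, 0 ≤ w i) {P Q : (ι → ℕ) → Prop}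
    (h : ∀ T : Fin n → ι, P (occupancy T) → Q (occupancy T)) :
    ballsProb w n P ≤ ballsProb w n Q :=
  Finset.sum_le_sum fun T _ =>
    mul_le_mul_of_nonneg_left (ind_mono (h T)) (Finset.prod_nonneg fun _ _ => hw _)

lemma ofReal_ballsProb (hw : ∀ i, 0 ≤ w i) (n : ℕ) (P : (ι → ℕ) → Prop) :
    ENNReal.ofReal (ballsProb w n P) = ballsExpect w n fun z => ENNReal.ofReal (ind (P z)) := by
  have hprod (T : Fin n → ι) : 0 ≤ ∏ j, w (T j) := Finset.prod_nonneg fun _ _ => hw _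
  rw [ballsProb, ENNReal.ofReal_sum_of_nonneg fun T _ => mul_nonneg (hprod T) ind_nonneg]
  simp only [ballsExpect, ENNReal.ofReal_mul (hprod _),
    ENNReal.ofReal_prod_of_nonneg fun _ _ => hw _]

lemma poissonP_mul_ballsProb_comp_le {α : Type*} [Fintype α]
    (hw : w ∈ stdSimplex ℝ ι) {f : α → ι} (hf : f.Injective) {ν : ℝ} (hν : 0 ≤ ν) {C : ℝ}
    (hC : ∀ c, poissonP (ν * (1 - ∑ a, w (f a))) c ≤ C) (n : ℕ) (P : (α → ℕ) → Prop) {B : ℝ}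
    (hP : poissonExpect (fun a => ν * w (f a)) (fun z => ENNReal.ofReal (ind (P z))) =
      ENNReal.ofReal B) (hB : 0 ≤ B) :
    poissonP ν n * ballsProb w n (fun z => P (z ∘ f)) ≤ C * B := by
  have hrest : 0 ≤ 1 - ∑ a, w (f a) := (mergedWeight_mem_stdSimplex hw hf).1 none
  have hC0 : 0 ≤ C := (poissonP_nonneg (mul_nonneg hν hrest) 0).trans (hC 0)
  have hle := poissonWeight_mul_ballsExpect_comp_le hw hf hν
    (fun c => ENNReal.ofReal_le_ofReal (hC c)) n fun z => ENNReal.ofReal (ind (P z))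
  rwa [hP, ← ofReal_ballsProb hw.1 n fun z => P (z ∘ f), poissonWeight,
    ← ENNReal.ofReal_mul (poissonP_nonneg hν n), ← ENNReal.ofReal_mul hC0,
    ENNReal.ofReal_le_ofReal_iff (mul_nonneg hC0 hB)] at hle

lemma poissonExpect_survives_and_survives {a b : ℕ → ℝ} {L M : ℕ} (ha : ∀ i < L, 0 ≤ a i)
    (hb : ∀ i < M, 0 ≤ b i) :
    poissonExpect (Sum.elim (fun i : Fin L => a i) fun i : Fin M => b i)
        (fun z => ENNReal.ofReal
          (ind (Survives 1 1 (z ∘ Sum.inl) ∧ Survives (-1) 0 (z ∘ Sum.inr)))) =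
      ENNReal.ofReal (survivalProb 1 a L * survivalProb (-1) b M) := by
  simp only [ind_and, ENNReal.ofReal_mul ind_nonneg]
  rw [poissonExpect_sumType_mul _ (fun z => ENNReal.ofReal (ind (Survives 1 1 z)))
      (fun z => ENNReal.ofReal (ind (Survives (-1) 0 z))), Sum.elim_comp_inl, Sum.elim_comp_inr,
    poissonExpect_survives, poissonExpect_survives, ENNReal.ofReal_mul survivalProb_nonneg,
    ofReal_survivalProb ha, ofReal_survivalProb hb]
  rfl

/-- De-Poissonization: the survival probability of a Poisson walk is at most that of the walk
driven by exactly `n` balls, up to a large deviation term. -/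
lemma survivalProb_le_ballsProb_add (hw : w ∈ stdSimplex ℝ ι) {m : ℕ} {f : Fin m → ι}
    (hf : f.Injective) {u : ℕ → ℝ} (hu : ∀ i : Fin m, w (f i) = u i) {σ : ℤ} (hσ : σ = 1 ∨ σ = -1)
    {ν τ : ℝ} (hν : 0 ≤ ν) (hτ : 0 ≤ σ * τ) (n : ℕ) :
    survivalProb σ (fun i => ν * u i) m ≤
      ballsProb w n (fun z => Survives σ (max σ 0) (z ∘ f)) +
        rexp (ν * (rexp τ - 1) - τ * n) * survivalProb σ (fun i => ν * rexp τ * u i) m := by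
  have hsurv {ν : ℝ} (hν : 0 ≤ ν) : ENNReal.ofReal (survivalProb σ (fun i => ν * u i) m) =
      ∑' j, poissonWeight ν j *
        ENNReal.ofReal (ballsProb w j fun z => Survives σ (max σ 0) (z ∘ f)) := by
    rw [ofReal_survivalProb fun i hi => mul_nonneg hν (hu ⟨i, hi⟩ ▸ hw.1 _),
      ← poissonExpect_survives]
    simp only [ofReal_ballsProb hw.1, ← hu]
    exact (tsum_poissonWeight_mul_ballsExpect_comp hw hf hν fun z =>
      ENNReal.ofReal (ind (Survives σ (max σ 0) z))).symm
  have hone_side (j : ℕ) :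
      ENNReal.ofReal (ballsProb w j fun z => Survives σ (max σ 0) (z ∘ f)) ≤
        ENNReal.ofReal (ballsProb w n fun z => Survives σ (max σ 0) (z ∘ f)) ∨
      0 ≤ τ * ((j : ℝ) - n) := by
    simp only [ofReal_ballsProb hw.1]
    rcases hσ with rfl | rfl <;> push_cast at hτ <;> rcases le_total j n with h | h
    · exact .inl (ballsExpect_monotone hw (fun z z' hz => ENNReal.ofReal_le_ofReal <| ind_mono <|
        survives_mono zero_le_one fun i => hz (f i)) h)
    · exact .inr (mul_nonneg (by linarith) (sub_nonneg.2 (by exact_mod_cast h)))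
    · exact .inr (mul_nonneg_of_nonpos_of_nonpos (by linarith)
        (sub_nonpos.2 (by exact_mod_cast h)))
    · exact .inl (ballsExpect_antitone hw (fun z z' hz => ENNReal.ofReal_le_ofReal <| ind_mono <|
        survives_anti (by decide) fun i => hz (f i)) h)
  have hmul := tsum_poissonWeight_mul_le hν τ n _ hone_side
  rw [← hsurv hν, ← hsurv (by positivity), ← ENNReal.ofReal_mul (Real.exp_nonneg _),
    ← ENNReal.ofReal_add (ballsProb_nonneg hw.1 _)
      (mul_nonneg (Real.exp_nonneg _) survivalProb_nonneg)] at hmul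
  refine (ENNReal.ofReal_le_ofReal_iff (add_nonneg (ballsProb_nonneg hw.1 _)
      (mul_nonneg (Real.exp_nonneg _) survivalProb_nonneg))).1 hmul

end BallsProb

section Correlation

variable {ι : Type*} [LinearOrder ι] [Fintype ι] {w : ι → ℝ} {n : ℕ}

/-- Product measures on a product of chains are log-modular, so the FKG inequality applies, here
to decreasing events. -/
lemma ballsProb_mul_ballsProb_le (hw : w ∈ stdSimplex ℝ ι) {P Q : (ι → ℕ) → Prop}
    (hP : ∀ ⦃T T' : Fin n → ι⦄, T ≤ T' → P (occupancy T') → P (occupancy T))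
    (hQ : ∀ ⦃T T' : Fin n → ι⦄, T ≤ T' → Q (occupancy T') → Q (occupancy T)) :
    ballsProb w n P * ballsProb w n Q ≤ ballsProb w n fun z => P z ∧ Q z := by
  have hmod (T T' : Fin n → ι) :
      (∏ j, w (T j)) * ∏ j, w (T' j) ≤ (∏ j, w ((T ⊔ T') j)) * ∏ j, w ((T ⊓ T') j) := by
    simp only [← Finset.prod_mul_distrib, Pi.sup_apply, Pi.inf_apply]
    refine (Finset.prod_congr rfl fun j _ => ?_).le
    rcases le_total (T j) (T' j) with h | h
    · rw [sup_eq_right.2 h, inf_eq_left.2 h, mul_comm]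
    · rw [sup_eq_left.2 h, inf_eq_right.2 h]
  have hfkg := fkg (α := (Fin n → ι)ᵒᵈ) (μ := fun T => ∏ j, w (OrderDual.ofDual T j))
    (f := fun T => ind (P (occupancy (OrderDual.ofDual T))))
    (g := fun T => ind (Q (occupancy (OrderDual.ofDual T))))
    (fun _ => Finset.prod_nonneg fun _ _ => hw.1 _) (fun _ => ind_nonneg) (fun _ => ind_nonneg)
    (fun _ _ h => ind_mono (hP h)) (fun _ _ h => ind_mono (hQ h)) hmod
  have hone : ∑ T : (Fin n → ι)ᵒᵈ, ∏ j, w (OrderDual.ofDual T j) = 1 :=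
    sum_prod_of_mem_stdSimplex hw n
  rw [hone, one_mul] at hfkg
  simp only [ballsProb, ind_and]
  exact hfkg

end Correlation

section Tree

variable {m k n : ℕ}

lemma sum_occupancy_comp {ι α : Type*} [DecidableEq ι] (T : Fin n → ι) (f : α ↪ ι)
    (A : Finset α) : ∑ i ∈ A, occupancy T (f i) = #{j | T j ∈ A.map f} := by
  rw [← Finset.sum_map A f (occupancy T)]
  exact Finset.sum_card_fiberwise_eq_card_filter univ (A.map f) T

lemma card_filter_lt_antitone {T T' : Fin n → Fin k} (h : T ≤ T') (t : ℕ) :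
    #{j | (T' j : ℕ) < t} ≤ #{j | (T j : ℕ) < t} :=
  Finset.card_le_card (Finset.monotone_filter_right _ fun j _ => (Fin.val_fin_le.2 (h j)).trans_lt)

lemma survives_occupancy_castLE (h : m ≤ k) (T : Fin n → Fin k) :
    Survives 1 1 (occupancy T ∘ Fin.castLE h) ↔
      ∀ t, 1 ≤ t → t ≤ m → t ≤ #{j | (T j : ℕ) < t} := by
  refine forall₃_congr fun t _ ht => ?_
  have hcount := sum_occupancy_comp T (Fin.castLEEmb h) (univ.filter fun i : Fin m => (i : ℕ) < t)
  have hfilter : univ.filter (fun j => T j ∈ (univ.filter fun i : Fin m => (i : ℕ) < t).map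
      (Fin.castLEEmb h)) = univ.filter fun j => (T j : ℕ) < t := by
    refine Finset.filter_congr fun j _ => ?_
    simp only [Finset.mem_map, mem_filter, mem_univ, true_and, Fin.ext_iff]
    exact ⟨fun ⟨_, hi, hij⟩ => hij ▸ hi, fun hj => ⟨⟨T j, hj.trans_le ht⟩, hj, rfl⟩⟩
  rw [hfilter] at hcount
  simp only [Function.comp_def, Fin.castLEEmb_apply] at hcount ⊢
  omega

/-- The last `m` bins, read backwards, satisfy the rightwalk condition exactly when the leftwalk
on all `k` bins is positive at the last `m` times: a prefix sum determines the complementary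
suffix sum. -/
lemma survives_occupancy_rev (h : m ≤ k) (T : Fin (k - 1) → Fin k) :
    Survives (-1) 0 (occupancy T ∘ Fin.rev ∘ Fin.castLE h) ↔
      ∀ t, k - m ≤ t → t < k → t ≤ #{j | (T j : ℕ) < t} := by
  have hcount {t : ℕ} (ht : t ≤ m) : ∑ i ∈ univ.filter fun i : Fin m => (i : ℕ) < t,
      (occupancy T ∘ Fin.rev ∘ Fin.castLE h) i + #{j | (T j : ℕ) < k - t} = k - 1 := by
    have hsum := sum_occupancy_comp T ((Fin.castLEEmb h).trans Fin.revPerm.toEmbedding)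
      (univ.filter fun i : Fin m => (i : ℕ) < t)
    have hfilter : univ.filter (fun j => T j ∈ (univ.filter fun i : Fin m => (i : ℕ) < t).map
        ((Fin.castLEEmb h).trans Fin.revPerm.toEmbedding)) =
        univ.filter fun j => ¬(T j : ℕ) < k - t := by
      refine Finset.filter_congr fun j _ => ?_
      simp only [Finset.mem_map, mem_filter, mem_univ, true_and, Fin.ext_iff]
      refine ⟨fun ⟨i, hi, hij⟩ => ?_, fun hj => ⟨⟨k - 1 - T j, by omega⟩, by dsimp; omega, ?_⟩⟩
      · have : k - (i + 1) = (T j : ℕ) := hij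
        omega
      · change k - (k - 1 - T j + 1) = (T j : ℕ)
        omega
    have htotal := Finset.card_filter_add_card_filter_not (s := univ) fun j => (T j : ℕ) < k - t
    rw [hfilter] at hsum
    rw [Finset.card_univ, Fintype.card_fin, ← hsum, add_comm] at htotal
    exact htotal
  constructor
  · intro hT t h1 h2
    have := hT (k - t) (by omega) (by omega)
    have := hcount (t := k - t) (by omega)
    rw [Nat.sub_sub_self h2.le] at this
    omega
  · intro hT t h1 h2
    have := hT (k - t) (by omega) (by omega)
    have := hcount h2
    omega

/-- The probability of the event TREE when the `k - 1` balls are placed in bin `i` with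
probability `v i`. -/
noncomputable def treeMass (k : ℕ) (v : ℕ → ℝ) : ℝ :=
  ballsProb (fun i : Fin k => v i) (k - 1)
    fun z => Survives 1 1 (z ∘ Fin.castLE (Nat.sub_le k 1))

variable {v : ℕ → ℝ} (hv : (fun i : Fin k => v i) ∈ stdSimplex ℝ (Fin k))
include hv

lemma ballsProb_mul_ballsProb_le_treeMass (hm : m ≤ k) :
    ballsProb (fun i : Fin k => v i) (k - 1) (fun z => Survives 1 1 (z ∘ Fin.castLE hm)) *
        ballsProb (fun i : Fin k => v i) (k - 1)
          (fun z => Survives (-1) 0 (z ∘ Fin.rev ∘ Fin.castLE (Nat.sub_le k m))) ≤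
      treeMass k v := by
  refine (ballsProb_mul_ballsProb_le hv (fun T T' hT => ?_) fun T T' hT => ?_).trans
    (ballsProb_mono hv.1 fun T => ?_)
  · simp only [survives_occupancy_castLE]
    exact forall₃_imp fun t _ _ h => h.trans (card_filter_lt_antitone hT t)
  · simp only [survives_occupancy_rev]
    exact forall₃_imp fun t _ _ h => h.trans (card_filter_lt_antitone hT t)
  · simp only [survives_occupancy_castLE, survives_occupancy_rev]
    rintro ⟨hleft, hright⟩ t h1 h2
    rcases le_total t m with ht | ht
    · exact hleft t h1 ht
    · exact hright t (by omega) (by omega)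

lemma treeMass_le {L : ℕ} (hL : L < k) :
    treeMass k v ≤ ballsProb (fun i : Fin k => v i) (k - 1) fun z =>
      Survives 1 1 (z ∘ Fin.castLE hL.le) ∧ Survives (-1) 0 (z ∘ Fin.rev ∘ Fin.castLE hL.le) := by
  refine ballsProb_mono hv.1 fun T => ?_
  simp only [survives_occupancy_castLE, survives_occupancy_rev]
  exact fun h => ⟨fun t h1 h2 => h t h1 (by omega), fun t h1 h2 => h t (by omega) (by omega)⟩

lemma poissonP_mul_treeMass_le {L : ℕ} (hL : 2 * L < k) {C : ℝ}
    (hC : ∀ c, poissonP ((k - 1 : ℕ) * (1 - (∑ i ∈ range L, v i + ∑ i ∈ range L, v (k - 1 - i)))) c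
      ≤ C) :
    poissonP (k - 1 : ℕ) (k - 1) * treeMass k v ≤
      C * (survivalProb 1 (fun i => (k - 1 : ℕ) * v i) L *
        survivalProb (-1) (fun i => (k - 1 : ℕ) * v (k - 1 - i)) L) := by
  have hLk : L < k := by omega
  have hrev (i : Fin L) : (Fin.rev (Fin.castLE hLk.le i) : ℕ) = k - 1 - i := by
    rw [Fin.val_rev, Fin.val_castLE]
    omega
  have hnonneg {i : ℕ} (hi : i < k) : 0 ≤ (k - 1 : ℕ) * v i :=
    mul_nonneg (Nat.cast_nonneg _) (hv.1 ⟨i, hi⟩)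
  set f : Fin L ⊕ Fin L → Fin k := Sum.elim (Fin.castLE hLk.le) (Fin.rev ∘ Fin.castLE hLk.le)
    with hf
  have hinj : f.Injective := by
    refine (Fin.castLE_injective _).sumElim
      (Fin.rev_injective.comp (Fin.castLE_injective _)) fun i j h => ?_
    have := congrArg Fin.val h
    rw [Function.comp_apply, hrev, Fin.val_castLE] at this
    omega
  have hmass : ∑ a, v (f a) = ∑ i ∈ range L, v i + ∑ i ∈ range L, v (k - 1 - i) := by
    simp only [Fintype.sum_sum_type, hf, Sum.elim_inl, Sum.elim_inr, Function.comp_apply, hrev,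
      Fin.val_castLE, Finset.sum_range]
  have hrate : (fun a => (k - 1 : ℕ) * v (f a)) = Sum.elim (fun i : Fin L => (k - 1 : ℕ) * v i)
      fun i : Fin L => (k - 1 : ℕ) * v (k - 1 - i) := by
    refine funext (Sum.rec (fun _ => rfl) fun i => ?_)
    simp only [hf, Sum.elim_inr, Function.comp_apply, hrev]
  have hends := poissonExpect_survives_and_survives (L := L) (M := L)
    (fun i hi => hnonneg (show i < k by omega)) fun i hi => hnonneg (show k - 1 - i < k by omega)
  rw [← hrate] at hends
  calc _ ≤ _ := mul_le_mul_of_nonneg_left (treeMass_le hv hLk)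
        (poissonP_nonneg (Nat.cast_nonneg _) _)
    _ ≤ _ := poissonP_mul_ballsProb_comp_le hv hinj (Nat.cast_nonneg _) (fun c => hmass ▸ hC c)
        _ _ hends (mul_nonneg survivalProb_nonneg survivalProb_nonneg)

end Tree

section PoissonMode

variable {μ : ℝ} {n : ℕ}

lemma poissonP_succ_le (h : μ ≤ n + 1) (hμ : 0 ≤ μ) : poissonP μ (n + 1) ≤ poissonP μ n := by
  refine le_of_mul_le_mul_left ?_ (show (0 : ℝ) < n + 1 by positivity)
  rw [succ_mul_poissonP_succ]
  exact mul_le_mul_of_nonneg_right h (poissonP_nonneg hμ n)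

lemma le_poissonP_succ (h : n + 1 ≤ μ) : poissonP μ n ≤ poissonP μ (n + 1) := by
  have hμ : 0 < μ := (show (0 : ℝ) < n + 1 by positivity).trans_le h
  refine le_of_mul_le_mul_left ?_ hμ
  rw [← succ_mul_poissonP_succ]
  exact mul_le_mul_of_nonneg_right h (poissonP_nonneg hμ.le _)

lemma poissonP_le_poissonP_floor (hμ : 0 ≤ μ) (n : ℕ) : poissonP μ n ≤ poissonP μ ⌊μ⌋₊ := by
  rcases le_total ⌊μ⌋₊ n with h | h
  · induction n, h using Nat.le_induction with
    | base => exact le_rfl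
    | succ n hn ih =>
      refine (poissonP_succ_le ((Nat.lt_floor_add_one μ).le.trans ?_) hμ).trans ih
      exact_mod_cast Nat.succ_le_succ hn
  · induction h using Nat.decreasingInduction with
    | self => exact le_rfl
    | of_succ n hn ih =>
      refine (le_poissonP_succ ?_).trans ih
      exact_mod_cast (Nat.le_floor_iff hμ).1 hn

lemma poissonP_le_poissonP_self (hμ : 0 ≤ μ) (hn : n ≠ 0) : poissonP μ n ≤ poissonP n n := by
  have hn' : (0 : ℝ) < n := by positivity
  have hexp : (μ / n) ^ n ≤ rexp (μ - n) := by
    have h1 : μ / n ≤ rexp (μ / n - 1) := by linarith [Real.add_one_le_exp (μ / n - 1)]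
    refine (pow_le_pow_left₀ (by positivity) h1 n).trans_eq ?_
    rw [← Real.exp_nat_mul, mul_sub, mul_div_cancel₀ _ hn'.ne', mul_one]
  rw [div_pow, div_le_iff₀ (by positivity)] at hexp
  unfold poissonP
  gcongr ?_ / _
  calc rexp (-μ) * μ ^ n ≤ rexp (-μ) * (rexp (μ - n) * n ^ n) := by gcongr
    _ = rexp (-n) * n ^ n := by
      rw [← mul_assoc, ← Real.exp_add]
      ring_nf

lemma poissonP_self_eq (hn : n ≠ 0) : poissonP n n = (√(2 * n) * Stirling.stirlingSeq n)⁻¹ := by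
  have : (0 : ℝ) < n := by positivity
  rw [poissonP, Stirling.stirlingSeq, div_pow, ← Real.exp_nat_mul, mul_one, Real.exp_neg]
  field_simp

lemma poissonP_self_le {m : ℕ} (hm : m ≠ 0) (hmn : m ≤ n) :
    poissonP m m ≤ √(n / m) * poissonP n n := by
  have hn : n ≠ 0 := by omega
  have : (0 : ℝ) < m := by positivity
  have hpos : 0 < Stirling.stirlingSeq n := by
    rw [← Nat.succ_pred hn]
    exact Stirling.stirlingSeq'_pos _
  have hanti : Stirling.stirlingSeq n ≤ Stirling.stirlingSeq m := by
    have h := Stirling.stirlingSeq'_antitone (Nat.pred_le_pred hmn)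
    simpa only [Function.comp_apply, Nat.succ_pred hm, Nat.succ_pred hn] using h
  have hsqrt : √(2 * n) = √(n / m) * √(2 * m) := by
    rw [← Real.sqrt_mul (by positivity)]
    congr 1
    field_simp
  have hratio : √((n : ℝ) / m) ≠ 0 := by positivity
  calc poissonP m m = (√(2 * m) * Stirling.stirlingSeq m)⁻¹ := poissonP_self_eq hm
    _ ≤ (√(2 * m) * Stirling.stirlingSeq n)⁻¹ := by gcongr
    _ = √(n / m) * poissonP n n := by
      rw [poissonP_self_eq hn, hsqrt]
      field_simp

lemma poissonP_le_sqrt_mul_poissonP_self (hμ : 1 ≤ μ) (hμn : μ ≤ n) (c : ℕ) :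
    poissonP μ c ≤ √(n / ⌊μ⌋₊) * poissonP n n := by
  have hμ0 : 0 ≤ μ := zero_le_one.trans hμ
  have hfloor : ⌊μ⌋₊ ≠ 0 := (Nat.floor_pos.2 hμ).ne'
  exact (poissonP_le_poissonP_floor hμ0 c).trans <| (poissonP_le_poissonP_self hμ0 hfloor).trans <|
    poissonP_self_le hfloor (by exact_mod_cast (Nat.floor_le hμ0).trans hμn)

end PoissonMode

section Comparison

variable {σ : ℤ} {k L m M n : ℕ} {δ e : ℝ}

lemma OutwardDrift.iInf_survivalProb_le_ballsProb {ι : Type*} [Fintype ι] [DecidableEq ι]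
    {w : ι → ℝ} (hw : w ∈ stdSimplex ℝ ι) {u : ℕ → ℝ} {f : Fin M → ι} (hf : f.Injective)
    (hu : ∀ i : Fin M, w (f i) = u i) (h : OutwardDrift σ (fun i => n * u i) M δ)
    (he : e ∈ Set.Ioc 0 (1 / 100)) (hL : 32 ≤ e * (L * δ ^ 2)) (hLM : L ≤ M)
    (hnear : ∀ i < L, σ * (u 0 - u i) ≤ e * δ * u 0) (hn : 2 ≤ e ^ 3 * (n * δ ^ 2)) :
    (1 - 12 * e) * ⨅ j, survivalProb σ (fun _ => n * u 0) j ≤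
      ballsProb w n fun z => Survives σ (max σ 0) (z ∘ f) := by
  have hσ := h.sign_mul_self
  have hδ := h.pos
  have he0 := he.1
  have hn0 : (0 : ℝ) < n := by
    rcases n.eq_zero_or_pos with rfl | hn0
    · norm_num at hn
    · exact_mod_cast hn0
  -- this choice makes the error exponent `e * (n * θ ^ 2)` equal to `2`
  set θ := √(2 / (e * n))
  have hsq : θ ^ 2 = 2 / (e * n) := Real.sq_sqrt (by positivity)
  have hθ : θ ∈ Set.Icc 0 (e * δ) := by
    refine ⟨Real.sqrt_nonneg _, Real.sqrt_le_iff.2 ⟨by positivity, ?_⟩⟩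
    rw [div_le_iff₀ (by positivity)]
    linarith
  have hθ4 : θ ∈ Set.Icc 0 (1 / 4) := ⟨hθ.1, by nlinarith [hθ.2, he.2, h.le_one]⟩
  have hdepois := survivalProb_le_ballsProb_add hw hf hu h.sign (τ := σ * θ)
    (mul_nonneg (h.one_sub_pos hθ4).le hn0.le) (by rw [← mul_assoc, hσ, one_mul]; exact hθ.1) n
  refine h.iInf_survivalProb_le he hL hLM (fun i hi => ?_) hθ (N := n) ?_ ?_
  · have := mul_le_mul_of_nonneg_left (hnear i hi) hn0.le
    linarith
  · rw [hsq]
    exact (by field_simp : 2 = e * (n * (2 / (e * n)))).le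
  · convert hdepois using 3 <;> ring_nf

variable {v : ℕ → ℝ}

lemma mul_iInf_survivalProb_le_treeMass (hv : (fun i : Fin k => v i) ∈ stdSimplex ℝ (Fin k))
    (hm : m ≤ k) (hleft : OutwardDrift 1 (fun i => (k - 1 : ℕ) * v i) m δ)
    (hright : OutwardDrift (-1) (fun i => (k - 1 : ℕ) * v (k - 1 - i)) (k - m) δ)
    (he : e ∈ Set.Ioc 0 (1 / 100)) (hL : 32 ≤ e * (L * δ ^ 2)) (hLm : L ≤ m) (hLkm : L ≤ k - m)
    (hfirst : ∀ i < L, v 0 - v i ≤ e * δ * v 0)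
    (hlast : ∀ i < L, v (k - 1 - i) - v (k - 1) ≤ e * δ * v (k - 1))
    (hk : 2 ≤ e ^ 3 * ((k - 1 : ℕ) * δ ^ 2)) :
    (1 - 12 * e) ^ 2 * ((⨅ n, survivalProb 1 (fun _ => (k - 1 : ℕ) * v 0) n) *
        ⨅ n, survivalProb (-1) (fun _ => (k - 1 : ℕ) * v (k - 1)) n) ≤ treeMass k v := by
  have hrev (i : Fin (k - m)) :
      v ((Fin.rev ∘ Fin.castLE (Nat.sub_le k m)) i : Fin k) = v (k - 1 - i) := by
    rw [Function.comp_apply, Fin.val_rev, Fin.val_castLE, Nat.sub_sub, add_comm 1]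
  have hl := hleft.iInf_survivalProb_le_ballsProb hv (Fin.castLE_injective hm)
    (fun i => congrArg v (Fin.val_castLE hm i)) he hL hLm
    (fun i hi => by push_cast; linarith [hfirst i hi]) hk
  have hr := hright.iInf_survivalProb_le_ballsProb (u := fun i => v (k - 1 - i)) hv
    (Fin.rev_injective.comp (Fin.castLE_injective (Nat.sub_le k m))) hrev he hL hLkm
    (fun i hi => by rw [Nat.sub_zero]; push_cast; linarith [hlast i hi]) hk
  refine le_trans ?_ (ballsProb_mul_ballsProb_le_treeMass hv hm)
  have h12 : 0 ≤ 1 - 12 * e := by linarith [he.2]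
  calc _ = ((1 - 12 * e) * ⨅ n, survivalProb 1 (fun _ => (k - 1 : ℕ) * v 0) n) *
        ((1 - 12 * e) * ⨅ n, survivalProb (-1) (fun _ => (k - 1 : ℕ) * v (k - 1 - 0)) n) := by
        rw [Nat.sub_zero]; ring
    _ ≤ _ := mul_le_mul hl hr (mul_nonneg h12 (Real.iInf_nonneg fun _ => survivalProb_nonneg))
      (ballsProb_nonneg hv.1 _)

lemma poissonP_le_of_mass_le {W : ℝ} (he : e ∈ Set.Ioc 0 (1 / 100)) (hW : W ∈ Set.Icc 0 (e / 20))
    (hn : 20 ≤ e * n) (c : ℕ) : poissonP (n * (1 - W)) c ≤ (1 + e) * poissonP n n := by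
  have he0 := he.1
  have hn0 : (0 : ℝ) < n := by nlinarith [he.2]
  have hmean : n - e * n / 20 ≤ n * (1 - W) := by nlinarith [hW.2]
  have hfloor : n * (1 - e / 10) ≤ ⌊n * (1 - W)⌋₊ := by
    linarith [Nat.lt_floor_add_one (n * (1 - W))]
  have hfloor0 : (0 : ℝ) < ⌊n * (1 - W)⌋₊ := by nlinarith [he.2]
  refine (poissonP_le_sqrt_mul_poissonP_self (by nlinarith [he.2]) (by nlinarith [hW.1]) c).trans
    (mul_le_mul_of_nonneg_right ?_ (poissonP_nonneg hn0.le n))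
  refine Real.sqrt_le_iff.2 ⟨by positivity, ?_⟩
  rw [div_le_iff₀ hfloor0]
  nlinarith [mul_le_mul_of_nonneg_left hfloor (sq_nonneg (1 + e)), mul_pos he0 hn0,
    mul_pos (mul_pos he0 he0) hn0, he.2]

lemma treeMass_le_mul_iInf_survivalProb (hv : (fun i : Fin k => v i) ∈ stdSimplex ℝ (Fin k))
    (hleft : OutwardDrift 1 (fun i => (k - 1 : ℕ) * v i) m δ)
    (hright : OutwardDrift (-1) (fun i => (k - 1 : ℕ) * v (k - 1 - i)) M δ)
    (he : e ∈ Set.Ioc 0 (1 / 100)) (hL : 32 ≤ e * (L * δ ^ 2)) (hLk : 2 * L < k)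
    (hends : ∑ i ∈ range L, v i + ∑ i ∈ range L, v (k - 1 - i) ≤ e / 20)
    (hk : 20 ≤ e * (k - 1 : ℕ)) :
    treeMass k v ≤ (1 + e) ^ 3 * ((⨅ n, survivalProb 1 (fun _ => (k - 1 : ℕ) * v 0) n) *
        ⨅ n, survivalProb (-1) (fun _ => (k - 1 : ℕ) * v (k - 1)) n) := by
  have he0 := he.1
  have hv0 (i : ℕ) (hi : i < k) : 0 ≤ v i := hv.1 ⟨i, hi⟩
  have hconst {σ : ℤ} {r : ℕ → ℝ} {M : ℕ} (h : OutwardDrift σ r M δ) :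
      survivalProb σ r L ≤ (1 + e) * ⨅ n, survivalProb σ (fun _ => r 0) n :=
    (survivalProb_mono_rate (fun i _ => h.nonneg i) (fun _ _ => h.nonneg 0)
      fun i _ => h.antitone i.zero_le).trans (h.survivalProb_le_iInf he hL)
  have hmid := poissonP_mul_treeMass_le hv hLk <| poissonP_le_of_mass_le he
    ⟨add_nonneg (Finset.sum_nonneg fun i hi => hv0 i (by have := mem_range.1 hi; omega))
      (Finset.sum_nonneg fun i _ => hv0 _ (by omega)), hends⟩ hk
  have hpos : 0 < poissonP (k - 1 : ℕ) (k - 1) :=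
    poissonP_pos (by nlinarith [he.2]) _
  rw [mul_comm (1 + e), mul_assoc] at hmid
  refine (le_of_mul_le_mul_left hmid hpos).trans ?_
  have hright0 := hconst hright
  rw [Nat.sub_zero] at hright0
  calc _ ≤ (1 + e) * (((1 + e) * ⨅ n, survivalProb 1 (fun _ => (k - 1 : ℕ) * v 0) n) *
        ((1 + e) * ⨅ n, survivalProb (-1) (fun _ => (k - 1 : ℕ) * v (k - 1)) n)) := by
        refine mul_le_mul_of_nonneg_left (mul_le_mul (hconst hleft) hright0 survivalProb_nonneg ?_)
          (by positivity)
        exact mul_nonneg (by positivity) (Real.iInf_nonneg fun _ => survivalProb_nonneg)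
    _ = _ := by ring

end Comparison

section BinWeight

/-- The probability that a ball with the truncated geometric distribution on `{1, …, k}` falls into
bin `i + 1`. -/
noncomputable def binWeight (k : ℕ) (p : ℝ) (i : ℕ) : ℝ := p * (1 - p) ^ i / (1 - (1 - p) ^ k)

lemma treeProb_eq_treeMass (k : ℕ) (p : ℝ) : treeProb k p = treeMass k (binWeight k p) := by
  refine Finset.sum_congr rfl fun T _ => ?_
  simp only [survives_occupancy_castLE]
  rfl

variable {k : ℕ} {p s : ℝ}

lemma sum_range_binWeight (t : ℕ) :
    ∑ i ∈ range t, binWeight k p i = (1 - (1 - p) ^ t) / (1 - (1 - p) ^ k) := by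
  simp only [binWeight]
  rw [← Finset.sum_div, ← Finset.mul_sum, ← mul_neg_geom_sum (1 - p) t, sub_sub_cancel]

lemma one_sub_pow_mul_le_one (hp : p ∈ Set.Ioo 0 1) (n : ℕ) : (1 - p) ^ n * (1 + n * p) ≤ 1 :=
  calc (1 - p) ^ n * (1 + n * p) ≤ (1 - p) ^ n * (1 + p) ^ n := by
        refine mul_le_mul_of_nonneg_left ?_ (pow_nonneg (by linarith [hp.2]) n)
        exact one_add_mul_le_pow (by linarith [hp.1]) n
    _ = (1 - p ^ 2) ^ n := by rw [← mul_pow]; ring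
    _ ≤ 1 := pow_le_one₀ (by nlinarith [hp.1, hp.2]) (by nlinarith [hp.1])

lemma twenty_le_mul {e : ℝ} (he : e ∈ Set.Ioc 0 (1 / 100)) (hs : s ∈ Set.Ioc 0 1)
    (hk : 5 * 10 ^ 6 ≤ e ^ 3 * (k * s ^ 2)) : 20 ≤ k * s := by
  have he3 : e ^ 3 ≤ 1 := pow_le_one₀ he.1.le (by linarith [he.2])
  calc (20 : ℝ) ≤ e ^ 3 * (k * s ^ 2) := by linarith
    _ = k * s * (e ^ 3 * s) := by ring
    _ ≤ k * s := mul_le_of_le_one_right (mul_nonneg k.cast_nonneg hs.1.le)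
        (mul_le_one₀ he3 hs.1.le hs.2)

lemma exists_end_length {e : ℝ} (he : e ∈ Set.Ioc 0 (1 / 100)) (hs : s ∈ Set.Ioc 0 1)
    (hk : 5 * 10 ^ 6 ≤ e * (k * s ^ 2)) (hps : 5 * 10 ^ 6 * p ≤ e ^ 3 * s ^ 3) :
    ∃ L : ℕ, 32 ≤ e * (L * (s / 40) ^ 2) ∧ L * p ≤ e * (s / 40) / 2 ∧ 2 * L < k := by
  have he0 := he.1
  have hs0 := hs.1
  have hes : e * s ^ 2 ≤ 1 := mul_le_one₀ (by linarith [he.2]) (sq_nonneg s)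
    (pow_le_one₀ hs0.le hs.2)
  have hlow : 51200 / (e * s ^ 2) ≤ ⌈51200 / (e * s ^ 2)⌉₊ := Nat.le_ceil _
  have hup : (⌈51200 / (e * s ^ 2)⌉₊ : ℝ) ≤ 51201 / (e * s ^ 2) := by
    refine (Nat.ceil_lt_add_one (by positivity)).le.trans ?_
    rw [div_add_one (by positivity)]
    gcongr
    linarith
  set L := ⌈51200 / (e * s ^ 2)⌉₊
  rw [div_le_iff₀ (by positivity)] at hlow
  rw [le_div_iff₀ (by positivity)] at hup
  refine ⟨L, by linarith, ?_, ?_⟩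
  · have hup2 : L * (e * s ^ 2) * (e ^ 2 * s) ≤ 51201 * (e * s) :=
      mul_le_mul hup (mul_le_mul_of_nonneg_right (pow_le_of_le_one he0.le (by linarith [he.2])
        two_ne_zero) hs0.le) (by positivity) (by norm_num)
    linarith [mul_le_mul_of_nonneg_left hps (Nat.cast_nonneg (α := ℝ) L), mul_pos he0 hs0]
  · have : (2 : ℝ) * L < k := lt_of_mul_lt_mul_right (by linarith) (by positivity : 0 ≤ e * s ^ 2)
    exact_mod_cast this

variable (hp : p ∈ Set.Ioo 0 1)
include hp

lemma one_sub_pow_pos (hk : k ≠ 0) : 0 < 1 - (1 - p) ^ k :=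
  sub_pos.2 (pow_lt_one₀ (by linarith [hp.2]) (by linarith [hp.1]) hk)

lemma binWeight_nonneg (i : ℕ) : 0 ≤ binWeight k p i :=
  div_nonneg (mul_nonneg hp.1.le (pow_nonneg (by linarith [hp.2]) i))
    (sub_nonneg.2 (pow_le_one₀ (by linarith [hp.2]) (by linarith [hp.1])))

lemma binWeight_antitone : Antitone (binWeight k p) := fun i j hij =>
  div_le_div_of_nonneg_right
    (mul_le_mul_of_nonneg_left
      (pow_le_pow_of_le_one (by linarith [hp.2]) (by linarith [hp.1]) hij) hp.1.le)
    (sub_nonneg.2 (pow_le_one₀ (by linarith [hp.2]) (by linarith [hp.1])))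

lemma binWeight_mem_stdSimplex (hk : k ≠ 0) :
    (fun i : Fin k => binWeight k p i) ∈ stdSimplex ℝ (Fin k) :=
  ⟨fun i => binWeight_nonneg hp i, by
    rw [Fin.sum_univ_eq_sum_range (binWeight k p), sum_range_binWeight,
      div_self (one_sub_pow_pos hp hk).ne']⟩

lemma sum_range_binWeight_rev {m : ℕ} (hk : k ≠ 0) (hm : m ≤ k) :
    ∑ i ∈ range (k - m), binWeight k p (k - 1 - i) = 1 - ∑ i ∈ range m, binWeight k p i := by
  have hsum : ∑ i ∈ range k, binWeight k p i = 1 := by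
    rw [sum_range_binWeight, div_self (one_sub_pow_pos hp hk).ne']
  rw [eq_sub_iff_add_eq', ← hsum, ← Finset.sum_range_add_sum_Ico _ hm, Finset.sum_Ico_eq_sum_range,
    ← Finset.sum_range_reflect fun i => binWeight k p (m + i)]
  refine congrArg _ (Finset.sum_congr rfl fun i hi => congrArg _ ?_)
  have := mem_range.1 hi
  omega

lemma binWeight_sub_le (i j : ℕ) :
    binWeight k p i - binWeight k p (i + j) ≤ j * p * binWeight k p i := by
  have hpow : binWeight k p (i + j) = binWeight k p i * (1 - p) ^ j := by
    simp only [binWeight, pow_add]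
    ring
  have hbern : 1 + (j : ℝ) * -p ≤ (1 + -p) ^ j := one_add_mul_le_pow (by linarith [hp.2]) j
  rw [← sub_eq_add_neg] at hbern
  rw [hpow]
  nlinarith [mul_le_mul_of_nonneg_left hbern (binWeight_nonneg (k := k) hp i)]

lemma binWeight_sub_le_of_mul_le {i j : ℕ} (hj : j * p ≤ 1 / 2) :
    binWeight k p i - binWeight k p (i + j) ≤ 2 * (j * p) * binWeight k p (i + j) := by
  have hjp : 0 ≤ j * p := mul_nonneg j.cast_nonneg hp.1.le
  have hw := binWeight_nonneg (k := k) hp i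
  have hsub := binWeight_sub_le (k := k) hp i j
  have hhalf : binWeight k p i ≤ 2 * binWeight k p (i + j) := by
    nlinarith [mul_le_mul_of_nonneg_right hj hw]
  linarith [mul_le_mul_of_nonneg_left hhalf hjp]

variable (hs : s ∈ Set.Ioc 0 1) (hsk : s ≤ k * p)
include hs hsk

lemma mul_binWeight_zero_le : s * binWeight k p 0 ≤ 2 * p := by
  have hk : k ≠ 0 := by
    rintro rfl
    rw [Nat.cast_zero, zero_mul] at hsk
    exact hs.1.not_ge hsk
  have hpow := one_sub_pow_mul_le_one hp k
  have hpos := one_sub_pow_pos hp hk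
  have hpow0 : 0 ≤ (1 - p) ^ k := pow_nonneg (by linarith [hp.2]) k
  rw [binWeight, pow_zero, mul_one, mul_div_assoc', div_le_iff₀ hpos]
  have : s ≤ 2 * (1 - (1 - p) ^ k) := by
    nlinarith [mul_le_mul_of_nonneg_left hsk hpow0, hs.1, hs.2]
  nlinarith [hp.1]

lemma mul_sum_range_binWeight_ends_le (L : ℕ) :
    s * (∑ i ∈ range L, binWeight k p i + ∑ i ∈ range L, binWeight k p (k - 1 - i)) ≤
      4 * (L * p) := by
  have hmax (f : ℕ → ℕ) : ∑ i ∈ range L, binWeight k p (f i) ≤ L * binWeight k p 0 := by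
    simpa only [card_range, nsmul_eq_mul] using Finset.sum_le_card_nsmul (range L)
      (fun i => binWeight k p (f i)) _ fun i _ => binWeight_antitone hp (f i).zero_le
  calc _ ≤ s * (L * binWeight k p 0 + L * binWeight k p 0) :=
        mul_le_mul_of_nonneg_left (add_le_add (hmax fun i => i) (hmax fun i => k - 1 - i)) hs.1.le
    _ = 2 * L * (s * binWeight k p 0) := by ring
    _ ≤ 2 * L * (2 * p) :=
        mul_le_mul_of_nonneg_left (mul_binWeight_zero_le hp hs hsk) (by positivity)
    _ = _ := by ring

lemma le_mul_sum_range_binWeight (hks : 20 ≤ k * s) :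
    ((k + 1) / 2 : ℕ) + k * (s / 40) ≤
      (k - 1 : ℕ) * ∑ i ∈ range ((k + 1) / 2), binWeight k p i := by
  have hk : k ≠ 0 := by
    rintro rfl
    norm_num at hks
  set m := (k + 1) / 2
  have hkm : (k : ℝ) ≤ 2 * m := by exact_mod_cast (by omega : k ≤ 2 * m)
  have hmk : 2 * (m : ℝ) ≤ k + 1 := by exact_mod_cast (by omega : 2 * m ≤ k + 1)
  have hcast : ((k - 1 : ℕ) : ℝ) = k - 1 := by rw [Nat.cast_pred (by omega)]
  have hq0 : 0 ≤ 1 - p := by linarith [hp.2]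
  have hqm : (1 - p) ^ m * (1 + s / 2) ≤ 1 :=
    (mul_le_mul_of_nonneg_left (by nlinarith [hp.1]) (pow_nonneg hq0 m)).trans
      (one_sub_pow_mul_le_one hp m)
  have hqm0 : 0 ≤ (1 - p) ^ m := pow_nonneg hq0 m
  have hqk : (1 - p) ^ m * (1 - p) ^ m ≤ (1 - p) ^ k := by
    rw [← pow_add]
    exact pow_le_pow_of_le_one hq0 (by linarith [hp.1]) (by omega)
  have hhalf : 1 / 2 + s / 10 ≤ ∑ i ∈ range m, binWeight k p i := by
    rw [sum_range_binWeight, le_div_iff₀ (one_sub_pow_pos hp hk)]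
    calc (1 / 2 + s / 10) * (1 - (1 - p) ^ k)
        ≤ (1 / 2 + s / 10) * (1 - (1 - p) ^ m * (1 - p) ^ m) := by
          gcongr
          linarith [hs.1]
      _ = (1 / 2 + s / 10) * (1 + (1 - p) ^ m) * (1 - (1 - p) ^ m) := by ring
      _ ≤ 1 * (1 - (1 - p) ^ m) := by
          refine mul_le_mul_of_nonneg_right ?_ (by nlinarith [hs.1])
          nlinarith [hs.1, hs.2]
      _ = _ := one_mul _
  have hk1 : (1 : ℝ) ≤ k := by exact_mod_cast Nat.one_le_iff_ne_zero.2 hk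
  rw [hcast]
  nlinarith [mul_le_mul_of_nonneg_left hhalf (sub_nonneg.2 hk1), hs.2]

lemma outwardDrift_binWeight (hks : 20 ≤ k * s) :
    OutwardDrift 1 (fun i => (k - 1 : ℕ) * binWeight k p i) ((k + 1) / 2) (s / 40) where
  sign := Or.inl rfl
  nonneg i := mul_nonneg (Nat.cast_nonneg _) (binWeight_nonneg hp i)
  antitone := by
    simpa only [Int.cast_one, one_mul] using
      (binWeight_antitone hp).const_mul (Nat.cast_nonneg (α := ℝ) (k - 1))
  ne_zero := by
    rcases k with _ | k
    · norm_num at hks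
    · omega
  pos := by linarith [hs.1]
  le_one := by linarith [hs.2]
  drift := by
    have hmk : (((k + 1) / 2 : ℕ) : ℝ) ≤ k := by
      rcases k with _ | k
      · norm_num at hks
      · exact_mod_cast (by omega : (k + 1 + 1) / 2 ≤ k + 1)
    simp only [Int.cast_one, one_mul, Finset.sum_sub_distrib, ← Finset.mul_sum, Finset.sum_const,
      card_range, nsmul_eq_mul, mul_one]
    nlinarith [le_mul_sum_range_binWeight hp hs hsk hks, hs.1]

lemma outwardDrift_binWeight_rev (hks : 20 ≤ k * s) :
    OutwardDrift (-1) (fun i => (k - 1 : ℕ) * binWeight k p (k - 1 - i)) (k - (k + 1) / 2)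
      (s / 40) where
  sign := Or.inr rfl
  nonneg i := mul_nonneg (Nat.cast_nonneg _) (binWeight_nonneg hp _)
  antitone i j hij := by
    simp only [Int.cast_neg, Int.cast_one, neg_mul, one_mul, neg_le_neg_iff]
    exact mul_le_mul_of_nonneg_left (binWeight_antitone hp (Nat.sub_le_sub_left hij _))
      (Nat.cast_nonneg _)
  ne_zero := by
    have : (20 : ℝ) ≤ k := by nlinarith [hs.1, hs.2, Nat.cast_nonneg (α := ℝ) k]
    have : 20 ≤ k := by exact_mod_cast this
    omega
  pos := by linarith [hs.1]
  le_one := by linarith [hs.2]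
  drift := by
    have hk : k ≠ 0 := by
      rintro rfl
      norm_num at hks
    have hm : (k + 1) / 2 ≤ k := by omega
    have hcast : ((k - 1 : ℕ) : ℝ) = k - 1 := Nat.cast_pred (by omega)
    have hsum := le_mul_sum_range_binWeight hp hs hsk hks
    have hmk : ((k - (k + 1) / 2 : ℕ) : ℝ) = k - ((k + 1) / 2 : ℕ) := Nat.cast_sub hm
    simp only [Int.cast_neg, Int.cast_one, neg_mul, one_mul, neg_sub, Finset.sum_sub_distrib,
      ← Finset.mul_sum, sum_range_binWeight_rev hp hk hm, Finset.sum_const, card_range,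
      nsmul_eq_mul, mul_one, hmk]
    rw [mul_sub]
    nlinarith [hs.1]

variable {e : ℝ} (he : e ∈ Set.Ioc 0 (1 / 100)) (hk : 5 * 10 ^ 6 ≤ e ^ 3 * (k * s ^ 2))
  (hps : 5 * 10 ^ 6 * p ≤ e ^ 3 * s ^ 3)
include he hk hps

lemma treeProb_mem_Icc :
    treeProb k p ∈ Set.Icc
      ((1 - 12 * e) ^ 2 * ((⨅ n, survivalProb 1 (fun _ => (k - 1 : ℕ) * binWeight k p 0) n) *
        ⨅ n, survivalProb (-1) (fun _ => (k - 1 : ℕ) * binWeight k p (k - 1)) n))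
      ((1 + e) ^ 3 * ((⨅ n, survivalProb 1 (fun _ => (k - 1 : ℕ) * binWeight k p 0) n) *
        ⨅ n, survivalProb (-1) (fun _ => (k - 1 : ℕ) * binWeight k p (k - 1)) n)) := by
  have he0 := he.1
  have hs0 := hs.1
  have hlarge : 5 * 10 ^ 6 ≤ e * (k * s ^ 2) := hk.trans <| mul_le_mul_of_nonneg_right
    (pow_le_of_le_one he0.le (by linarith [he.2]) (by norm_num)) (by positivity)
  obtain ⟨L, hL, hLp, hLk⟩ := exists_end_length he hs hlarge hps
  have hk0 : k ≠ 0 := by omega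
  have hek : 5 * 10 ^ 6 ≤ e * k := hlarge.trans <| mul_le_mul_of_nonneg_left
    (mul_le_of_le_one_right k.cast_nonneg (pow_le_one₀ hs0.le hs.2)) he0.le
  have hks := twenty_le_mul he hs hk
  have hv := binWeight_mem_stdSimplex hp hk0
  have hleft := outwardDrift_binWeight hp hs hsk hks
  have hright := outwardDrift_binWeight_rev hp hs hsk hks
  have hN : (k : ℝ) / 2 ≤ (k - 1 : ℕ) := by
    rw [Nat.cast_pred (by omega)]
    nlinarith [hs.2, hs0]
  have hLp2 : L * p ≤ 1 / 2 := by nlinarith [he.2, hs.2]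
  have hjp {j : ℕ} (hj : j < L) : j * p ≤ L * p :=
    mul_le_mul_of_nonneg_right (by exact_mod_cast hj.le) hp.1.le
  have hw := binWeight_nonneg (k := k) hp
  rw [treeProb_eq_treeMass]
  constructor
  · refine mul_iInf_survivalProb_le_treeMass hv (by omega) hleft hright he hL (by omega) (by omega)
      (fun i hi => ?_) (fun i hi => ?_) ?_
    · have hsub := binWeight_sub_le (k := k) hp 0 i
      rw [zero_add] at hsub
      exact hsub.trans (mul_le_mul_of_nonneg_right
        (by linarith [hjp hi, mul_pos he0 hs0]) (hw 0))
    · have hsub := binWeight_sub_le_of_mul_le (k := k) (i := k - 1 - i) hp ((hjp hi).trans hLp2)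
      rw [Nat.sub_add_cancel (by omega)] at hsub
      exact hsub.trans (mul_le_mul_of_nonneg_right (by linarith [hjp hi]) (hw _))
    · linarith [mul_le_mul_of_nonneg_left hN (by positivity : 0 ≤ e ^ 3 * s ^ 2)]
  · refine treeMass_le_mul_iInf_survivalProb hv hleft hright he hL hLk ?_ ?_
    · refine le_of_mul_le_mul_left ?_ hs0
      linarith [mul_sum_range_binWeight_ends_le hp hs hsk L]
    · linarith [mul_le_mul_of_nonneg_left hN he0.le]

lemma abs_treeProb_div_sub_one_le :
    |treeProb k p / (escProb ((k - 1) * p / (1 - (1 - p) ^ k)) *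
      escRProb ((k - 1) * p * (1 - p) ^ (k - 1) / (1 - (1 - p) ^ k))) - 1| ≤ 24 * e := by
  have hks := twenty_le_mul he hs hk
  have hk0 : k ≠ 0 := by
    rintro rfl
    norm_num at hks
  have hrate (i : ℕ) :
      (k - 1 : ℕ) * binWeight k p i = (k - 1) * p * (1 - p) ^ i / (1 - (1 - p) ^ k) := by
    rw [Nat.cast_pred (by omega), binWeight]
    ring
  have hrate0 : (k - 1 : ℕ) * binWeight k p 0 = (k - 1) * p / (1 - (1 - p) ^ k) := by
    rw [hrate, pow_zero, mul_one]
  have hnonneg (i : ℕ) : 0 ≤ (k - 1 : ℕ) * binWeight k p i :=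
    mul_nonneg (Nat.cast_nonneg _) (binWeight_nonneg hp i)
  have hleft := (outwardDrift_binWeight hp hs hsk hks).iInf_survivalProb_pos
  have hright := (outwardDrift_binWeight_rev hp hs hsk hks).iInf_survivalProb_pos
  rw [Nat.sub_zero] at hright
  obtain ⟨hlow, hup⟩ := treeProb_mem_Icc hp hs hsk he hk hps
  rw [← hrate0, ← hrate, escProb_eq_iInf (hnonneg 0), escRProb_eq_iInf (hnonneg (k - 1))]
  rw [← le_div_iff₀ (mul_pos hleft hright)] at hlow
  rw [← div_le_iff₀ (mul_pos hleft hright)] at hup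
  rw [abs_sub_le_iff]
  constructor <;> nlinarith [he.1, he.2, sq_nonneg e, pow_pos he.1 3]

end BinWeight

lemma le_mul_min_sq_and_mul_le_min_pow {k p C : ℝ} (hp : 0 ≤ p) (hkp : C ≤ p ^ 2 * k ^ 3)
    (hk : C ≤ k) (hC : C * p ≤ 1) : C ≤ k * min (k * p) 1 ^ 2 ∧ C * p ≤ min (k * p) 1 ^ 3 := by
  rcases min_choice (k * p) 1 with h | h <;> rw [h]
  · exact ⟨by linarith, by linarith [mul_le_mul_of_nonneg_right hkp hp]⟩
  · exact ⟨by linarith, by linarith⟩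

lemma tendsto_sq_mul_pow_three {p : ℕ → ℝ}
    (hlow : Tendsto (fun k : ℕ => p k * (k : ℝ) ^ ((3 : ℝ) / 2)) atTop atTop) :
    Tendsto (fun k : ℕ => p k ^ 2 * (k : ℝ) ^ 3) atTop atTop := by
  refine (hlow.atTop_mul_atTop₀ hlow).congr fun k => ?_
  have hpow : (k : ℝ) ^ ((3 : ℝ) / 2) * (k : ℝ) ^ ((3 : ℝ) / 2) = (k : ℝ) ^ 3 := by
    rw [← Real.rpow_add_of_nonneg k.cast_nonneg (by norm_num) (by norm_num), ← Real.rpow_natCast]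
    norm_num
  rw [← hpow]
  ring

lemma tendsto_log_natCast_div : Tendsto (fun k : ℕ => Real.log k / k) atTop (𝓝 0) :=
  Real.isLittleO_log_id_atTop.tendsto_div_nhds_zero.comp tendsto_natCast_atTop_atTop

theorem probTREE_asymp_general (p : ℕ → ℝ)
    (hlow : Tendsto (fun k : ℕ => p k * (k : ℝ) ^ ((3 : ℝ) / 2)) atTop atTop)
    (hp : Tendsto p atTop (𝓝 0)) :
    Tendsto (fun k : ℕ =>
        treeProb k (p k) /
          (escProb (((k : ℝ) - 1) * p k / (1 - (1 - p k) ^ k)) *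
            escRProb (((k : ℝ) - 1) * p k * (1 - p k) ^ (k - 1) / (1 - (1 - p k) ^ k))))
      atTop (𝓝 1) := by
  rw [Metric.tendsto_nhds]
  intro ε hε
  obtain ⟨e, he0, he⟩ := exists_between (show 0 < min (ε / 24) (1 / 100) by positivity)
  obtain ⟨heε, he1⟩ := lt_min_iff.1 he
  set C := 5 * 10 ^ 6 / e ^ 3
  have hC : Tendsto (fun k => C * p k) atTop (𝓝 0) := by simpa only [mul_zero] using hp.const_mul C
  filter_upwards [hlow.eventually_gt_atTop 0, hp.eventually_lt_const one_pos,
    hC.eventually_le_const one_pos, (tendsto_sq_mul_pow_three hlow).eventually_ge_atTop C,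
    tendsto_natCast_atTop_atTop.eventually_ge_atTop C, eventually_gt_atTop 0]
    with k hpos hp1 hCp hkp hCk hk
  have hp0 : 0 < p k := pos_of_mul_pos_left hpos (Real.rpow_nonneg k.cast_nonneg _)
  have : (0 : ℝ) < k := Nat.cast_pos.2 hk
  obtain ⟨hks, hps⟩ := le_mul_min_sq_and_mul_le_min_pow hp0.le hkp hCk hCp
  rw [div_le_iff₀' (by positivity)] at hks
  rw [div_mul_eq_mul_div, div_le_iff₀' (by positivity)] at hps
  rw [Real.dist_eq]
  refine (abs_treeProb_div_sub_one_le ⟨hp0, hp1⟩ ⟨by positivity, min_le_right _ _⟩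
    (min_le_left _ _) ⟨he0, he1.le⟩ hks hps).trans_lt ?_
  linarith

/-- Theorem `probtreethm`: if `p = p(k)` satisfies
`p(k)·k^{3/2} → ∞` and `p(k) ≤ 10 (ln k)/k`, then `Pr[TREE] ∼ Pr[ESC]·Pr[ESC^R]`
as `k → ∞`, where `ESC` is the escape event of the leftwalk with i.i.d. `Po(λ)`
steps, `ESC^R` that of the rightwalk with i.i.d. `Po(λ^R)` steps,
`λ = (k-1)p/(1-(1-p)^k)` and `λ^R = (k-1)p(1-p)^{k-1}/(1-(1-p)^k)`. -/
theorem probTREE_asymp (p : ℕ → ℝ)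
    (hp01 : ∀ k, p k ∈ Set.Ioc (0 : ℝ) 1)
    (hlow : Tendsto (fun k : ℕ => p k * (k : ℝ) ^ ((3 : ℝ) / 2)) atTop atTop)
    (hup : ∀ᶠ k : ℕ in atTop, p k ≤ 10 * Real.log k / k) :
    Tendsto (fun k : ℕ =>
        treeProb k (p k) /
          (escProb (((k : ℝ) - 1) * p k / (1 - (1 - p k) ^ k)) *
            escRProb (((k : ℝ) - 1) * p k * (1 - p k) ^ (k - 1) / (1 - (1 - p k) ^ k))))
      atTop (𝓝 1) := by
  have hlog : Tendsto (fun k : ℕ => 10 * Real.log k / k) atTop (𝓝 0) := by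
    simpa only [mul_zero, mul_div_assoc] using tendsto_log_natCast_div.const_mul 10
  exact probTREE_asymp_general p hlow
    (squeeze_zero' (Eventually.of_forall fun k => (hp01 k).1.le) hup hlog)
end
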